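/- There exists L₀ ≥ 1 such that for all L ≥ L₀ and all u ∈ H¹(Ω_L³) vanishing on ∂Ω_L³∩∂Λ, setting f(x₃)=∫_{Γ_{x₃}} u(x₁,x₂,x₃) v_{x₃}(x₁,x₂) dx₁dx₂ and (Π^⊥u)(x₁,x₂,x₃)=u(x₁,x₂,x₃)−f(x₃)v_{x₃}(x₁,x₂), one has the Born–Oppenheimer lower bound ∫_{Ω_L³}|∇u|²dx ≥ ∫_L^∞ ( (1/2)|f'(x₃)|² + (λ_∞ − e^{−2ω(x₃−L₀)}) |f(x₃)|² ) dx₃ + λ_∞ ‖Π^⊥u‖²_{L²(Ω_L³)}, where λ_∞=λ₁(Γ) and ω=√(π²−λ_∞). -/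

import Mathlib

/-!
The domain is sliced by `x₃ = t`, and the inequality is proved slice by slice (`slice_ineq`) and
integrated (`fubini_Om3`, `sum_le_of_dominated`).

*Transverse energy.*  On `Γ_t` the Dirichlet energy of the slice is at least
`λ₁(Γ_t) f² + π² ‖Π^⊥u‖²` (`gap`): transverse Dirichlet conditions give the threshold `π²` in the
arms, the Neumann Poincaré inequality gives it on the corner square for functions of mean zero, so
at most one eigenvalue lies below `π²` (`lemmaC`).  A trial function shows `λ₁(Γ) < π²` (`lamG_lt`),
hence `ω > 0`.

*Working with the eigenfunction.*  The gradient of `v_R` is not controlled at the Dirichlet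
boundary.  Its `C¹` truncations (`exists_AGS`) form an approximate ground state (`AGS`), a minimizing
sequence converging uniformly to `v_R`; the weak eigenvalue equation (`AGS.orth`) and the IMS
localization formula (`AGS.ims`) hold along it in the limit.

*Decay.*  Localizing with a profile that behaves like `e^{ω x}` along the arms gives an Agmon
estimate (`agmon`): the mass of `v_R` near the ends of `Γ_R` is `O(e^{-2ωR})`.  Cutting `v_R` off
near the ends yields a test function on `Γ`, so `λ₁(Γ) - λ₁(Γ_R) = O(e^{-2ωR})` (`lamG_sub_lamR`).

*Variation of the eigenfunction.*  A stretching `Φ` of the last unit of the arms maps `Γ_t` onto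
`Γ_{t+h}`.  The transported form differs from the Dirichlet form only near the ends, where the
eigenfunctions are exponentially small, so with the spectral gap
`‖v_{t+h} ∘ Φ - v_t‖² = O(h² e^{-2ωt})` (`orth_part`, `ef_variation`).

*The derivative of `f`.*  After pulling `u(·, t + h)` back to `Γ_t`, the difference
`f'(t) - ∫ ∂₃u v_t` is a sum of a term from the variation of `v` (`deriv_close`) and of terms from
the motion of the ends (`end_terms`), both bounded by `e^{-ωt}` times the `H¹` norm of the slice.
Hence `½ f'² ≤ ∫ |∂₃u|² + O(e^{-2ωt}) ‖u(·, t)‖²_{H¹}` (`half_deriv_sq_le`).  The error is absorbed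
by a small part of the transverse energy, because `π² > λ₁(Γ)`, and by the term `e^{-2ω(t-L₀)} f²`
for `L₀` large (`exists_L0`).
-/

noncomputable section
open MeasureTheory Set Real

/-- The interval `I = (-1,0)`. -/
def II : Set ℝ := Set.Ioo (-1) 0

/-- The broken guide `Γ = {x ∈ ℝ² : -1 < min(x₁,x₂) < 0}`. -/
def Gam : Set (ℝ × ℝ) := {p | -1 < min p.1 p.2 ∧ min p.1 p.2 < 0}

/-- The box `□_L = {x : max(|x₁+1|,|x₂+1|) < L}`. -/
def Box (L : ℝ) : Set (ℝ × ℝ) := {p | |p.1 + 1| < L ∧ |p.2 + 1| < L}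

/-- The finite guide `Γ_R = Γ ∩ □_{R+1}`. -/
def GamR (R : ℝ) : Set (ℝ × ℝ) := Gam ∩ Box (R + 1)

/-- The Neumann part `Σ_R = ∂Γ_R ∩ ∂□_{R+1}` of the boundary. -/
def Sig (R : ℝ) : Set (ℝ × ℝ) := frontier (GamR R) ∩ frontier (Box (R + 1))

/-- The Dirichlet part `∂Γ_R ∖ Σ_R` of the boundary. -/
def DirB (R : ℝ) : Set (ℝ × ℝ) := frontier (GamR R) \ Sig R

/-- Squared gradient `|∇u|² = (∂₁u)² + (∂₂u)²`. -/
def gradSq2 (u : ℝ × ℝ → ℝ) (p : ℝ × ℝ) : ℝ :=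
  (fderiv ℝ u p (1, 0)) ^ 2 + (fderiv ℝ u p (0, 1)) ^ 2

/-- Admissible functions for the mixed problem on `Γ_R`: `C¹` up to the boundary
(modelled by a globally `C¹` extension) vanishing on the Dirichlet part. -/
def AdmR (R : ℝ) (u : ℝ × ℝ → ℝ) : Prop :=
  ContDiff ℝ 1 u ∧ ∀ p ∈ DirB R, u p = 0

/-- First Rayleigh quotient `λ₁(Γ_R)` of the mixed Dirichlet–Neumann Laplacian on `Γ_R`. -/
def lamR (R : ℝ) : ℝ :=
  sInf {r | ∃ u : ℝ × ℝ → ℝ, AdmR R u ∧ (∫ p in GamR R, (u p) ^ 2) ≠ 0 ∧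
    r = (∫ p in GamR R, gradSq2 u p) / ∫ p in GamR R, (u p) ^ 2}

/-- First Rayleigh quotient `λ₁(Γ)` of the Dirichlet Laplacian on the broken guide `Γ`. -/
def lamG : ℝ :=
  sInf {r | ∃ u : ℝ × ℝ → ℝ, ContDiff ℝ 1 u ∧ HasCompactSupport u ∧ tsupport u ⊆ Gam ∧
    (∫ p in Gam, (u p) ^ 2) ≠ 0 ∧
    r = (∫ p in Gam, gradSq2 u p) / ∫ p in Gam, (u p) ^ 2}

/-- `ω = √(π² − λ₁(Γ))`. -/
def omega : ℝ := Real.sqrt (π ^ 2 - lamG)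

/-- Partial derivative `∂₁`. -/
def pd1 (u : ℝ × ℝ → ℝ) : ℝ × ℝ → ℝ := fun p => fderiv ℝ u p (1, 0)

/-- Partial derivative `∂₂`. -/
def pd2 (u : ℝ × ℝ → ℝ) : ℝ × ℝ → ℝ := fun p => fderiv ℝ u p (0, 1)

/-- Laplacian `Δ = ∂₁² + ∂₂²`. -/
def lap2 (u : ℝ × ℝ → ℝ) (p : ℝ × ℝ) : ℝ := pd1 (pd1 u) p + pd2 (pd2 u) p

/-- The open segments `Σ_R¹ = {R} × I` and `Σ_R² = I × {R}` (for `R ≥ 0`). -/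
def SigSeg (R : ℝ) : Set (ℝ × ℝ) := ({R} ×ˢ II) ∪ (II ×ˢ {R})

/-- `v` is the positive normalized first eigenfunction of the mixed Dirichlet–Neumann
Laplacian on `Γ_R`: smooth in `Γ_R` and up to the Neumann boundary, continuous up to the
closure, vanishing on the Dirichlet part, with vanishing normal derivative on `Σ_R`,
satisfying `-Δv = λ₁(Γ_R) v` in `Γ_R`, positive, and `L²`-normalized. -/
def IsFirstEF (R : ℝ) (v : ℝ × ℝ → ℝ) : Prop :=
  (∃ U : Set (ℝ × ℝ), IsOpen U ∧ GamR R ∪ SigSeg R ⊆ U ∧ ContDiffOn ℝ (⊤ : ℕ∞) v U) ∧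
  ContinuousOn v (closure (GamR R)) ∧
  (∀ p ∈ DirB R, v p = 0) ∧
  (∀ t ∈ II, pd1 v (R, t) = 0) ∧
  (∀ t ∈ II, pd2 v (t, R) = 0) ∧
  (∀ p ∈ GamR R, -(lap2 v p) = lamR R * v p) ∧
  (∀ p ∈ GamR R, 0 < v p) ∧
  (∫ p in GamR R, (v p) ^ 2) = 1

/-- The Fichera layer `Λ = {x ∈ ℝ³ : -1 < min(x₁,x₂,x₃) < 0}`. -/
def Lam3 : Set (ℝ × ℝ × ℝ) :=
  {x | -1 < min x.1 (min x.2.1 x.2.2) ∧ min x.1 (min x.2.1 x.2.2) < 0}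

/-- The residual domain `Ω_R³ = {x : x₃ > R and (x₁,x₂) ∈ Γ_{x₃}}`. -/
def Om3 (R : ℝ) : Set (ℝ × ℝ × ℝ) := {x | R < x.2.2 ∧ (x.1, x.2.1) ∈ GamR x.2.2}

/-- Squared gradient in 3D: `|∇u|² = (∂₁u)² + (∂₂u)² + (∂₃u)²`. -/
def gradSq3 (u : ℝ × ℝ × ℝ → ℝ) (x : ℝ × ℝ × ℝ) : ℝ :=
  (fderiv ℝ u x (1, 0, 0)) ^ 2 + (fderiv ℝ u x (0, 1, 0)) ^ 2 + (fderiv ℝ u x (0, 0, 1)) ^ 2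

open Filter Topology

/-! ### Geometry of the finite guide -/

lemma mem_GamR {R : ℝ} (hR : 0 ≤ R) {p : ℝ × ℝ} :
    p ∈ GamR R ↔ -1 < p.1 ∧ -1 < p.2 ∧ p.1 < R ∧ p.2 < R ∧ (p.1 < 0 ∨ p.2 < 0) := by
  simp only [GamR, Gam, Box, mem_inter_iff, mem_setOf_eq, lt_min_iff, min_lt_iff, abs_lt]
  constructor
  · rintro ⟨⟨⟨h1, h2⟩, h3⟩, ⟨h4, h5⟩, h6, h7⟩
    exact ⟨h1, h2, by linarith, by linarith, h3⟩
  · rintro ⟨h1, h2, h3, h4, h5⟩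
    exact ⟨⟨⟨h1, h2⟩, h5⟩, ⟨by linarith, by linarith⟩, by linarith, by linarith⟩

lemma isOpen_Gam : IsOpen Gam := by
  have : Gam = {p : ℝ × ℝ | -1 < min p.1 p.2} ∩ {p | min p.1 p.2 < 0} := rfl
  rw [this]
  exact (isOpen_lt (by fun_prop) (by fun_prop)).inter (isOpen_lt (by fun_prop) (by fun_prop))

lemma isOpen_Box (L : ℝ) : IsOpen (Box L) := by
  have : Box L = {p : ℝ × ℝ | |p.1 + 1| < L} ∩ {p | |p.2 + 1| < L} := rfl
  rw [this]
  exact (isOpen_lt (by fun_prop) (by fun_prop)).inter (isOpen_lt (by fun_prop) (by fun_prop))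

lemma isOpen_GamR (R : ℝ) : IsOpen (GamR R) := isOpen_Gam.inter (isOpen_Box _)

lemma measurableSet_GamR (R : ℝ) : MeasurableSet (GamR R) := (isOpen_GamR R).measurableSet

lemma closure_Box {L : ℝ} : closure (Box L) ⊆ {p | |p.1 + 1| ≤ L ∧ |p.2 + 1| ≤ L} := by
  apply closure_minimal
  · rintro p ⟨h1, h2⟩; exact ⟨h1.le, h2.le⟩
  · have : {p : ℝ × ℝ | |p.1 + 1| ≤ L ∧ |p.2 + 1| ≤ L} =
      {p : ℝ × ℝ | |p.1 + 1| ≤ L} ∩ {p | |p.2 + 1| ≤ L} := rfl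
    rw [this]
    exact (isClosed_le (by fun_prop) (by fun_prop)).inter (isClosed_le (by fun_prop) (by fun_prop))

lemma mem_closure_GamR {R : ℝ} (hR : 0 < R) {p : ℝ × ℝ} :
    p ∈ closure (GamR R) ↔ -1 ≤ p.1 ∧ -1 ≤ p.2 ∧ p.1 ≤ R ∧ p.2 ≤ R ∧ (p.1 ≤ 0 ∨ p.2 ≤ 0) := by
  constructor
  · intro h
    have hc : IsClosed {p : ℝ × ℝ | -1 ≤ p.1 ∧ -1 ≤ p.2 ∧ p.1 ≤ R ∧ p.2 ≤ R ∧
        (p.1 ≤ 0 ∨ p.2 ≤ 0)} := by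
      refine IsClosed.and (isClosed_le (by fun_prop) (by fun_prop)) <|
        IsClosed.and (isClosed_le (by fun_prop) (by fun_prop)) <|
        IsClosed.and (isClosed_le (by fun_prop) (by fun_prop)) <|
        IsClosed.and (isClosed_le (by fun_prop) (by fun_prop)) ?_
      exact (isClosed_le (f := fun p : ℝ × ℝ => p.1) (g := fun _ => 0)
        (by fun_prop) (by fun_prop)).union (isClosed_le (f := fun p : ℝ × ℝ => p.2)
          (g := fun _ => 0) (by fun_prop) (by fun_prop))
    refine closure_minimal ?_ hc h
    intro q hq
    rw [mem_GamR hR.le] at hq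
    obtain ⟨h1, h2, h3, h4, h5⟩ := hq
    exact ⟨h1.le, h2.le, h3.le, h4.le, h5.imp le_of_lt le_of_lt⟩
  · rintro ⟨h1, h2, h3, h4, h5⟩
    rcases h5 with h5 | h5
    · have : Ioo (-1 : ℝ) 0 ×ˢ Ioo (-1 : ℝ) R ⊆ GamR R := by
        rintro q ⟨⟨a, b⟩, c, d⟩
        rw [mem_GamR hR.le]; exact ⟨a, c, by linarith, d, Or.inl b⟩
      refine closure_mono this ?_
      rw [closure_prod_eq, closure_Ioo (by norm_num), closure_Ioo (by linarith)]
      exact ⟨⟨h1, h5⟩, h2, h4⟩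
    · have : Ioo (-1 : ℝ) R ×ˢ Ioo (-1 : ℝ) 0 ⊆ GamR R := by
        rintro q ⟨⟨a, b⟩, c, d⟩
        rw [mem_GamR hR.le]; exact ⟨a, c, b, by linarith, Or.inr d⟩
      refine closure_mono this ?_
      rw [closure_prod_eq, closure_Ioo (by linarith), closure_Ioo (by norm_num)]
      exact ⟨⟨h1, h3⟩, h2, h5⟩

lemma isCompact_closure_GamR {R : ℝ} (hR : 0 ≤ R) : IsCompact (closure (GamR R)) := by
  apply (isCompact_Icc (a := ((-1 : ℝ), (-1 : ℝ))) (b := (R, R))).closure_of_subset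
  intro p hp
  rw [mem_GamR hR] at hp
  obtain ⟨h1, h2, h3, h4, -⟩ := hp
  exact ⟨⟨h1.le, h2.le⟩, h3.le, h4.le⟩

lemma mem_frontier_GamR {R : ℝ} {p : ℝ × ℝ} :
    p ∈ frontier (GamR R) ↔ p ∈ closure (GamR R) ∧ p ∉ GamR R := by
  rw [(isOpen_GamR R).frontier_eq]; rfl

lemma mem_DirB {R : ℝ} (hR : 0 < R) {p : ℝ × ℝ} :
    p ∈ DirB R ↔ -1 ≤ p.1 ∧ -1 ≤ p.2 ∧ p.1 < R ∧ p.2 < R ∧ (p.1 ≤ 0 ∨ p.2 ≤ 0) ∧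
      p ∉ GamR R := by
  unfold DirB Sig
  simp only [mem_diff, mem_inter_iff, mem_frontier_GamR, mem_closure_GamR hR]
  have hb : p ∈ Box (R + 1) → p ∉ frontier (Box (R + 1)) := fun h h' => by
    rw [(isOpen_Box _).frontier_eq] at h'; exact h'.2 h
  constructor
  · rintro ⟨⟨⟨h1, h2, h3, h4, h5⟩, h6⟩, h7⟩
    have h8 : p ∈ Box (R + 1) := by
      by_contra hp
      apply h7
      refine ⟨⟨⟨h1, h2, h3, h4, h5⟩, h6⟩, ?_⟩
      rw [(isOpen_Box _).frontier_eq]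
      refine ⟨?_, hp⟩
      have : p ∈ closure (GamR R) := (mem_closure_GamR hR).2 ⟨h1, h2, h3, h4, h5⟩
      exact closure_mono inter_subset_right this
    obtain ⟨h9, h10⟩ := h8
    rw [abs_lt] at h9 h10
    exact ⟨h1, h2, by linarith, by linarith, h5, h6⟩
  · rintro ⟨h1, h2, h3, h4, h5, h6⟩
    refine ⟨⟨⟨h1, h2, h3.le, h4.le, h5⟩, h6⟩, fun h => hb ?_ h.2⟩
    constructor <;> rw [abs_lt] <;> constructor <;> linarith

lemma mem_DirB_of {R : ℝ} (hR : 0 < R) {p : ℝ × ℝ} (h1 : -1 ≤ p.1) (h2 : -1 ≤ p.2)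
    (h3 : p.1 < R) (h4 : p.2 < R) (h5 : p.1 ≤ 0 ∨ p.2 ≤ 0)
    (h6 : p.1 = -1 ∨ p.2 = -1 ∨ (0 ≤ p.1 ∧ 0 ≤ p.2)) : p ∈ DirB R := by
  rw [mem_DirB hR]
  refine ⟨h1, h2, h3, h4, h5, fun h => ?_⟩
  rw [mem_GamR hR.le] at h
  obtain ⟨a, b, c, d, e⟩ := h
  rcases h6 with h | h | ⟨h, h'⟩
  · linarith
  · linarith
  · rcases e with e | e <;> linarith

lemma DirB_disjoint_Gam {R : ℝ} (hR : 0 < R) {p : ℝ × ℝ} (hp : p ∈ DirB R) : p ∉ Gam := by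
  rw [mem_DirB hR] at hp
  obtain ⟨h1, h2, h3, h4, h5, h6⟩ := hp
  intro h
  apply h6
  refine ⟨h, ?_, ?_⟩ <;> rw [abs_lt] <;> constructor <;> linarith

lemma DirB_subset_closure {R : ℝ} {p : ℝ × ℝ} (hp : p ∈ DirB R) : p ∈ closure (GamR R) :=
  (mem_frontier_GamR.1 hp.1).1

/-- On the closure of `Γ_R`, a function that vanishes on the Dirichlet part and is continuous
can be nonzero only in `Γ_R` or on the open Neumann segments. -/
lemma mem_of_ne_zero {R : ℝ} (hR : 0 < R) {v : ℝ × ℝ → ℝ}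
    (hc : ContinuousOn v (closure (GamR R))) (h0 : ∀ p ∈ DirB R, v p = 0)
    {p : ℝ × ℝ} (hp : p ∈ closure (GamR R)) (hv : v p ≠ 0) : p ∈ GamR R ∪ SigSeg R := by
  by_contra hcon
  simp only [mem_union, not_or] at hcon
  obtain ⟨hG, hS⟩ := hcon
  have hp' := (mem_closure_GamR hR).1 hp
  obtain ⟨h1, h2, h3, h4, h5⟩ := hp'
  have key : p ∈ closure (DirB R) := by
    rcases h3.lt_or_eq with h3' | h3'
    · rcases h4.lt_or_eq with h4' | h4'
      · exact subset_closure ((mem_DirB hR).2 ⟨h1, h2, h3', h4', h5, hG⟩)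
      · have h6 : p.1 ≤ 0 := by rcases h5 with h | h <;> linarith
        have h7 : p.1 = -1 ∨ p.1 = 0 := by
          by_contra hh
          rw [not_or] at hh
          apply hS
          refine Or.inr ⟨⟨lt_of_le_of_ne h1 (Ne.symm hh.1), lt_of_le_of_ne h6 hh.2⟩, h4'⟩
        have : ({p.1} : Set ℝ) ×ˢ Ico (0 : ℝ) R ⊆ DirB R := by
          rintro q ⟨hq, hq1, hq2⟩
          rw [mem_singleton_iff] at hq
          refine mem_DirB_of hR (by rw [hq]; exact h1) (by linarith) (by rw [hq]; linarith) hq2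
            (Or.inl (by rw [hq]; exact h6)) ?_
          rcases h7 with h | h
          · left; rw [hq, h]
          · right; right; exact ⟨by rw [hq, h], hq1⟩
        refine closure_mono this ?_
        rw [closure_prod_eq, closure_Ico hR.ne, closure_singleton]
        exact ⟨rfl, by linarith, h4⟩
    · have h6 : p.2 ≤ 0 := by rcases h5 with h | h <;> linarith
      have h7 : p.2 = -1 ∨ p.2 = 0 := by
        by_contra hh
        rw [not_or] at hh
        apply hS
        refine Or.inl ⟨h3', ⟨lt_of_le_of_ne h2 (Ne.symm hh.1), lt_of_le_of_ne h6 hh.2⟩⟩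
      have : Ico (0 : ℝ) R ×ˢ ({p.2} : Set ℝ) ⊆ DirB R := by
        rintro q ⟨⟨hq1, hq2⟩, hq⟩
        rw [mem_singleton_iff] at hq
        refine mem_DirB_of hR (by linarith) (by rw [hq]; exact h2) hq2 (by rw [hq]; linarith)
          (Or.inr (by rw [hq]; exact h6)) ?_
        rcases h7 with h | h
        · right; left; rw [hq, h]
        · right; right; exact ⟨hq1, by rw [hq, h]⟩
      refine closure_mono this ?_
      rw [closure_prod_eq, closure_Ico hR.ne, closure_singleton]
      exact ⟨⟨by linarith, h3⟩, rfl⟩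
  have hsub : DirB R ⊆ closure (GamR R) := fun q hq => DirB_subset_closure hq
  have hcl : ContinuousWithinAt v (DirB R) p := (hc p hp).mono hsub
  have := hcl.mem_closure_image key
  have h8 : v '' DirB R ⊆ {0} := by rintro _ ⟨q, hq, rfl⟩; exact h0 q hq
  have h9 := closure_mono h8 this
  rw [closure_singleton] at h9
  exact hv h9

lemma SigSeg_subset_Gam {R : ℝ} (hR : 0 < R) : SigSeg R ⊆ Gam := by
  rintro ⟨x, y⟩ h
  simp only [SigSeg, II, mem_union, mem_prod, mem_singleton_iff, mem_Ioo] at h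
  simp only [Gam, mem_setOf_eq, lt_min_iff, min_lt_iff]
  rcases h with ⟨rfl, h1, h2⟩ | ⟨⟨h1, h2⟩, rfl⟩
  · exact ⟨⟨by linarith, h1⟩, Or.inr h2⟩
  · exact ⟨⟨h1, by linarith⟩, Or.inl h2⟩

/-! ### Integration over the finite guide -/

lemma integrableOn_GamR {R : ℝ} (hR : 0 ≤ R) {F : ℝ × ℝ → ℝ} (hF : ContinuousOn F (closure (GamR R))) :
    IntegrableOn F (GamR R) :=
  (hF.integrableOn_compact (isCompact_closure_GamR hR)).mono_set subset_closure

lemma volume_GamR_lt_top {R : ℝ} (hR : 0 ≤ R) : volume (GamR R) < ⊤ :=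
  (measure_mono subset_closure).trans_lt (isCompact_closure_GamR hR).measure_lt_top

lemma setIntegral_rect {a b c d : ℝ} (hab : a ≤ b) (hcd : c ≤ d) {F : ℝ × ℝ → ℝ}
    (hF : Continuous F) :
    ∫ p in Ico a b ×ˢ Ioo c d, F p = ∫ x in a..b, ∫ y in c..d, F (x, y) := by
  have hi : IntegrableOn F (Ico a b ×ˢ Ioo c d) (volume.prod volume) := by
    refine (hF.continuousOn.integrableOn_compact (isCompact_Icc.prod isCompact_Icc)).mono_set
      (prod_mono Ico_subset_Icc_self Ioo_subset_Icc_self)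
  rw [Measure.volume_eq_prod, setIntegral_prod _ hi, intervalIntegral.integral_of_le hab,
    ← integral_Ico_eq_integral_Ioc]
  simp_rw [intervalIntegral.integral_of_le hcd, ← integral_Ioc_eq_integral_Ioo]

lemma setIntegral_rect' {a b c d : ℝ} (hab : a ≤ b) (hcd : c ≤ d) {F : ℝ × ℝ → ℝ}
    (hF : Continuous F) :
    ∫ p in Ioo c d ×ˢ Ico a b, F p = ∫ y in a..b, ∫ x in c..d, F (x, y) := by
  have hi : IntegrableOn F (Ioo c d ×ˢ Ico a b) (volume.prod volume) := by
    refine (hF.continuousOn.integrableOn_compact (isCompact_Icc.prod isCompact_Icc)).mono_set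
      (prod_mono Ioo_subset_Icc_self Ico_subset_Icc_self)
  rw [Measure.volume_eq_prod, ← setIntegral_prod_swap,
    setIntegral_prod _ (by exact hi.swap),
    intervalIntegral.integral_of_le hab,
    ← integral_Ico_eq_integral_Ioc]
  simp_rw [intervalIntegral.integral_of_le hcd, ← integral_Ioc_eq_integral_Ioo]
  rfl

/-- `Γ_R` is `Γ_r` together with two pieces of the arms. -/
lemma integral_GamR_split {r R : ℝ} (hr : 0 ≤ r) (hrR : r ≤ R) {F : ℝ × ℝ → ℝ}
    (hF : Continuous F) :
    ∫ p in GamR R, F p = (∫ p in GamR r, F p) + (∫ x in r..R, ∫ y in (-1 : ℝ)..0, F (x, y)) +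
      ∫ y in r..R, ∫ x in (-1 : ℝ)..0, F (x, y) := by
  have hset : GamR R = (GamR r ∪ Ico r R ×ˢ Ioo (-1 : ℝ) 0) ∪ Ioo (-1 : ℝ) 0 ×ˢ Ico r R := by
    ext p
    simp only [mem_union, mem_GamR hr, mem_GamR (hr.trans hrR), mem_prod, mem_Ico, mem_Ioo]
    constructor
    · rintro ⟨h1, h2, h3, h4, h5⟩
      by_cases h6 : p.1 < r
      · by_cases h7 : p.2 < r
        · exact Or.inl (Or.inl ⟨h1, h2, h6, h7, h5⟩)
        · right
          push Not at h7
          exact ⟨⟨h1, by rcases h5 with h | h <;> linarith⟩, h7, h4⟩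
      · push Not at h6
        exact Or.inl (Or.inr ⟨⟨h6, h3⟩, h2, by rcases h5 with h | h <;> linarith⟩)
    · rintro ((⟨h1, h2, h3, h4, h5⟩ | ⟨⟨h1, h2⟩, h3, h4⟩) | ⟨⟨h1, h2⟩, h3, h4⟩)
      · exact ⟨h1, h2, by linarith, by linarith, h5⟩
      · exact ⟨by linarith, h3, h2, by linarith, Or.inr h4⟩
      · exact ⟨h1, by linarith, by linarith, h4, Or.inl h2⟩
  have hi : IntegrableOn F (GamR R) := integrableOn_GamR (hr.trans hrR) hF.continuousOn
  rw [← setIntegral_rect hrR (by norm_num) hF, ← setIntegral_rect' hrR (by norm_num) hF]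
  rw [hset] at hi ⊢
  rw [setIntegral_union _ (measurableSet_Ioo.prod measurableSet_Ico)
      (hi.mono_set subset_union_left) (hi.mono_set subset_union_right),
    setIntegral_union _ (measurableSet_Ico.prod measurableSet_Ioo)
      (hi.mono_set (subset_union_left.trans subset_union_left))
      (hi.mono_set (subset_union_right.trans subset_union_left))]
  · rw [Set.disjoint_left]
    rintro p hp ⟨⟨h1, h2⟩, h3, h4⟩
    rw [mem_GamR hr] at hp
    obtain ⟨a, b, c, d, e⟩ := hp
    linarith
  · rw [Set.disjoint_left]
    rintro p hp ⟨⟨h1, h2⟩, h3, h4⟩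
    rcases hp with hp | ⟨⟨h5, h6⟩, h7, h8⟩
    · rw [mem_GamR hr] at hp
      obtain ⟨a, b, c, d, e⟩ := hp
      linarith
    · linarith

lemma integral_GamR_zero {F : ℝ × ℝ → ℝ} (hF : Continuous F) :
    ∫ p in GamR 0, F p = ∫ x in (-1 : ℝ)..0, ∫ y in (-1 : ℝ)..0, F (x, y) := by
  rw [← setIntegral_rect (by norm_num) (by norm_num) hF]
  have h : GamR 0 = Ioo (-1 : ℝ) 0 ×ˢ Ioo (-1 : ℝ) 0 := by
    ext p
    simp only [mem_GamR le_rfl, mem_prod, mem_Ioo]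
    constructor
    · rintro ⟨h1, h2, h3, h4, h5⟩
      exact ⟨⟨h1, h3⟩, h2, h4⟩
    · rintro ⟨⟨h1, h2⟩, h3, h4⟩
      exact ⟨h1, h3, h2, h4, Or.inl h2⟩
  rw [h, Measure.volume_eq_prod]
  apply setIntegral_congr_set
  exact Measure.set_prod_ae_eq Ioo_ae_eq_Ico (ae_eq_refl _)

/-! ### One-dimensional Poincaré inequalities -/

/-- Subcritical Dirichlet Poincaré inequality: with `T = k tan (k (x + 1/2))`,
`g'² - k² g² = (g' + T g)² - (T g²)'`. -/
lemma poincare_aux {g g' : ℝ → ℝ} (hg : ∀ x, HasDerivAt g (g' x) x) (hg' : Continuous g')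
    (h0 : g (-1) = 0) (h1 : g 0 = 0) {k : ℝ} (hk0 : 0 < k) (hk : k < π) :
    k ^ 2 * ∫ x in (-1 : ℝ)..0, g x ^ 2 ≤ ∫ x in (-1 : ℝ)..0, g' x ^ 2 := by
  have hgc : Continuous g := continuous_iff_continuousAt.2 fun x => (hg x).continuousAt
  have hcos : ∀ x ∈ Icc (-1 : ℝ) 0, 0 < cos (k * (x + 1 / 2)) := by
    intro x hx
    apply cos_pos_of_mem_Ioo
    constructor
    · nlinarith [hx.1, hx.2, pi_pos]
    · nlinarith [hx.1, hx.2, pi_pos]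
  have hd : ∀ x ∈ uIcc (-1 : ℝ) 0, HasDerivAt
      (fun x => k * Real.tan (k * (x + 1 / 2)) * g x ^ 2)
      ((g' x + k * tan (k * (x + 1 / 2)) * g x) ^ 2 - (g' x ^ 2 - k ^ 2 * g x ^ 2)) x := by
    intro x hx
    rw [uIcc_of_le (by norm_num)] at hx
    have hc := (hcos x hx).ne'
    have e1 : HasDerivAt (fun x : ℝ => k * (x + 1 / 2)) k x := by
      simpa using ((hasDerivAt_id x).add_const (1 / 2 : ℝ)).const_mul k
    have e2 := (((Real.hasDerivAt_tan hc).comp x e1).const_mul k).mul ((hg x).pow 2)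
    refine e2.congr_deriv ?_
    simp only [Function.comp, Pi.pow_apply]
    have : 1 / cos (k * (x + 1 / 2)) ^ 2 = 1 + tan (k * (x + 1 / 2)) ^ 2 := by
      generalize k * (x + 1 / 2) = z at hc ⊢
      rw [Real.tan_eq_sin_div_cos]
      field_simp
      linarith [Real.sin_sq_add_cos_sq z]
    rw [this]
    push_cast
    ring
  have hTc : ContinuousOn (fun x => Real.tan (k * (x + 1 / 2))) (uIcc (-1 : ℝ) 0) := by
    rw [uIcc_of_le (by norm_num)]
    refine ContinuousOn.comp (t := {x | Real.cos x ≠ 0}) (g := Real.tan) Real.continuousOn_tan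
      (by fun_prop) ?_
    intro x hx; exact (hcos x hx).ne'
  have hi1 : IntervalIntegrable (fun x => (g' x + k * tan (k * (x + 1 / 2)) * g x) ^ 2)
      volume (-1) 0 := by
    apply ContinuousOn.intervalIntegrable
    exact (hg'.continuousOn.add ((continuousOn_const.mul hTc).mul hgc.continuousOn)).pow 2
  have hi2 : IntervalIntegrable (fun x => g' x ^ 2) volume (-1) 0 :=
    (hg'.pow 2).intervalIntegrable _ _
  have hi3 : IntervalIntegrable (fun x => k ^ 2 * g x ^ 2) volume (-1) 0 :=
    (continuous_const.mul (hgc.pow 2)).intervalIntegrable _ _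
  have := intervalIntegral.integral_eq_sub_of_hasDerivAt hd (hi1.sub (hi2.sub hi3))
  rw [intervalIntegral.integral_sub hi1 (hi2.sub hi3), intervalIntegral.integral_sub hi2 hi3,
    h0, h1, intervalIntegral.integral_const_mul] at this
  have hpos : 0 ≤ ∫ x in (-1 : ℝ)..0, (g' x + k * tan (k * (x + 1 / 2)) * g x) ^ 2 :=
    intervalIntegral.integral_nonneg (by norm_num) fun x _ => sq_nonneg _
  norm_num at this
  linarith

lemma poincare_dirichlet {g g' : ℝ → ℝ} (hg : ∀ x, HasDerivAt g (g' x) x) (hg' : Continuous g')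
    (h0 : g (-1) = 0) (h1 : g 0 = 0) :
    π ^ 2 * ∫ x in (-1 : ℝ)..0, g x ^ 2 ≤ ∫ x in (-1 : ℝ)..0, g' x ^ 2 := by
  have ht : Tendsto (fun k : ℝ => k ^ 2 * ∫ x in (-1 : ℝ)..0, g x ^ 2) (𝓝[<] π)
      (𝓝 (π ^ 2 * ∫ x in (-1 : ℝ)..0, g x ^ 2)) :=
    ((continuous_id.pow 2).mul continuous_const).continuousAt.tendsto.mono_left
      nhdsWithin_le_nhds
  refine le_of_tendsto ht ?_
  filter_upwards [Ioo_mem_nhdsLT pi_pos] with k hk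
  exact poincare_aux hg hg' h0 h1 hk.1 hk.2

/-- Neumann Poincaré inequality, from the Dirichlet one applied to the primitive of
`g - mean g`. -/
lemma poincare_neumann {g g' : ℝ → ℝ} (hg : ∀ x, HasDerivAt g (g' x) x) (hg' : Continuous g') :
    π ^ 2 * ((∫ x in (-1 : ℝ)..0, g x ^ 2) - (∫ x in (-1 : ℝ)..0, g x) ^ 2) ≤
      ∫ x in (-1 : ℝ)..0, g' x ^ 2 := by
  have hgc : Continuous g := continuous_iff_continuousAt.2 fun x => (hg x).continuousAt
  set m := ∫ x in (-1 : ℝ)..0, g x with hm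
  set h : ℝ → ℝ := fun x => g x - m with hh
  have hhc : Continuous h := hgc.sub continuous_const
  set G : ℝ → ℝ := fun x => ∫ y in (-1 : ℝ)..x, h y with hG
  have hGd : ∀ x, HasDerivAt G (h x) x := fun x => (hhc.integral_hasStrictDerivAt (-1) x).hasDerivAt
  have hhd : ∀ x, HasDerivAt h (g' x) x := fun x => (hg x).sub_const m
  have hGc : Continuous G := continuous_iff_continuousAt.2 fun x => (hGd x).continuousAt
  have hG0 : G (-1) = 0 := by simp [hG]
  have hG1 : G 0 = 0 := by
    simp only [hG, hh]
    rw [intervalIntegral.integral_sub (hgc.intervalIntegrable _ _) (by simp)]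
    simp [hm]
  have hP := poincare_dirichlet hGd hhc hG0 hG1
  have hibp : ∫ x in (-1 : ℝ)..0, G x * g' x = - ∫ x in (-1 : ℝ)..0, h x * h x := by
    rw [intervalIntegral.integral_mul_deriv_eq_deriv_mul (fun x _ => hGd x) (fun x _ => hhd x)
      (hhc.intervalIntegrable _ _) (hg'.intervalIntegrable _ _), hG0, hG1]
    ring
  have hsq : ∫ x in (-1 : ℝ)..0, h x ^ 2 = (∫ x in (-1 : ℝ)..0, g x ^ 2) - m ^ 2 := by
    have : ∀ x, h x ^ 2 = g x ^ 2 - 2 * m * g x + m ^ 2 := fun x => by simp only [hh]; ring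
    simp_rw [this]
    have i1 : IntervalIntegrable (fun x => g x ^ 2) volume (-1) 0 :=
      (hgc.pow 2).intervalIntegrable _ _
    have i2 : IntervalIntegrable (fun x => 2 * m * g x) volume (-1) 0 :=
      (continuous_const.mul hgc).intervalIntegrable _ _
    rw [intervalIntegral.integral_add (i1.sub i2) (by simp),
      intervalIntegral.integral_sub i1 i2, intervalIntegral.integral_const_mul]
    simp only [intervalIntegral.integral_const, smul_eq_mul]
    rw [← hm]; ring
  have hY : 0 ≤ ∫ x in (-1 : ℝ)..0, (π ^ 2 * G x + g' x) ^ 2 :=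
    intervalIntegral.integral_nonneg (by norm_num) fun x _ => sq_nonneg _
  have hYe : ∫ x in (-1 : ℝ)..0, (π ^ 2 * G x + g' x) ^ 2 =
      π ^ 2 * (π ^ 2 * ∫ x in (-1 : ℝ)..0, G x ^ 2) + 2 * π ^ 2 * (∫ x in (-1 : ℝ)..0, G x * g' x)
        + ∫ x in (-1 : ℝ)..0, g' x ^ 2 := by
    have : ∀ x, (π ^ 2 * G x + g' x) ^ 2 =
      π ^ 2 * (π ^ 2 * G x ^ 2) + 2 * π ^ 2 * (G x * g' x) + g' x ^ 2 := fun x => by ring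
    simp_rw [this]
    have i1 : IntervalIntegrable (fun x => π ^ 2 * (π ^ 2 * G x ^ 2)) volume (-1) 0 :=
      Continuous.intervalIntegrable (by fun_prop) _ _
    have i2 : IntervalIntegrable (fun x => 2 * π ^ 2 * (G x * g' x)) volume (-1) 0 :=
      Continuous.intervalIntegrable (by fun_prop) _ _
    have i3 : IntervalIntegrable (fun x => g' x ^ 2) volume (-1) 0 :=
      Continuous.intervalIntegrable (by fun_prop) _ _
    rw [intervalIntegral.integral_add (i1.add i2) i3, intervalIntegral.integral_add i1 i2]
    simp only [intervalIntegral.integral_const_mul]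
  rw [hYe, hibp] at hY
  simp_rw [← pow_two] at hY
  rw [← hsq]
  have := mul_le_mul_of_nonneg_left hP (sq_nonneg π)
  linarith

/-! ### Partial derivatives of `C¹` functions of two variables -/

lemma hasDerivAt_fst {W : ℝ × ℝ → ℝ} (hW : ContDiff ℝ 1 W) (x y : ℝ) :
    HasDerivAt (fun s => W (s, y)) (pd1 W (x, y)) x := by
  have h := (hW.differentiable one_ne_zero (x, y)).hasFDerivAt
  have e : HasDerivAt (fun s : ℝ => (s, y)) (1, 0) x :=
    (hasDerivAt_id x).prodMk (hasDerivAt_const x y)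
  exact h.comp_hasDerivAt x e

lemma hasDerivAt_snd {W : ℝ × ℝ → ℝ} (hW : ContDiff ℝ 1 W) (x y : ℝ) :
    HasDerivAt (fun s => W (x, s)) (pd2 W (x, y)) y := by
  have h := (hW.differentiable one_ne_zero (x, y)).hasFDerivAt
  have e : HasDerivAt (fun s : ℝ => (x, s)) (0, 1) y :=
    (hasDerivAt_const y x).prodMk (hasDerivAt_id y)
  exact h.comp_hasDerivAt y e

lemma continuous_pd1 {W : ℝ × ℝ → ℝ} (hW : ContDiff ℝ 1 W) : Continuous (pd1 W) :=
  (hW.continuous_fderiv one_ne_zero).clm_apply continuous_const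

lemma continuous_pd2 {W : ℝ × ℝ → ℝ} (hW : ContDiff ℝ 1 W) : Continuous (pd2 W) :=
  (hW.continuous_fderiv one_ne_zero).clm_apply continuous_const

lemma gradSq2_eq (W : ℝ × ℝ → ℝ) (p : ℝ × ℝ) : gradSq2 W p = pd1 W p ^ 2 + pd2 W p ^ 2 := rfl

lemma continuous_gradSq2 {W : ℝ × ℝ → ℝ} (hW : ContDiff ℝ 1 W) : Continuous (gradSq2 W) :=
  ((continuous_pd1 hW).pow 2).add ((continuous_pd2 hW).pow 2)

lemma cont_slice {F : ℝ × ℝ → ℝ} (hF : Continuous F) (a b : ℝ) :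
    Continuous fun x => ∫ y in a..b, F (x, y) :=
  intervalIntegral.continuous_parametric_intervalIntegral_of_continuous' (f := fun x y => F (x, y))
    (by exact hF) a b

lemma cont_slice' {F : ℝ × ℝ → ℝ} (hF : Continuous F) (a b : ℝ) :
    Continuous fun y => ∫ x in a..b, F (x, y) :=
  cont_slice (F := fun p => F (p.2, p.1)) (by fun_prop) a b

lemma ii_swap {F : ℝ × ℝ → ℝ} (hF : Continuous F) (a b c d : ℝ) :
    ∫ x in a..b, ∫ y in c..d, F (x, y) = ∫ y in c..d, ∫ x in a..b, F (x, y) := by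
  apply intervalIntegral_intervalIntegral_swap (F := fun x y => F (x, y))
  exact (hF.continuousOn.integrableOn_compact
      (isCompact_uIcc.prod isCompact_uIcc)).mono_set
        (prod_mono uIoc_subset_uIcc uIoc_subset_uIcc)

/-- Interval form of monotonicity for continuous integrands. -/
lemma ii_mono {f g : ℝ → ℝ} (hf : Continuous f) (hg : Continuous g) {a b : ℝ} (hab : a ≤ b)
    (h : ∀ x ∈ Icc a b, f x ≤ g x) : ∫ x in a..b, f x ≤ ∫ x in a..b, g x :=
  intervalIntegral.integral_mono_on hab (hf.intervalIntegrable _ _) (hg.intervalIntegrable _ _) h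

lemma sq_integral_le {g : ℝ → ℝ} (hg : Continuous g) :
    (∫ x in (-1 : ℝ)..0, g x) ^ 2 ≤ ∫ x in (-1 : ℝ)..0, g x ^ 2 := by
  set m := ∫ x in (-1 : ℝ)..0, g x with hm
  have h : 0 ≤ ∫ x in (-1 : ℝ)..0, (g x - m) ^ 2 :=
    intervalIntegral.integral_nonneg (by norm_num) fun x _ => sq_nonneg _
  have : ∀ x, (g x - m) ^ 2 = g x ^ 2 - 2 * m * g x + m ^ 2 := fun x => by ring
  simp_rw [this] at h
  have i1 : IntervalIntegrable (fun x => g x ^ 2) volume (-1) 0 :=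
    (hg.pow 2).intervalIntegrable _ _
  have i2 : IntervalIntegrable (fun x => 2 * m * g x) volume (-1) 0 :=
    (continuous_const.mul hg).intervalIntegrable _ _
  rw [intervalIntegral.integral_add (i1.sub i2) (by simp),
    intervalIntegral.integral_sub i1 i2, intervalIntegral.integral_const_mul] at h
  simp only [intervalIntegral.integral_const, smul_eq_mul] at h
  rw [← hm] at h
  nlinarith

/-- Differentiation under the integral over `(-1,0)`, by Fubini and the fundamental theorem. -/
lemma hasDerivAt_mean {W : ℝ × ℝ → ℝ} (hW : ContDiff ℝ 1 W) (y : ℝ) :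
    HasDerivAt (fun y => ∫ x in (-1 : ℝ)..0, W (x, y)) (∫ x in (-1 : ℝ)..0, pd2 W (x, y)) y := by
  have hc := cont_slice' (continuous_pd2 hW) (-1) 0
  have h := (hc.integral_hasStrictDerivAt (-1) y).hasDerivAt
  have e : (fun y => ∫ x in (-1 : ℝ)..0, W (x, y)) = fun y =>
      (∫ s in (-1 : ℝ)..y, ∫ x in (-1 : ℝ)..0, pd2 W (x, s)) + ∫ x in (-1 : ℝ)..0, W (x, -1) := by
    funext z
    rw [← ii_swap (continuous_pd2 hW)]
    have : ∀ x, ∫ s in (-1 : ℝ)..z, pd2 W (x, s) = W (x, z) - W (x, -1) := fun x =>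
      intervalIntegral.integral_eq_sub_of_hasDerivAt (fun s _ => hasDerivAt_snd hW x s)
        (Continuous.intervalIntegrable ((continuous_pd2 hW).comp (by fun_prop)) _ _)
    simp_rw [this]
    have hWc := hW.continuous
    rw [intervalIntegral.integral_sub (Continuous.intervalIntegrable (by fun_prop) _ _)
      (Continuous.intervalIntegrable (by fun_prop) _ _)]
    ring
  rw [e]
  exact h.add_const _

/-- Neumann Poincaré inequality on the square. -/
lemma poincare_square {W : ℝ × ℝ → ℝ} (hW : ContDiff ℝ 1 W) :
    π ^ 2 * ((∫ p in GamR 0, W p ^ 2) - (∫ p in GamR 0, W p) ^ 2) ≤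
      ∫ p in GamR 0, gradSq2 W p := by
  have hWc := hW.continuous
  have h1c := continuous_pd1 hW
  have h2c := continuous_pd2 hW
  rw [integral_GamR_zero (F := fun p => W p ^ 2) (hWc.pow 2), integral_GamR_zero hWc,
    integral_GamR_zero (continuous_gradSq2 hW)]
  rw [ii_swap (F := fun p => W p ^ 2) (hWc.pow 2), ii_swap hWc, ii_swap (continuous_gradSq2 hW)]
  set M : ℝ → ℝ := fun y => ∫ x in (-1 : ℝ)..0, W (x, y) with hM
  have hMc : Continuous M := cont_slice' hWc _ _
  have hN := poincare_neumann (fun y => hasDerivAt_mean hW y) (cont_slice' h2c _ _)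
  have hpt : ∀ y, π ^ 2 * ((∫ x in (-1 : ℝ)..0, W (x, y) ^ 2) - M y ^ 2) +
      (∫ x in (-1 : ℝ)..0, pd2 W (x, y)) ^ 2 ≤ ∫ x in (-1 : ℝ)..0, gradSq2 W (x, y) := by
    intro y
    have a := poincare_neumann (fun x => hasDerivAt_fst hW x y)
      (h1c.comp (by fun_prop : Continuous fun x : ℝ => (x, y)))
    have b := sq_integral_le (g := fun x => pd2 W (x, y)) (by fun_prop)
    simp only [gradSq2_eq]
    rw [intervalIntegral.integral_add (Continuous.intervalIntegrable (by fun_prop) _ _)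
      (Continuous.intervalIntegrable (by fun_prop) _ _)]
    simp only [hM] at a ⊢
    linarith
  have i1 : Continuous fun y => ∫ x in (-1 : ℝ)..0, W (x, y) ^ 2 :=
    cont_slice' (F := fun p => W p ^ 2) (hWc.pow 2) _ _
  have i2 : Continuous fun y => ∫ x in (-1 : ℝ)..0, pd2 W (x, y) := cont_slice' h2c _ _
  have := ii_mono (a := -1) (b := 0) (f := fun y => π ^ 2 * ((∫ x in (-1 : ℝ)..0, W (x, y) ^ 2)
      - M y ^ 2) + (∫ x in (-1 : ℝ)..0, pd2 W (x, y)) ^ 2) (by fun_prop)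
    (cont_slice' (continuous_gradSq2 hW) (-1) 0) (by norm_num) (fun y _ => hpt y)
  rw [intervalIntegral.integral_add (Continuous.intervalIntegrable (by fun_prop) _ _)
      (Continuous.intervalIntegrable (by fun_prop) _ _), intervalIntegral.integral_const_mul,
      intervalIntegral.integral_sub (Continuous.intervalIntegrable (by fun_prop) _ _)
      (Continuous.intervalIntegrable (by fun_prop) _ _)] at this
  linarith

/-- Poincaré inequality across the arms, between the levels `r ≤ R`. -/
lemma poincare_arm1 {R : ℝ} (hR : 0 < R) {W : ℝ × ℝ → ℝ} (hW : AdmR R W) {r s : ℝ} (hr : 0 ≤ r)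
    (hrR : r ≤ s) (hs : s ≤ R) :
    π ^ 2 * ∫ x in r..s, ∫ y in (-1 : ℝ)..0, W (x, y) ^ 2 ≤
      ∫ x in r..s, ∫ y in (-1 : ℝ)..0, pd2 W (x, y) ^ 2 := by
  obtain ⟨hW, h0⟩ := hW
  have hWc := hW.continuous
  have h2c := continuous_pd2 hW
  rw [← intervalIntegral.integral_const_mul]
  have c1 : Continuous fun x => π ^ 2 * ∫ y in (-1 : ℝ)..0, W (x, y) ^ 2 :=
    continuous_const.mul (cont_slice (F := fun p => W p ^ 2) (hWc.pow 2) _ _)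
  have c2 : Continuous fun x => ∫ y in (-1 : ℝ)..0, pd2 W (x, y) ^ 2 :=
    (cont_slice (F := fun p => pd2 W p ^ 2) (h2c.pow 2) _ _)
  refine intervalIntegral.integral_mono_on_of_le_Ioo hrR (c1.intervalIntegrable _ _)
    (c2.intervalIntegrable _ _) ?_
  intro x hx
  refine poincare_dirichlet (fun y => hasDerivAt_snd hW x y) (by fun_prop)
    (h0 _ (mem_DirB_of hR (by simp; linarith [hx.1]) (by simp) (by simp; linarith [hx.2])
      (by simp; linarith) (by simp) (by simp)))
    (h0 _ (mem_DirB_of hR (by simp; linarith [hx.1]) (by simp) (by simp; linarith [hx.2])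
      (by simp; linarith) (by simp) (by simp; right; linarith [hx.1])))

lemma poincare_arm2 {R : ℝ} (hR : 0 < R) {W : ℝ × ℝ → ℝ} (hW : AdmR R W) {r s : ℝ} (hr : 0 ≤ r)
    (hrR : r ≤ s) (hs : s ≤ R) :
    π ^ 2 * ∫ y in r..s, ∫ x in (-1 : ℝ)..0, W (x, y) ^ 2 ≤
      ∫ y in r..s, ∫ x in (-1 : ℝ)..0, pd1 W (x, y) ^ 2 := by
  obtain ⟨hW, h0⟩ := hW
  have hWc := hW.continuous
  have h1c := continuous_pd1 hW
  rw [← intervalIntegral.integral_const_mul]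
  have c1 : Continuous fun y => π ^ 2 * ∫ x in (-1 : ℝ)..0, W (x, y) ^ 2 :=
    continuous_const.mul (cont_slice' (F := fun p => W p ^ 2) (hWc.pow 2) _ _)
  have c2 : Continuous fun y => ∫ x in (-1 : ℝ)..0, pd1 W (x, y) ^ 2 :=
    (cont_slice' (F := fun p => pd1 W p ^ 2) (h1c.pow 2) _ _)
  refine intervalIntegral.integral_mono_on_of_le_Ioo hrR (c1.intervalIntegrable _ _)
    (c2.intervalIntegrable _ _) ?_
  intro y hy
  refine poincare_dirichlet (fun x => hasDerivAt_fst hW x y) (by fun_prop)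
    (h0 _ (mem_DirB_of hR (by simp) (by simp; linarith [hy.1]) (by simp; linarith)
      (by simp; linarith [hy.2]) (by simp) (by simp)))
    (h0 _ (mem_DirB_of hR (by simp) (by simp; linarith [hy.1]) (by simp; linarith)
      (by simp; linarith [hy.2]) (by simp) (by simp; right; linarith [hy.1])))

/-- On `Γ_R ∖ Γ_r` the transverse Dirichlet condition gives the threshold `π²`. -/
lemma poincare_arms {R : ℝ} (hR : 0 < R) {W : ℝ × ℝ → ℝ} (hW : AdmR R W) {r : ℝ} (hr : 0 ≤ r)
    (hrR : r ≤ R) :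
    π ^ 2 * ((∫ p in GamR R, W p ^ 2) - ∫ p in GamR r, W p ^ 2) ≤
      (∫ p in GamR R, gradSq2 W p) - ∫ p in GamR r, gradSq2 W p := by
  have hWc := hW.1.continuous
  have h1c := continuous_pd1 hW.1
  have h2c := continuous_pd2 hW.1
  rw [integral_GamR_split (F := fun p => W p ^ 2) hr hrR (by fun_prop),
    integral_GamR_split (F := gradSq2 W) hr hrR (continuous_gradSq2 hW.1)]
  have a1 := poincare_arm1 hR hW hr hrR le_rfl
  have a2 := poincare_arm2 hR hW hr hrR le_rfl
  have b1 : ∫ x in r..R, ∫ y in (-1 : ℝ)..0, pd2 W (x, y) ^ 2 ≤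
      ∫ x in r..R, ∫ y in (-1 : ℝ)..0, gradSq2 W (x, y) := by
    refine ii_mono (cont_slice (F := fun p => pd2 W p ^ 2) (by fun_prop) _ _)
      (cont_slice (continuous_gradSq2 hW.1) _ _) hrR fun x _ => ?_
    refine ii_mono (by fun_prop) ((continuous_gradSq2 hW.1).comp (by fun_prop))
      (by norm_num) fun y _ => ?_
    rw [Function.comp_apply, gradSq2_eq]; linarith [sq_nonneg (pd1 W (x, y))]
  have b2 : ∫ y in r..R, ∫ x in (-1 : ℝ)..0, pd1 W (x, y) ^ 2 ≤
      ∫ y in r..R, ∫ x in (-1 : ℝ)..0, gradSq2 W (x, y) := by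
    refine ii_mono (cont_slice' (F := fun p => pd1 W p ^ 2) (by fun_prop) _ _)
      (cont_slice' (continuous_gradSq2 hW.1) _ _) hrR fun y _ => ?_
    refine ii_mono (by fun_prop) ((continuous_gradSq2 hW.1).comp (by fun_prop))
      (by norm_num) fun x _ => ?_
    rw [Function.comp_apply, gradSq2_eq]; linarith [sq_nonneg (pd2 W (x, y))]
  linarith

/-- Above the mean over the square, the spectrum starts at `π²`. -/
lemma lemmaC {R : ℝ} (hR : 0 < R) {W : ℝ × ℝ → ℝ} (hW : AdmR R W) :
    π ^ 2 * (∫ p in GamR R, W p ^ 2) - π ^ 2 * (∫ p in GamR 0, W p) ^ 2 ≤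
      ∫ p in GamR R, gradSq2 W p := by
  have h1 := poincare_square hW.1
  have h2 := poincare_arms hR hW le_rfl hR.le
  linarith

/-! ### Elementary `C¹` functions -/

lemma hasDerivAt_posSq (y : ℝ) : HasDerivAt (fun y : ℝ => (max y 0) ^ 2) (2 * max y 0) y := by
  rcases lt_trichotomy y 0 with h | h | h
  · have : (fun y : ℝ => (max y 0) ^ 2) =ᶠ[𝓝 y] fun _ => 0 := by
      filter_upwards [Iio_mem_nhds h] with z hz
      rw [max_eq_right (le_of_lt hz)]; norm_num
    rw [max_eq_right h.le, mul_zero]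
    exact (hasDerivAt_const y (0 : ℝ)).congr_of_eventuallyEq this
  · subst h
    rw [hasDerivAt_iff_isLittleO_nhds_zero]
    simp only [max_self, mul_zero, smul_zero, zero_add, sub_zero, ne_eq, OfNat.ofNat_ne_zero,
      not_false_eq_true, zero_pow]
    have h1 : (fun h : ℝ => (max h 0) ^ 2) =O[𝓝 0] fun h : ℝ => h ^ 2 := by
      refine Asymptotics.isBigO_of_le _ fun z => ?_
      rw [norm_pow, norm_pow]
      refine pow_le_pow_left₀ (norm_nonneg _) ?_ 2
      rw [Real.norm_eq_abs, Real.norm_eq_abs, abs_of_nonneg (le_max_right z 0)]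
      exact max_le (le_abs_self z) (abs_nonneg z)
    have h2 : (fun h : ℝ => h ^ 2) =o[𝓝 0] fun h : ℝ => h := by
      simpa using Asymptotics.isLittleO_pow_pow (𝕜 := ℝ) (m := 1) (n := 2) (by norm_num)
    exact h1.trans_isLittleO h2
  · have : (fun y : ℝ => (max y 0) ^ 2) =ᶠ[𝓝 y] fun y => y ^ 2 := by
      filter_upwards [Ioi_mem_nhds h] with z hz
      rw [max_eq_left (le_of_lt hz)]
    rw [max_eq_left h.le]
    have e := (hasDerivAt_pow 2 y).congr_of_eventuallyEq this
    simpa using e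

/-- A `C¹` truncation `√(((s-ε)₊)² + ε²) - ε` of `s₊`, vanishing for `s ≤ ε`. -/
def eta (ε s : ℝ) : ℝ := √((max (s - ε) 0) ^ 2 + ε ^ 2) - ε

/-- The derivative of `eta`. -/
def eta' (ε s : ℝ) : ℝ := max (s - ε) 0 / √((max (s - ε) 0) ^ 2 + ε ^ 2)

lemma hasDerivAt_eta {ε : ℝ} (hε : 0 < ε) (s : ℝ) : HasDerivAt (eta ε) (eta' ε s) s := by
  have h1 : HasDerivAt (fun s : ℝ => (max (s - ε) 0) ^ 2 + ε ^ 2) (2 * max (s - ε) 0) s := by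
    have := ((hasDerivAt_posSq (s - ε)).comp s ((hasDerivAt_id s).sub_const ε)).add_const (ε ^ 2)
    simpa [Function.comp_def] using this
  have h2 := (h1.sqrt (by positivity)).sub_const ε
  refine h2.congr_deriv ?_
  unfold eta'
  have : √((max (s - ε) 0) ^ 2 + ε ^ 2) ≠ 0 := by positivity
  field_simp

lemma continuous_eta' {ε : ℝ} (hε : 0 < ε) : Continuous (eta' ε) := by
  unfold eta'
  refine Continuous.div (by fun_prop) (by fun_prop) fun s => ?_
  positivity

lemma contDiff_eta {ε : ℝ} (hε : 0 < ε) : ContDiff ℝ 1 (eta ε) := by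
  rw [contDiff_one_iff_deriv]
  refine ⟨fun s => (hasDerivAt_eta hε s).differentiableAt, ?_⟩
  have : deriv (eta ε) = eta' ε := funext fun s => (hasDerivAt_eta hε s).deriv
  rw [this]; exact continuous_eta' hε

lemma eta'_nonneg (ε s : ℝ) : 0 ≤ eta' ε s := by
  unfold eta'; have := le_max_right (s - ε) 0; positivity

lemma eta'_le_one {ε : ℝ} (hε : 0 < ε) (s : ℝ) : eta' ε s ≤ 1 := by
  unfold eta'
  have := le_max_right (s - ε) 0
  rw [div_le_one (by positivity)]
  apply Real.le_sqrt_of_sq_le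
  nlinarith [sq_nonneg ε]

lemma eta_eq_zero {ε s : ℝ} (hε : 0 < ε) (h : s ≤ ε) : eta ε s = 0 := by
  unfold eta
  rw [max_eq_right (by linarith)]
  simp [Real.sqrt_sq hε.le]

lemma eta_nonneg {ε : ℝ} (hε : 0 < ε) (s : ℝ) : 0 ≤ eta ε s := by
  unfold eta
  have : ε ≤ √((max (s - ε) 0) ^ 2 + ε ^ 2) := Real.le_sqrt_of_sq_le (by
    nlinarith [sq_nonneg (max (s - ε) 0)])
  linarith

lemma eta_le {ε s : ℝ} (hε : 0 < ε) (hs : 0 ≤ s) : eta ε s ≤ s := by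
  unfold eta
  have h0 := le_max_right (s - ε) 0
  have : √((max (s - ε) 0) ^ 2 + ε ^ 2) ≤ s + ε := by
    rw [Real.sqrt_le_left (by linarith)]
    have : max (s - ε) 0 ≤ s := max_le (by linarith) hs
    nlinarith
  linarith

lemma le_eta {ε : ℝ} (s : ℝ) : s - 2 * ε ≤ eta ε s := by
  unfold eta
  have : max (s - ε) 0 ≤ √((max (s - ε) 0) ^ 2 + ε ^ 2) := Real.le_sqrt_of_sq_le (by
    nlinarith [sq_nonneg ε])
  linarith [le_max_left (s - ε) 0]

lemma abs_eta_sub_le {ε s : ℝ} (hε : 0 < ε) (hs : 0 ≤ s) : |eta ε s - s| ≤ 2 * ε := by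
  rw [abs_le]; constructor <;> linarith [eta_le hε hs, le_eta (ε := ε) s]

/-! ### Calculus of `pd1`, `pd2` and admissible functions -/

lemma pd1_add_smul {W Z : ℝ × ℝ → ℝ} (hW : ContDiff ℝ 1 W) (hZ : ContDiff ℝ 1 Z) (τ : ℝ)
    (p : ℝ × ℝ) : pd1 (fun p => W p + τ * Z p) p = pd1 W p + τ * pd1 Z p := by
  obtain ⟨x, y⟩ := p
  have hc : ContDiff ℝ 1 (fun p => W p + τ * Z p) := by fun_prop
  exact (hasDerivAt_fst hc x y).unique
    ((hasDerivAt_fst hW x y).add ((hasDerivAt_fst hZ x y).const_mul τ))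

lemma pd2_add_smul {W Z : ℝ × ℝ → ℝ} (hW : ContDiff ℝ 1 W) (hZ : ContDiff ℝ 1 Z) (τ : ℝ)
    (p : ℝ × ℝ) : pd2 (fun p => W p + τ * Z p) p = pd2 W p + τ * pd2 Z p := by
  obtain ⟨x, y⟩ := p
  have hc : ContDiff ℝ 1 (fun p => W p + τ * Z p) := by fun_prop
  exact (hasDerivAt_snd hc x y).unique
    ((hasDerivAt_snd hW x y).add ((hasDerivAt_snd hZ x y).const_mul τ))

lemma pd1_mul {W Z : ℝ × ℝ → ℝ} (hW : ContDiff ℝ 1 W) (hZ : ContDiff ℝ 1 Z)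
    (p : ℝ × ℝ) : pd1 (fun p => W p * Z p) p = pd1 W p * Z p + W p * pd1 Z p := by
  obtain ⟨x, y⟩ := p
  have hc : ContDiff ℝ 1 (fun p => W p * Z p) := by fun_prop
  exact (hasDerivAt_fst hc x y).unique ((hasDerivAt_fst hW x y).mul (hasDerivAt_fst hZ x y))

lemma pd2_mul {W Z : ℝ × ℝ → ℝ} (hW : ContDiff ℝ 1 W) (hZ : ContDiff ℝ 1 Z)
    (p : ℝ × ℝ) : pd2 (fun p => W p * Z p) p = pd2 W p * Z p + W p * pd2 Z p := by
  obtain ⟨x, y⟩ := p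
  have hc : ContDiff ℝ 1 (fun p => W p * Z p) := by fun_prop
  exact (hasDerivAt_snd hc x y).unique ((hasDerivAt_snd hW x y).mul (hasDerivAt_snd hZ x y))

lemma AdmR.add_smul {R : ℝ} {W Z : ℝ × ℝ → ℝ} (hW : AdmR R W) (hZ : AdmR R Z) (τ : ℝ) :
    AdmR R (fun p => W p + τ * Z p) := by
  refine ⟨hW.1.add (contDiff_const.mul hZ.1), fun p hp => ?_⟩
  simp only [hW.2 p hp, hZ.2 p hp]; ring

lemma AdmR.mul_left {R : ℝ} {G Z : ℝ × ℝ → ℝ} (hG : ContDiff ℝ 1 G) (hZ : AdmR R Z) :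
    AdmR R (fun p => G p * Z p) := by
  refine ⟨hG.mul hZ.1, fun p hp => ?_⟩
  simp only [hZ.2 p hp]; ring

/-! ### Weighted forms on the finite guide -/

/-- Weighted Dirichlet form `∫_{Γ_R} c ∂₁W ∂₁Z + d ∂₂W ∂₂Z`. -/
def aI (R : ℝ) (c d W Z : ℝ × ℝ → ℝ) : ℝ :=
  ∫ p in GamR R, (c p * (pd1 W p * pd1 Z p) + d p * (pd2 W p * pd2 Z p))

/-- Weighted mass form `∫_{Γ_R} J W Z`. -/
def mI (R : ℝ) (J W Z : ℝ × ℝ → ℝ) : ℝ := ∫ p in GamR R, J p * (W p * Z p)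

lemma intOn {R : ℝ} (hR : 0 < R) {F : ℝ × ℝ → ℝ} (hF : Continuous F) : IntegrableOn F (GamR R) :=
  integrableOn_GamR hR.le hF.continuousOn

lemma cont_aI {c d W Z : ℝ × ℝ → ℝ} (hc : Continuous c) (hd : Continuous d)
    (hW : ContDiff ℝ 1 W) (hZ : ContDiff ℝ 1 Z) :
    Continuous fun p => c p * (pd1 W p * pd1 Z p) + d p * (pd2 W p * pd2 Z p) :=
  (hc.mul ((continuous_pd1 hW).mul (continuous_pd1 hZ))).add
    (hd.mul ((continuous_pd2 hW).mul (continuous_pd2 hZ)))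

lemma aI_expand {R : ℝ} (hR : 0 < R) {c d W Z : ℝ × ℝ → ℝ} (hc : Continuous c) (hd : Continuous d)
    (hW : ContDiff ℝ 1 W) (hZ : ContDiff ℝ 1 Z) (τ : ℝ) :
    aI R c d (fun p => W p + τ * Z p) (fun p => W p + τ * Z p) =
      aI R c d W W + 2 * τ * aI R c d W Z + τ ^ 2 * aI R c d Z Z := by
  unfold aI
  have i1 := intOn hR (cont_aI hc hd hW hW)
  have i2 := (intOn hR (cont_aI hc hd hW hZ)).const_mul (2 * τ)
  have i3 := (intOn hR (cont_aI hc hd hZ hZ)).const_mul (τ ^ 2)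
  rw [← integral_const_mul, ← integral_const_mul, ← integral_add i1 i2,
    ← integral_add _ i3]
  · congr 1; funext p
    rw [pd1_add_smul hW hZ, pd2_add_smul hW hZ]; ring
  · exact i1.add i2

lemma aI_add_smul_right {R : ℝ} (hR : 0 < R) {c d Y W Z : ℝ × ℝ → ℝ} (hc : Continuous c)
    (hd : Continuous d) (hY : ContDiff ℝ 1 Y)
    (hW : ContDiff ℝ 1 W) (hZ : ContDiff ℝ 1 Z) (τ : ℝ) :
    aI R c d Y (fun p => W p + τ * Z p) = aI R c d Y W + τ * aI R c d Y Z := by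
  unfold aI
  have i1 := intOn hR (cont_aI hc hd hY hW)
  have i2 := (intOn hR (cont_aI hc hd hY hZ)).const_mul τ
  rw [← integral_const_mul, ← integral_add i1 i2]
  congr 1; funext p
  rw [pd1_add_smul hW hZ, pd2_add_smul hW hZ]; ring

lemma aI_comm (R : ℝ) (c d W Z : ℝ × ℝ → ℝ) : aI R c d W Z = aI R c d Z W := by
  unfold aI; congr 1; funext p; ring

lemma mI_comm (R : ℝ) (J W Z : ℝ × ℝ → ℝ) : mI R J W Z = mI R J Z W := by
  unfold mI; congr 1; funext p; ring

lemma mI_expand {R : ℝ} (hR : 0 < R) {J W Z : ℝ × ℝ → ℝ} (hJ : Continuous J)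
    (hW : Continuous W) (hZ : Continuous Z) (τ : ℝ) :
    mI R J (fun p => W p + τ * Z p) (fun p => W p + τ * Z p) =
      mI R J W W + 2 * τ * mI R J W Z + τ ^ 2 * mI R J Z Z := by
  unfold mI
  have i1 : IntegrableOn (fun p => J p * (W p * W p)) (GamR R) := intOn hR (by fun_prop)
  have i2 : IntegrableOn (fun p => 2 * τ * (J p * (W p * Z p))) (GamR R) := intOn hR (by fun_prop)
  have i3 : IntegrableOn (fun p => τ ^ 2 * (J p * (Z p * Z p))) (GamR R) := intOn hR (by fun_prop)
  rw [← integral_const_mul, ← integral_const_mul, ← integral_add i1 i2,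
    ← integral_add _ i3]
  · congr 1; funext p
    ring
  · exact i1.add i2

lemma aI_nonneg {R : ℝ} {c d W : ℝ × ℝ → ℝ} (hc : ∀ p ∈ GamR R, 0 ≤ c p)
    (hd : ∀ p ∈ GamR R, 0 ≤ d p) : 0 ≤ aI R c d W W := by
  refine setIntegral_nonneg (measurableSet_GamR R) fun p hp => ?_
  have := hc p hp; have := hd p hp
  have := mul_self_nonneg (pd1 W p); have := mul_self_nonneg (pd2 W p)
  positivity

lemma mI_nonneg {R : ℝ} {J W : ℝ × ℝ → ℝ} (hJ : ∀ p ∈ GamR R, 0 ≤ J p) : 0 ≤ mI R J W W := by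
  refine setIntegral_nonneg (measurableSet_GamR R) fun p hp => ?_
  exact mul_nonneg (hJ p hp) (mul_self_nonneg _)

lemma aI_one (R : ℝ) (W : ℝ × ℝ → ℝ) :
    aI R (fun _ => 1) (fun _ => 1) W W = ∫ p in GamR R, gradSq2 W p := by
  unfold aI; congr 1; funext p; rw [gradSq2_eq]; ring

lemma mI_one (R : ℝ) (W : ℝ × ℝ → ℝ) : mI R (fun _ => 1) W W = ∫ p in GamR R, W p ^ 2 := by
  unfold mI; congr 1; funext p; ring

lemma cauchy_of_quadratic {A B C : ℝ} (h : ∀ τ : ℝ, 0 ≤ A + 2 * τ * B + τ ^ 2 * C) :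
    B ^ 2 ≤ A * C := by
  have := discrim_le_zero (a := C) (b := 2 * B) (c := A) fun x => by
    have := h x; nlinarith
  unfold discrim at this; nlinarith

/-! ### Approximate ground states -/

/-- `V n` are admissible functions converging uniformly on `Γ_R` to `v`, whose weighted energies
do not exceed `lam ∫ J v²`, where `lam` is a lower bound of the weighted Rayleigh quotient.  They
stand in for `v`, whose gradient is not controlled up to the Dirichlet boundary. -/
structure AGS (R : ℝ) (c d J : ℝ × ℝ → ℝ) (lam : ℝ) (v : ℝ × ℝ → ℝ) (V : ℕ → ℝ × ℝ → ℝ) :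
    Prop where
  hR : 0 < R
  cc : Continuous c
  dc : Continuous d
  Jc : Continuous J
  c0 : ∀ p ∈ GamR R, 0 ≤ c p
  d0 : ∀ p ∈ GamR R, 0 ≤ d p
  J0 : ∀ p ∈ GamR R, 0 ≤ J p
  lam0 : 0 ≤ lam
  vc : ContinuousOn v (closure (GamR R))
  adm : ∀ n, AdmR R (V n)
  close : ∀ n, ∀ p ∈ GamR R, |V n p - v p| ≤ 1 / ((n : ℝ) + 1)
  min : ∀ W, AdmR R W → lam * mI R J W W ≤ aI R c d W W
  energy : ∀ n, aI R c d (V n) (V n) ≤ lam * ∫ p in GamR R, J p * v p ^ 2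

lemma exists_bound {R : ℝ} (hR : 0 < R) {F : ℝ × ℝ → ℝ} (hF : ContinuousOn F (closure (GamR R))) :
    ∃ C, 0 ≤ C ∧ ∀ p ∈ GamR R, |F p| ≤ C := by
  obtain ⟨C, hC⟩ := (isCompact_closure_GamR hR.le).exists_bound_of_continuousOn hF
  refine ⟨max C 0, le_max_right _ _, fun p hp => ?_⟩
  exact (hC p (subset_closure hp)).trans (le_max_left _ _)

lemma tendsto_int_of_close {R : ℝ} (hR : 0 < R) {F : ℕ → ℝ × ℝ → ℝ} {F0 : ℝ × ℝ → ℝ}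
    (hF : ∀ n, IntegrableOn (F n) (GamR R)) (hF0 : IntegrableOn F0 (GamR R)) {C : ℝ}
    (h : ∀ n, ∀ p ∈ GamR R, |F n p - F0 p| ≤ C * (1 / ((n : ℝ) + 1))) :
    Tendsto (fun n => ∫ p in GamR R, F n p) atTop (𝓝 (∫ p in GamR R, F0 p)) := by
  rw [tendsto_iff_norm_sub_tendsto_zero]
  have ht : Tendsto (fun n : ℕ => C * (1 / ((n : ℝ) + 1)) * (volume.real (GamR R))) atTop (𝓝 0) := by
    have := ((tendsto_one_div_add_atTop_nhds_zero_nat (𝕜 := ℝ)).const_mul C).mul_const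
      (volume.real (GamR R))
    simpa using this
  refine squeeze_zero (fun n => norm_nonneg _) (fun n => ?_) ht
  rw [← integral_sub (hF n) hF0]
  exact norm_setIntegral_le_of_norm_le_const (volume_GamR_lt_top hR.le) (h n)

namespace AGS
variable {R : ℝ} {c d J : ℝ × ℝ → ℝ} {lam : ℝ} {v : ℝ × ℝ → ℝ} {V : ℕ → ℝ × ℝ → ℝ}

lemma tendsto_sq (h : AGS R c d J lam v V) {H : ℝ × ℝ → ℝ}
    (hH : ContinuousOn H (closure (GamR R))) :
    Tendsto (fun n => ∫ p in GamR R, H p * V n p ^ 2) atTop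
      (𝓝 (∫ p in GamR R, H p * v p ^ 2)) := by
  obtain ⟨C, hC0, hC⟩ := exists_bound h.hR hH
  obtain ⟨B, hB0, hB⟩ := exists_bound h.hR h.vc
  refine tendsto_int_of_close h.hR (C := C * (2 * B + 1)) (fun n => ?_) ?_ ?_
  · exact integrableOn_GamR h.hR.le (hH.mul ((h.adm n).1.continuous.continuousOn.pow 2))
  · exact integrableOn_GamR h.hR.le (hH.mul (h.vc.pow 2))
  · intro n p hp
    have e : H p * V n p ^ 2 - H p * v p ^ 2 = H p * (V n p + v p) * (V n p - v p) := by ring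
    rw [e, abs_mul, abs_mul]
    have h1 := h.close n p hp
    have h2 : 1 / ((n : ℝ) + 1) ≤ 1 := by
      rw [div_le_one (by positivity)]; linarith [(Nat.cast_nonneg n : (0 : ℝ) ≤ n)]
    have h3 : |V n p + v p| ≤ 2 * B + 1 := by
      have := hB p hp
      rw [abs_le] at this h1 ⊢
      constructor <;> linarith [this.1, this.2, h1.1, h1.2]
    have := hC p hp
    gcongr

lemma tendsto_lin (h : AGS R c d J lam v V) {H : ℝ × ℝ → ℝ}
    (hH : ContinuousOn H (closure (GamR R))) :
    Tendsto (fun n => ∫ p in GamR R, H p * V n p) atTop (𝓝 (∫ p in GamR R, H p * v p)) := by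
  obtain ⟨C, hC0, hC⟩ := exists_bound h.hR hH
  refine tendsto_int_of_close h.hR (C := C) (fun n => ?_) ?_ ?_
  · exact integrableOn_GamR h.hR.le (hH.mul (h.adm n).1.continuous.continuousOn)
  · exact integrableOn_GamR h.hR.le (hH.mul h.vc)
  · intro n p hp
    rw [← mul_sub, abs_mul]
    have := hC p hp
    have := h.close n p hp
    gcongr

lemma tendsto_mass (h : AGS R c d J lam v V) :
    Tendsto (fun n => mI R J (V n) (V n)) atTop (𝓝 (∫ p in GamR R, J p * v p ^ 2)) := by
  have := h.tendsto_sq h.Jc.continuousOn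
  unfold mI
  simpa only [pow_two] using this

lemma tendsto_energy (h : AGS R c d J lam v V) :
    Tendsto (fun n => aI R c d (V n) (V n)) atTop (𝓝 (lam * ∫ p in GamR R, J p * v p ^ 2)) :=
  tendsto_of_tendsto_of_tendsto_of_le_of_le (h.tendsto_mass.const_mul lam) tendsto_const_nhds
    (fun n => h.min _ (h.adm n)) (fun n => h.energy n)

/-- Cauchy–Schwarz for the nonnegative form `a - lam m`. -/
lemma cauchy (h : AGS R c d J lam v V) {W Z : ℝ × ℝ → ℝ} (hW : AdmR R W) (hZ : AdmR R Z) :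
    (aI R c d W Z - lam * mI R J W Z) ^ 2 ≤
      (aI R c d W W - lam * mI R J W W) * (aI R c d Z Z - lam * mI R J Z Z) := by
  apply cauchy_of_quadratic
  intro τ
  have h1 := h.min _ (hW.add_smul hZ τ)
  rw [aI_expand h.hR h.cc h.dc hW.1 hZ.1, mI_expand h.hR h.Jc hW.1.continuous hZ.1.continuous] at h1
  linarith

/-- The weak eigenvalue equation, tested against bounded sequences. -/
lemma orth (h : AGS R c d J lam v V) {Z : ℕ → ℝ × ℝ → ℝ} (hZ : ∀ n, AdmR R (Z n)) {K : ℝ}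
    (hK : ∀ n, aI R c d (Z n) (Z n) ≤ K) :
    Tendsto (fun n => aI R c d (V n) (Z n) - lam * mI R J (V n) (Z n)) atTop (𝓝 0) := by
  have h1 : Tendsto (fun n => (aI R c d (V n) (V n) - lam * mI R J (V n) (V n)) * K)
      atTop (𝓝 0) := by
    simpa using (h.tendsto_energy.sub (h.tendsto_mass.const_mul lam)).mul_const K
  have h2 : Tendsto (fun n => (aI R c d (V n) (Z n) - lam * mI R J (V n) (Z n)) ^ 2)
      atTop (𝓝 0) := by
    refine squeeze_zero (fun n => sq_nonneg _) (fun n => ?_) h1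
    refine (h.cauchy (h.adm n) (hZ n)).trans ?_
    have a1 := h.min _ (h.adm n)
    have a2 := mul_nonneg h.lam0 (mI_nonneg (W := Z n) h.J0)
    exact mul_le_mul_of_nonneg_left (by linarith [hK n]) (by linarith)
  have h3 := h2.sqrt
  simp only [Real.sqrt_sq_eq_abs, Real.sqrt_zero] at h3
  exact (tendsto_zero_iff_abs_tendsto_zero _).2 h3

lemma exists_bound_V (h : AGS R c d J lam v V) :
    ∃ B, 0 ≤ B ∧ ∀ n, ∀ p ∈ GamR R, |V n p| ≤ B := by
  obtain ⟨B, hB0, hB⟩ := exists_bound h.hR h.vc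
  refine ⟨B + 1, by linarith, fun n p hp => ?_⟩
  have h1 := h.close n p hp
  have h2 : 1 / ((n : ℝ) + 1) ≤ 1 := by
    rw [div_le_one (by positivity)]; linarith [(Nat.cast_nonneg n : (0 : ℝ) ≤ n)]
  have := hB p hp
  rw [abs_le] at this h1 ⊢
  constructor <;> linarith [this.1, this.2, h1.1, h1.2]

lemma exists_bound_mul (h : AGS R c d J lam v V) {G : ℝ × ℝ → ℝ} (hG : ContDiff ℝ 1 G) :
    ∃ K, ∀ n, aI R c d (fun p => G p * V n p) (fun p => G p * V n p) ≤ K := by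
  obtain ⟨B, hB0, hB⟩ := h.exists_bound_V
  obtain ⟨A, hA0, hA⟩ := exists_bound h.hR (F := G) hG.continuous.continuousOn
  have hcont : Continuous fun p => c p * pd1 G p ^ 2 + d p * pd2 G p ^ 2 :=
    (h.cc.mul ((continuous_pd1 hG).pow 2)).add (h.dc.mul ((continuous_pd2 hG).pow 2))
  refine ⟨2 * A ^ 2 * (lam * ∫ p in GamR R, J p * v p ^ 2) +
    2 * B ^ 2 * ∫ p in GamR R, (c p * pd1 G p ^ 2 + d p * pd2 G p ^ 2), fun n => ?_⟩
  have hV := (h.adm n).1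
  have : aI R c d (fun p => G p * V n p) (fun p => G p * V n p) ≤
      2 * A ^ 2 * aI R c d (V n) (V n) +
      2 * B ^ 2 * ∫ p in GamR R, (c p * pd1 G p ^ 2 + d p * pd2 G p ^ 2) := by
    have i1 := intOn h.hR (cont_aI h.cc h.dc hV hV)
    have i2 := intOn h.hR hcont
    unfold aI
    rw [← integral_const_mul, ← integral_const_mul,
      ← integral_add (i1.const_mul _) (i2.const_mul _)]
    refine setIntegral_mono_on (intOn h.hR (cont_aI h.cc h.dc (hG.mul hV) (hG.mul hV)))
      ((i1.const_mul _).add (i2.const_mul _)) (measurableSet_GamR R) fun p hp => ?_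
    simp only [pd1_mul hG hV, pd2_mul hG hV]
    have hc := h.c0 p hp
    have hd := h.d0 p hp
    have hA2 : G p ^ 2 ≤ A ^ 2 := sq_le_sq' (abs_le.1 (hA p hp)).1 (abs_le.1 (hA p hp)).2
    have hB2 : V n p ^ 2 ≤ B ^ 2 := sq_le_sq' (abs_le.1 (hB n p hp)).1 (abs_le.1 (hB n p hp)).2
    have key : ∀ g w : ℝ, (g * V n p + G p * w) * (g * V n p + G p * w) ≤
        2 * A ^ 2 * (w * w) + 2 * B ^ 2 * g ^ 2 := fun g w => by
      nlinarith [sq_nonneg (g * V n p - G p * w), mul_le_mul_of_nonneg_right hA2 (sq_nonneg w),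
        mul_le_mul_of_nonneg_right hB2 (sq_nonneg g)]
    nlinarith [mul_le_mul_of_nonneg_left (key (pd1 G p) (pd1 (V n) p)) hc,
      mul_le_mul_of_nonneg_left (key (pd2 G p) (pd2 (V n) p)) hd]
  have e := mul_le_mul_of_nonneg_left (h.energy n) (by positivity : 0 ≤ 2 * A ^ 2)
  linarith

/-- IMS localization formula for the limit function. -/
lemma ims (h : AGS R c d J lam v V) {G : ℝ × ℝ → ℝ} (hG : ContDiff ℝ 1 G) :
    Tendsto (fun n => aI R c d (fun p => G p * V n p) (fun p => G p * V n p)) atTop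
      (𝓝 (lam * (∫ p in GamR R, J p * G p ^ 2 * v p ^ 2) +
        ∫ p in GamR R, (c p * pd1 G p ^ 2 + d p * pd2 G p ^ 2) * v p ^ 2)) := by
  have hG2 : ContDiff ℝ 1 (fun p => G p * G p) := hG.mul hG
  obtain ⟨K, hK⟩ := h.exists_bound_mul hG2
  have h1 := h.orth (Z := fun n p => G p * G p * V n p) (fun n => (h.adm n).mul_left hG2) hK
  have hcont : Continuous fun p => c p * pd1 G p ^ 2 + d p * pd2 G p ^ 2 :=
    (h.cc.mul ((continuous_pd1 hG).pow 2)).add (h.dc.mul ((continuous_pd2 hG).pow 2))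
  have h2 := h.tendsto_sq (H := fun p => J p * G p ^ 2)
    (h.Jc.mul (hG.continuous.pow 2)).continuousOn
  have h3 := h.tendsto_sq hcont.continuousOn
  have h4 := (h1.add (h2.const_mul lam)).add h3
  rw [zero_add] at h4
  refine h4.congr fun n => ?_
  have hV := (h.adm n).1
  have hGc := hG.continuous
  have hVc := hV.continuous
  have e2 : mI R J (V n) (fun p => G p * G p * V n p) =
      ∫ p in GamR R, J p * G p ^ 2 * V n p ^ 2 := by
    unfold mI; congr 1; funext p; ring
  rw [e2]
  have e3 : aI R c d (V n) (fun p => G p * G p * V n p) +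
      ∫ p in GamR R, (c p * pd1 G p ^ 2 + d p * pd2 G p ^ 2) * V n p ^ 2 =
      aI R c d (fun p => G p * V n p) (fun p => G p * V n p) := by
    unfold aI
    rw [← integral_add (intOn h.hR (cont_aI h.cc h.dc hV (hG2.mul hV)))]
    · congr 1; funext p
      rw [pd1_mul hG2 hV, pd2_mul hG2 hV, pd1_mul hG hV, pd2_mul hG hV, pd1_mul hG hG,
        pd2_mul hG hG]
      ring
    · exact intOn h.hR (hcont.mul (hVc.pow 2))
  rw [← e3]; ring

end AGS

/-! ### Variational facts for `lamR` -/

lemma gradSq2_nonneg (W : ℝ × ℝ → ℝ) (p : ℝ × ℝ) : 0 ≤ gradSq2 W p := by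
  rw [gradSq2_eq]; positivity

lemma int_gradSq2_nonneg (s : Set (ℝ × ℝ)) (W : ℝ × ℝ → ℝ) : 0 ≤ ∫ p in s, gradSq2 W p :=
  integral_nonneg fun p => gradSq2_nonneg W p

lemma int_sq_nonneg (s : Set (ℝ × ℝ)) (W : ℝ × ℝ → ℝ) : 0 ≤ ∫ p in s, W p ^ 2 :=
  integral_nonneg fun p => sq_nonneg _

lemma lamR_nonneg (R : ℝ) : 0 ≤ lamR R := by
  apply Real.sInf_nonneg
  rintro r ⟨u, -, -, rfl⟩
  exact div_nonneg (int_gradSq2_nonneg _ _) (int_sq_nonneg _ _)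

lemma lamG_nonneg : 0 ≤ lamG := by
  apply Real.sInf_nonneg
  rintro r ⟨u, -, -, -, -, rfl⟩
  exact div_nonneg (int_gradSq2_nonneg _ _) (int_sq_nonneg _ _)

lemma lamR_le {R : ℝ} {W : ℝ × ℝ → ℝ} (hW : AdmR R W) :
    lamR R * ∫ p in GamR R, W p ^ 2 ≤ ∫ p in GamR R, gradSq2 W p := by
  by_cases h0 : (∫ p in GamR R, W p ^ 2) = 0
  · rw [h0, mul_zero]; exact int_gradSq2_nonneg _ _
  · have hpos : 0 < ∫ p in GamR R, W p ^ 2 := lt_of_le_of_ne (int_sq_nonneg _ _) (Ne.symm h0)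
    rw [← le_div_iff₀ hpos]
    refine csInf_le ⟨0, ?_⟩ ⟨W, hW, h0, rfl⟩
    rintro r ⟨u, -, -, rfl⟩
    exact div_nonneg (int_gradSq2_nonneg _ _) (int_sq_nonneg _ _)

lemma lamG_le {W : ℝ × ℝ → ℝ} (hW : ContDiff ℝ 1 W) (hc : HasCompactSupport W)
    (hs : tsupport W ⊆ Gam) :
    lamG * ∫ p in Gam, W p ^ 2 ≤ ∫ p in Gam, gradSq2 W p := by
  by_cases h0 : (∫ p in Gam, W p ^ 2) = 0
  · rw [h0, mul_zero]; exact int_gradSq2_nonneg _ _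
  · have hpos : 0 < ∫ p in Gam, W p ^ 2 := lt_of_le_of_ne (int_sq_nonneg _ _) (Ne.symm h0)
    rw [← le_div_iff₀ hpos]
    refine csInf_le ⟨0, ?_⟩ ⟨W, hW, hc, hs, h0, rfl⟩
    rintro r ⟨u, -, -, -, -, rfl⟩
    exact div_nonneg (int_gradSq2_nonneg _ _) (int_sq_nonneg _ _)

/-! ### Divergence theorem on the finite guide -/

lemma int_pd1_eq {F : ℝ × ℝ → ℝ} (hF : ContDiff ℝ 1 F) (a b y : ℝ) :
    ∫ x in a..b, pd1 F (x, y) = F (b, y) - F (a, y) :=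
  intervalIntegral.integral_eq_sub_of_hasDerivAt (fun s _ => hasDerivAt_fst hF s y)
    (Continuous.intervalIntegrable ((continuous_pd1 hF).comp (by fun_prop)) _ _)

lemma int_pd2_eq {F : ℝ × ℝ → ℝ} (hF : ContDiff ℝ 1 F) (a b x : ℝ) :
    ∫ y in a..b, pd2 F (x, y) = F (x, b) - F (x, a) :=
  intervalIntegral.integral_eq_sub_of_hasDerivAt (fun s _ => hasDerivAt_snd hF x s)
    (Continuous.intervalIntegrable ((continuous_pd2 hF).comp (by fun_prop)) _ _)

lemma ii_zero {f : ℝ → ℝ} {a b : ℝ} (hab : a ≤ b) (h : ∀ x ∈ Ioo a b, f x = 0) :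
    ∫ x in a..b, f x = 0 := by
  rw [intervalIntegral.integral_of_le hab, integral_Ioc_eq_integral_Ioo]
  exact setIntegral_eq_zero_of_forall_eq_zero h

lemma div1 {R : ℝ} (hR : 0 < R) {F : ℝ × ℝ → ℝ} (hF : ContDiff ℝ 1 F)
    (h1 : ∀ y, F (-1, y) = 0) (h2 : ∀ y, 0 ≤ y → F (0, y) = 0)
    (h3 : ∀ y ∈ II, F (R, y) = 0) : ∫ p in GamR R, pd1 F p = 0 := by
  have hc := continuous_pd1 hF
  rw [integral_GamR_split le_rfl hR.le hc, integral_GamR_zero hc, ii_swap hc, ii_swap hc]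
  simp_rw [int_pd1_eq hF]
  have hFc := hF.continuous
  rw [← intervalIntegral.integral_add (Continuous.intervalIntegrable (by fun_prop) _ _)
    (Continuous.intervalIntegrable (by fun_prop) _ _)]
  rw [ii_zero (by norm_num), ii_zero hR.le]
  · ring
  · intro y hy; rw [h1, h2 y hy.1.le]; ring
  · intro y hy; rw [h1, h3 y hy]; ring

lemma div2 {R : ℝ} (hR : 0 < R) {F : ℝ × ℝ → ℝ} (hF : ContDiff ℝ 1 F)
    (h1 : ∀ x, F (x, -1) = 0) (h2 : ∀ x, 0 ≤ x → F (x, 0) = 0)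
    (h3 : ∀ x ∈ II, F (x, R) = 0) : ∫ p in GamR R, pd2 F p = 0 := by
  have hc := continuous_pd2 hF
  rw [integral_GamR_split le_rfl hR.le hc, integral_GamR_zero hc,
    ← ii_swap hc (-1) 0 0 R]
  simp_rw [int_pd2_eq hF]
  have hFc := hF.continuous
  have e : ∀ a b c : ℝ, a + b + c = (a + c) + b := fun a b c => by ring
  rw [e, ← intervalIntegral.integral_add (Continuous.intervalIntegrable (by fun_prop) _ _)
    (Continuous.intervalIntegrable (by fun_prop) _ _)]
  rw [ii_zero (by norm_num), ii_zero hR.le]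
  · ring
  · intro y hy; rw [h1, h2 y hy.1.le]; ring
  · intro y hy; rw [h1, h3 y hy]; ring

/-! ### Truncations of the first eigenfunction -/

lemma exists_cutoff {K U : Set (ℝ × ℝ)} (hK : IsCompact K) (hU : IsOpen U) (hKU : K ⊆ U) :
    ∃ θ : ℝ × ℝ → ℝ, ContDiff ℝ 1 θ ∧ HasCompactSupport θ ∧ tsupport θ ⊆ U ∧
      ∀ p ∈ K, θ p = 1 := by
  obtain ⟨K', hK', h1, h2⟩ := exists_compact_between hK hU hKU
  obtain ⟨f, hf0, hf1, -⟩ := exists_contMDiffMap_zero_one_of_isClosed (n := 1)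
    (modelWithCornersSelf ℝ (ℝ × ℝ)) (s := (interior K')ᶜ) (t := K)
    isOpen_interior.isClosed_compl hK.isClosed
    (by rw [Set.disjoint_left]; intro x hx hx'; exact hx (h1 hx'))
  have hsup : tsupport (f : ℝ × ℝ → ℝ) ⊆ K' := by
    apply closure_minimal _ hK'.isClosed
    intro x hx
    by_contra hcon
    exact hx (hf0 (fun h => hcon (interior_subset h)))
  refine ⟨f, f.contMDiff.contDiff, HasCompactSupport.of_support_subset_isCompact hK'
    (subset_tsupport _ |>.trans hsup), hsup.trans h2, fun p hp => hf1 hp⟩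

lemma contDiff_of_support {θ g : ℝ × ℝ → ℝ} {U : Set (ℝ × ℝ)} (hU : IsOpen U)
    (hθ : ContDiff ℝ 1 θ) (hs : tsupport θ ⊆ U) (hg : ContDiffOn ℝ 1 g U) :
    ContDiff ℝ 1 (fun p => θ p * g p) := by
  rw [contDiff_iff_contDiffAt]
  intro p
  by_cases hp : p ∈ tsupport θ
  · exact hθ.contDiffAt.mul (hg.contDiffAt (hU.mem_nhds (hs hp)))
  · have : (fun p => θ p * g p) =ᶠ[𝓝 p] fun _ => 0 := by
      filter_upwards [(isClosed_tsupport θ).isOpen_compl.mem_nhds hp] with q hq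
      rw [image_eq_zero_of_notMem_tsupport hq, zero_mul]
    exact contDiffAt_const.congr_of_eventuallyEq this

lemma not_mem_Gam_left (y : ℝ) : ((-1 : ℝ), y) ∉ Gam := fun h => by
  have := (lt_min_iff.1 h.1).1; simp at this

lemma not_mem_Gam_bot (x : ℝ) : (x, (-1 : ℝ)) ∉ Gam := fun h => by
  have := (lt_min_iff.1 h.1).2; simp at this

lemma not_mem_Gam_of_nonneg {x y : ℝ} (hx : 0 ≤ x) (hy : 0 ≤ y) : (x, y) ∉ Gam := fun h => by
  have := h.2; rw [min_lt_iff] at this; simp only at this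
  rcases this with h | h <;> linarith

/-- Truncation of the first eigenfunction below height `ε`. -/
lemma exists_trunc {R : ℝ} (hR : 0 < R) {v : ℝ × ℝ → ℝ} (hv : IsFirstEF R v) {ε : ℝ}
    (hε : 0 < ε) :
    ∃ V : ℝ × ℝ → ℝ, ContDiff ℝ 1 V ∧ HasCompactSupport V ∧ tsupport V ⊆ Gam ∧
      (∀ p ∈ GamR R, |V p - v p| ≤ 2 * ε) ∧
      aI R (fun _ => 1) (fun _ => 1) V V ≤ lamR R := by
  obtain ⟨⟨U, hU, hUs, hvU⟩, hvc, hvD, hN1, hN2, heq, hpos, hnorm⟩ := hv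
  set K : Set (ℝ × ℝ) := closure (GamR R) ∩ {p | ε ≤ v p} with hKdef
  have hKcl : IsClosed K := by
    have := hvc.preimage_isClosed_of_isClosed isClosed_closure (isClosed_Ici (a := ε))
    exact this
  have hK : IsCompact K := (isCompact_closure_GamR hR.le).of_isClosed_subset hKcl inter_subset_left
  have hsub : GamR R ∪ SigSeg R ⊆ Gam :=
    union_subset inter_subset_left (SigSeg_subset_Gam hR)
  have hKU : K ⊆ U ∩ Gam := by
    rintro p ⟨hp1, hp2⟩
    have := mem_of_ne_zero hR hvc hvD hp1 (by simp only [mem_ofPred_eq] at hp2; linarith)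
    exact ⟨hUs this, hsub this⟩
  obtain ⟨θ, hθ, hθc, hθs, hθ1⟩ := exists_cutoff hK (hU.inter isOpen_Gam) hKU
  have hUG := hU.inter isOpen_Gam
  have hv1 : ContDiffOn ℝ 2 v (U ∩ Gam) :=
    (hvU.mono inter_subset_left).of_le (WithTop.coe_le_coe.2 le_top)
  have hηv : ContDiffOn ℝ 1 (fun p => eta ε (v p)) (U ∩ Gam) :=
    (contDiff_eta hε).comp_contDiffOn (hv1.of_le (by norm_num))
  have hfd : ContDiffOn ℝ 1 (fderiv ℝ v) (U ∩ Gam) := hv1.fderiv_of_isOpen hUG (by norm_num)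
  have hp1 : ContDiffOn ℝ 1 (pd1 v) (U ∩ Gam) := hfd.clm_apply contDiffOn_const
  have hp2 : ContDiffOn ℝ 1 (pd2 v) (U ∩ Gam) := hfd.clm_apply contDiffOn_const
  set V : ℝ × ℝ → ℝ := fun p => θ p * eta ε (v p) with hVdef
  have hV : ContDiff ℝ 1 V := contDiff_of_support hUG hθ hθs hηv
  have hVs : tsupport V ⊆ U ∩ Gam := (tsupport_mul_subset_left (f := θ)).trans hθs
  have hVc : HasCompactSupport V := hθc.mul_right
  have hV0 : ∀ p, p ∉ Gam → V p = 0 := fun p hp =>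
    image_eq_zero_of_notMem_tsupport fun h => hp (hVs h).2
  -- on the closed guide the cutoff is invisible
  have hVeq : ∀ p ∈ closure (GamR R), V p = eta ε (v p) := by
    intro p hp
    by_cases h : ε ≤ v p
    · simp only [hVdef, hθ1 p ⟨hp, h⟩, one_mul]
    · simp only [hVdef, eta_eq_zero hε (not_le.1 h).le, mul_zero]
  have hGU : GamR R ⊆ U ∩ Gam := fun p hp => ⟨hUs (Or.inl hp), hp.1⟩
  have hfdV : ∀ p ∈ GamR R, fderiv ℝ V p = eta' ε (v p) • fderiv ℝ v p := by
    intro p hp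
    have e1 : V =ᶠ[𝓝 p] fun p => eta ε (v p) := by
      filter_upwards [(isOpen_GamR R).mem_nhds hp] with q hq
      exact hVeq q (subset_closure hq)
    rw [e1.fderiv_eq]
    have hd : DifferentiableAt ℝ v p :=
      (hv1.contDiffAt (hUG.mem_nhds (hGU hp))).differentiableAt (by norm_num)
    exact ((hasDerivAt_eta hε (v p)).comp_hasFDerivAt p hd.hasFDerivAt).fderiv
  have hF1 : ContDiff ℝ 1 (fun p => V p * pd1 v p) := contDiff_of_support hUG hV hVs hp1
  have hF2 : ContDiff ℝ 1 (fun p => V p * pd2 v p) := contDiff_of_support hUG hV hVs hp2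
  have hd1 := div1 hR hF1 (fun y => by simp only [hV0 _ (not_mem_Gam_left y), zero_mul])
    (fun y hy => by simp only [hV0 _ (not_mem_Gam_of_nonneg le_rfl hy), zero_mul])
    (fun y hy => by simp only [hN1 y hy, mul_zero])
  have hd2 := div2 hR hF2 (fun x => by simp only [hV0 _ (not_mem_Gam_bot x), zero_mul])
    (fun x hx => by simp only [hV0 _ (not_mem_Gam_of_nonneg hx le_rfl), zero_mul])
    (fun x hx => by simp only [hN2 x hx, mul_zero])
  have i1 := intOn hR (continuous_pd1 hF1)
  have i2 := intOn hR (continuous_pd2 hF2)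
  have iv : IntegrableOn (fun p => lamR R * v p ^ 2) (GamR R) :=
    integrableOn_GamR hR.le (continuousOn_const.mul (hvc.pow 2))
  refine ⟨V, hV, hVc, hVs.trans inter_subset_right, ?_, ?_⟩
  · intro p hp
    rw [hVeq p (subset_closure hp)]
    exact abs_eta_sub_le hε (hpos p hp).le
  · rw [aI_one]
    have hle : ∫ p in GamR R, gradSq2 V p ≤ ∫ p in GamR R,
        ((pd1 (fun p => V p * pd1 v p) p + pd2 (fun p => V p * pd2 v p) p) +
          lamR R * v p ^ 2) := by
      refine setIntegral_mono_on (intOn hR (continuous_gradSq2 hV)) ((i1.add i2).add iv)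
        (measurableSet_GamR R) fun p hp => ?_
      have hdV : DifferentiableAt ℝ V p := hV.differentiable one_ne_zero p
      have hd1 : DifferentiableAt ℝ (pd1 v) p :=
        (hp1.contDiffAt (hUG.mem_nhds (hGU hp))).differentiableAt one_ne_zero
      have hd2 : DifferentiableAt ℝ (pd2 v) p :=
        (hp2.contDiffAt (hUG.mem_nhds (hGU hp))).differentiableAt one_ne_zero
      have e1 : pd1 (fun p => V p * pd1 v p) p = V p * pd1 (pd1 v) p + pd1 v p * pd1 V p := by
        unfold pd1 at hd1 ⊢
        rw [fderiv_fun_mul hdV hd1]; simp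
      have e2 : pd2 (fun p => V p * pd2 v p) p = V p * pd2 (pd2 v) p + pd2 v p * pd2 V p := by
        unfold pd2 at hd2 ⊢
        rw [fderiv_fun_mul hdV hd2]; simp
      have e3 : pd1 V p = eta' ε (v p) * pd1 v p := by
        unfold pd1; rw [hfdV p hp]; simp
      have e4 : pd2 V p = eta' ε (v p) * pd2 v p := by
        unfold pd2; rw [hfdV p hp]; simp
      have e5 := heq p hp
      unfold lap2 at e5
      rw [gradSq2_eq, e1, e2, e3, e4]
      have e6 := hVeq p (subset_closure hp)
      have v0 := (hpos p hp).le
      have e7 : V p ≤ v p := by rw [e6]; exact eta_le hε v0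
      have e8 : V p * pd1 (pd1 v) p + V p * pd2 (pd2 v) p = -(lamR R * v p * V p) := by
        rw [← e5]; ring
      have k0 := eta'_nonneg ε (v p)
      have k1 := eta'_le_one hε (v p)
      have k2 : eta' ε (v p) ^ 2 ≤ eta' ε (v p) := by nlinarith
      have k3 : lamR R * v p * V p ≤ lamR R * v p ^ 2 := by
        have := mul_le_mul_of_nonneg_left e7 (mul_nonneg (lamR_nonneg R) v0)
        nlinarith
      have k4 := mul_le_mul_of_nonneg_right k2
        (add_nonneg (sq_nonneg (pd1 v p)) (sq_nonneg (pd2 v p)))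
      nlinarith
    refine hle.trans ?_
    have i12 : IntegrableOn (fun p => pd1 (fun p => V p * pd1 v p) p +
      pd2 (fun p => V p * pd2 v p) p) (GamR R) := i1.add i2
    rw [integral_add i12 iv, integral_add i1 i2, hd1, hd2, integral_const_mul, hnorm]
    simp

/-- The first eigenfunction is the uniform limit of an approximate ground state whose members are
also test functions on the infinite guide. -/
lemma exists_AGS {R : ℝ} (hR : 0 < R) {v : ℝ × ℝ → ℝ} (hv : IsFirstEF R v) :
    ∃ V : ℕ → ℝ × ℝ → ℝ, AGS R (fun _ => 1) (fun _ => 1) (fun _ => 1) (lamR R) v V ∧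
      ∀ n, HasCompactSupport (V n) ∧ tsupport (V n) ⊆ Gam := by
  have hε : ∀ n : ℕ, (0 : ℝ) < 1 / (2 * ((n : ℝ) + 1)) := fun n => by positivity
  choose V h1 h2 h3 h4 h5 using fun n => exists_trunc hR hv (hε n)
  refine ⟨V, ⟨hR, continuous_const, continuous_const, continuous_const, fun _ _ => zero_le_one,
    fun _ _ => zero_le_one, fun _ _ => zero_le_one, lamR_nonneg R, hv.2.1, fun n => ⟨h1 n, ?_⟩,
    ?_, ?_, ?_⟩, fun n => ⟨h2 n, h3 n⟩⟩
  · intro p hp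
    exact image_eq_zero_of_notMem_tsupport fun h => DirB_disjoint_Gam hR hp (h3 n h)
  · intro n p hp
    refine (h4 n p hp).trans (le_of_eq ?_)
    field_simp
  · intro W hW
    rw [aI_one, mI_one]; exact lamR_le hW
  · intro n
    simp only [one_mul]
    rw [hv.2.2.2.2.2.2.2, mul_one]
    exact h5 n

/-! ### The spectral gap of the finite guide -/

/-- On the orthogonal complement of the ground state the energy is at least `π²`: by `lemmaC`
the form `a - π² m` is nonnegative on a subspace of codimension one. -/
lemma gap {R : ℝ} {v : ℝ × ℝ → ℝ} {V : ℕ → ℝ × ℝ → ℝ}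
    (h : AGS R (fun _ => 1) (fun _ => 1) (fun _ => 1) (lamR R) v V)
    (hn : ∫ p in GamR R, v p ^ 2 = 1) (hl : lamR R < π ^ 2) {W : ℝ × ℝ → ℝ} (hW : AdmR R W) :
    lamR R * (∫ p in GamR R, W p * v p) ^ 2 +
      π ^ 2 * ((∫ p in GamR R, W p ^ 2) - (∫ p in GamR R, W p * v p) ^ 2) ≤
      ∫ p in GamR R, gradSq2 W p := by
  have hR := h.hR
  set f := ∫ p in GamR R, W p * v p with hf
  have t1 := h.tendsto_energy
  have t2 := h.tendsto_mass
  simp only [one_mul, hn, mul_one] at t1 t2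
  have tk : Tendsto (fun n => π ^ 2 * mI R (fun _ => 1) (V n) (V n) -
      aI R (fun _ => 1) (fun _ => 1) (V n) (V n)) atTop (𝓝 (π ^ 2 - lamR R)) := by
    simpa using (t2.const_mul (π ^ 2)).sub t1
  have t3 := h.orth (Z := fun _ => W) (fun _ => hW) (fun _ => le_rfl)
  have t4 : Tendsto (fun n => mI R (fun _ => 1) (V n) W) atTop (𝓝 f) := by
    have := h.tendsto_lin (H := W) hW.1.continuous.continuousOn
    refine this.congr fun n => ?_
    unfold mI; congr 1; funext p; ring
  have tj : Tendsto (fun n => aI R (fun _ => 1) (fun _ => 1) W (V n) -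
      π ^ 2 * mI R (fun _ => 1) W (V n)) atTop (𝓝 ((lamR R - π ^ 2) * f)) := by
    have := t3.add (t4.const_mul (lamR R - π ^ 2))
    rw [zero_add] at this
    refine this.congr fun n => ?_
    rw [aI_comm R _ _ W, mI_comm R _ W]; ring
  have hk0 : 0 < π ^ 2 - lamR R := by linarith
  have tq := ((tj.pow 2).div tk hk0.ne').neg
  have key : -(((lamR R - π ^ 2) * f) ^ 2 / (π ^ 2 - lamR R)) ≤
      (∫ p in GamR R, gradSq2 W p) - π ^ 2 * ∫ p in GamR R, W p ^ 2 := by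
    refine le_of_tendsto tq ?_
    filter_upwards [tk.eventually (lt_mem_nhds hk0)] with n hkn
    have hV := h.adm n
    have c1 : Continuous fun p => W p := hW.1.continuous
    have c2 : Continuous fun p => V n p := hV.1.continuous
    have hphi : ∀ τ : ℝ, ∫ p in GamR 0, (W p + τ * V n p) =
        (∫ p in GamR 0, W p) + τ * ∫ p in GamR 0, V n p := fun τ => by
      rw [integral_add (integrableOn_GamR le_rfl c1.continuousOn)
        ((integrableOn_GamR le_rfl c2.continuousOn).const_mul τ), integral_const_mul]
    have hne : (∫ p in GamR 0, V n p) ≠ 0 := by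
      intro h0
      have := lemmaC hR hV
      rw [h0, ← aI_one, ← mI_one] at this
      linarith
    set τ := -(∫ p in GamR 0, W p) / ∫ p in GamR 0, V n p with hτ
    have hC := lemmaC hR (hW.add_smul hV τ)
    have h0 : ∫ p in GamR 0, (W p + τ * V n p) = 0 := by
      rw [hphi, hτ]; field_simp; ring
    rw [h0, ← aI_one, ← mI_one, aI_expand hR continuous_const continuous_const hW.1 hV.1,
      mI_expand hR continuous_const c1 c2] at hC
    rw [← aI_one, ← mI_one, neg_le, Pi.div_apply, le_div_iff₀ hkn]
    set k := π ^ 2 * mI R (fun _ => 1) (V n) (V n) - aI R (fun _ => 1) (fun _ => 1) (V n) (V n)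
    set j := aI R (fun _ => 1) (fun _ => 1) W (V n) - π ^ 2 * mI R (fun _ => 1) W (V n)
    have hX : τ ^ 2 * k - 2 * τ * j ≤ aI R (fun _ => 1) (fun _ => 1) W W -
        π ^ 2 * mI R (fun _ => 1) W W := by
      simp only [k, j]; linarith
    nlinarith [sq_nonneg (τ * k - j), mul_le_mul_of_nonneg_right hX hkn.le]
  have e : ((lamR R - π ^ 2) * f) ^ 2 / (π ^ 2 - lamR R) = (π ^ 2 - lamR R) * f ^ 2 := by
    field_simp; ring
  rw [e] at key
  linarith

/-! ### A trial function: the bottom of the spectrum of the guide lies below `π²` -/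

/-- Smoothed tent, a quadratic spline supported in `[-199/200, 4]`: the longitudinal profile. -/
def tA (x : ℝ) : ℝ := 641600 * (max (x + 199 / 200) 0) ^ 2 - 641600 * (max (x + 99 / 100) 0) ^ 2
  - 478800 * (max (x + 1 / 100) 0) ^ 2 + 479195 * (max x 0) ^ 2 - 395 * (max (x - 4) 0) ^ 2

/-- The derivative of `tA`. -/
def tA' (x : ℝ) : ℝ := 1283200 * (max (x + 199 / 200) 0) - 1283200 * (max (x + 99 / 100) 0)
  - 957600 * (max (x + 1 / 100) 0) + 958390 * (max x 0) - 790 * (max (x - 4) 0)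

/-- Smoothed parabola `-x(1+x)`, a quadratic spline supported in `[-199/200, -1/200]`: the
transverse profile. -/
def tB (x : ℝ) : ℝ := 98 * (max (x + 199 / 200) 0) ^ 2 - 99 * (max (x + 99 / 100) 0) ^ 2
  + 99 * (max (x + 1 / 100) 0) ^ 2 - 98 * (max (x + 1 / 200) 0) ^ 2

/-- The derivative of `tB`. -/
def tB' (x : ℝ) : ℝ := 196 * (max (x + 199 / 200) 0) - 198 * (max (x + 99 / 100) 0)
  + 198 * (max (x + 1 / 100) 0) - 196 * (max (x + 1 / 200) 0)

lemma hasDerivAt_posSq_add (k x : ℝ) :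
    HasDerivAt (fun x : ℝ => (max (x + k) 0) ^ 2) (2 * max (x + k) 0) x :=
  (hasDerivAt_posSq (x + k)).comp_add_const x k

lemma hasDerivAt_tA (x : ℝ) : HasDerivAt tA (tA' x) x := by
  have h := (((((hasDerivAt_posSq_add (199 / 200) x).const_mul 641600).sub
    ((hasDerivAt_posSq_add (99 / 100) x).const_mul 641600)).sub
    ((hasDerivAt_posSq_add (1 / 100) x).const_mul 478800)).add
    ((hasDerivAt_posSq x).const_mul 479195)).sub
    (((hasDerivAt_posSq (x - 4)).comp_sub_const x 4).const_mul 395)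
  refine HasDerivAt.congr_deriv (by exact h) ?_
  simp only [tA']; ring

lemma hasDerivAt_tB (x : ℝ) : HasDerivAt tB (tB' x) x := by
  have h := ((((hasDerivAt_posSq_add (199 / 200) x).const_mul 98).sub
    ((hasDerivAt_posSq_add (99 / 100) x).const_mul 99)).add
    ((hasDerivAt_posSq_add (1 / 100) x).const_mul 99)).sub
    ((hasDerivAt_posSq_add (1 / 200) x).const_mul 98)
  refine HasDerivAt.congr_deriv (by exact h) ?_
  simp only [tB']; ring

@[fun_prop] lemma continuous_tA' : Continuous tA' := by unfold tA'; fun_prop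
@[fun_prop] lemma continuous_tB' : Continuous tB' := by unfold tB'; fun_prop
@[fun_prop] lemma continuous_tA : Continuous tA := by unfold tA; fun_prop
@[fun_prop] lemma continuous_tB : Continuous tB := by unfold tB; fun_prop

lemma contDiff_of_hasDerivAt {f f' : ℝ → ℝ} (h : ∀ x, HasDerivAt f (f' x) x)
    (hc : Continuous f') : ContDiff ℝ 1 f := by
  rw [contDiff_one_iff_deriv]
  refine ⟨fun x => (h x).differentiableAt, ?_⟩
  have : deriv f = f' := funext fun x => (h x).deriv
  rwa [this]

/-- On each interval between consecutive knots the profiles are polynomials; this and the lemmas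
`piece1` to `piece4` list them. -/
lemma piece0 {x : ℝ} (h1 : -199 / 200 ≤ x) (h2 : x ≤ -99 / 100) :
    tA x = (15880001 / 25) + (1276784) * x + (641600) * x ^ 2 ∧
    tA' x = (1276784) + (1283200) * x + (0) * x ^ 2 ∧
    tB x = (1940449 / 20000) + (9751 / 50) * x + (98) * x ^ 2 ∧
    tB' x = (9751 / 50) + (196) * x + (0) * x ^ 2 := by
  have : max (x + 199 / 200) 0 = (x + 199 / 200) := max_eq_left (by linarith)
  have : max (x + 99 / 100) 0 = 0 := max_eq_right (by linarith)
  have : max (x + 1 / 100) 0 = 0 := max_eq_right (by linarith)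
  have : max (x + 1 / 200) 0 = 0 := max_eq_right (by linarith)
  have : max x 0 = 0 := max_eq_right (by linarith)
  have : max (x - 4) 0 = 0 := max_eq_right (by linarith)
  refine ⟨?_, ?_, ?_, ?_⟩ <;> simp only [tA, tA', tB, tB', *] <;> ring

lemma piece1 {x : ℝ} (h1 : -99 / 100 ≤ x) (h2 : x ≤ -1 / 100) :
    tA x = (159197 / 25) + (6416) * x + (0) * x ^ 2 ∧
    tA' x = (6416) + (0) * x + (0) * x ^ 2 ∧
    tB x = (-149 / 20000) + (-1) * x + (-1) * x ^ 2 ∧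
    tB' x = (-1) + (-2) * x + (0) * x ^ 2 := by
  have : max (x + 199 / 200) 0 = (x + 199 / 200) := max_eq_left (by linarith)
  have : max (x + 99 / 100) 0 = (x + 99 / 100) := max_eq_left (by linarith)
  have : max (x + 1 / 100) 0 = 0 := max_eq_right (by linarith)
  have : max (x + 1 / 200) 0 = 0 := max_eq_right (by linarith)
  have : max x 0 = 0 := max_eq_right (by linarith)
  have : max (x - 4) 0 = 0 := max_eq_right (by linarith)
  refine ⟨?_, ?_, ?_, ?_⟩ <;> simp only [tA, tA', tB, tB', *] <;> ring

lemma piece2 {x : ℝ} (h1 : -1 / 100 ≤ x) (h2 : x ≤ -1 / 200) :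
    tA x = (6320) + (-3160) * x + (-478800) * x ^ 2 ∧
    tA' x = (-3160) + (-957600) * x + (0) * x ^ 2 ∧
    tB x = (49 / 20000) + (49 / 50) * x + (98) * x ^ 2 ∧
    tB' x = (49 / 50) + (196) * x + (0) * x ^ 2 := by
  have : max (x + 199 / 200) 0 = (x + 199 / 200) := max_eq_left (by linarith)
  have : max (x + 99 / 100) 0 = (x + 99 / 100) := max_eq_left (by linarith)
  have : max (x + 1 / 100) 0 = (x + 1 / 100) := max_eq_left (by linarith)
  have : max (x + 1 / 200) 0 = 0 := max_eq_right (by linarith)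
  have : max x 0 = 0 := max_eq_right (by linarith)
  have : max (x - 4) 0 = 0 := max_eq_right (by linarith)
  refine ⟨?_, ?_, ?_, ?_⟩ <;> simp only [tA, tA', tB, tB', *] <;> ring

lemma piece3 {x : ℝ} (h1 : -1 / 200 ≤ x) (h2 : x ≤ 0) :
    tA x = (6320) + (-3160) * x + (-478800) * x ^ 2 ∧
    tA' x = (-3160) + (-957600) * x + (0) * x ^ 2 ∧
    tB x = (0) + (0) * x + (0) * x ^ 2 ∧
    tB' x = (0) + (0) * x + (0) * x ^ 2 := by
  have : max (x + 199 / 200) 0 = (x + 199 / 200) := max_eq_left (by linarith)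
  have : max (x + 99 / 100) 0 = (x + 99 / 100) := max_eq_left (by linarith)
  have : max (x + 1 / 100) 0 = (x + 1 / 100) := max_eq_left (by linarith)
  have : max (x + 1 / 200) 0 = (x + 1 / 200) := max_eq_left (by linarith)
  have : max x 0 = 0 := max_eq_right (by linarith)
  have : max (x - 4) 0 = 0 := max_eq_right (by linarith)
  refine ⟨?_, ?_, ?_, ?_⟩ <;> simp only [tA, tA', tB, tB', *] <;> ring

lemma piece4 {x : ℝ} (h1 : 0 ≤ x) (h2 : x ≤ 4) :
    tA x = (6320) + (-3160) * x + (395) * x ^ 2 ∧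
    tA' x = (-3160) + (790) * x + (0) * x ^ 2 ∧
    tB x = (0) + (0) * x + (0) * x ^ 2 ∧
    tB' x = (0) + (0) * x + (0) * x ^ 2 := by
  have : max (x + 199 / 200) 0 = (x + 199 / 200) := max_eq_left (by linarith)
  have : max (x + 99 / 100) 0 = (x + 99 / 100) := max_eq_left (by linarith)
  have : max (x + 1 / 100) 0 = (x + 1 / 100) := max_eq_left (by linarith)
  have : max (x + 1 / 200) 0 = (x + 1 / 200) := max_eq_left (by linarith)
  have : max x 0 = x := max_eq_left (by linarith)
  have : max (x - 4) 0 = 0 := max_eq_right (by linarith)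
  refine ⟨?_, ?_, ?_, ?_⟩ <;> simp only [tA, tA', tB, tB', *] <;> ring

lemma tvan {x : ℝ} (hx : x ≤ -199 / 200 ∨ 4 ≤ x) : tA x = 0 ∧ tA' x = 0 ∧ tB x = 0 ∧ tB' x = 0 := by
  rcases hx with h | h
  · have : max (x + 199 / 200) 0 = 0 := max_eq_right (by linarith)
    have : max (x + 99 / 100) 0 = 0 := max_eq_right (by linarith)
    have : max (x + 1 / 100) 0 = 0 := max_eq_right (by linarith)
    have : max (x + 1 / 200) 0 = 0 := max_eq_right (by linarith)
    have : max x 0 = 0 := max_eq_right (by linarith)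
    have : max (x - 4) 0 = 0 := max_eq_right (by linarith)
    refine ⟨?_, ?_, ?_, ?_⟩ <;> simp only [tA, tA', tB, tB', *] <;> ring
  · have : max (x + 199 / 200) 0 = x + 199 / 200 := max_eq_left (by linarith)
    have : max (x + 99 / 100) 0 = x + 99 / 100 := max_eq_left (by linarith)
    have : max (x + 1 / 100) 0 = x + 1 / 100 := max_eq_left (by linarith)
    have : max (x + 1 / 200) 0 = x + 1 / 200 := max_eq_left (by linarith)
    have : max x 0 = x := max_eq_left (by linarith)
    have : max (x - 4) 0 = x - 4 := max_eq_left (by linarith)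
    refine ⟨?_, ?_, ?_, ?_⟩ <;> simp only [tA, tA', tB, tB', *] <;> ring

lemma tB_van {x : ℝ} (h : -1 / 200 ≤ x) : tB x = 0 ∧ tB' x = 0 := by
  have : max (x + 199 / 200) 0 = x + 199 / 200 := max_eq_left (by linarith)
  have : max (x + 99 / 100) 0 = x + 99 / 100 := max_eq_left (by linarith)
  have : max (x + 1 / 100) 0 = x + 1 / 100 := max_eq_left (by linarith)
  have : max (x + 1 / 200) 0 = x + 1 / 200 := max_eq_left (by linarith)
  refine ⟨?_, ?_⟩ <;> simp only [tB, tB', *] <;> ring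

lemma int_quad {f g : ℝ → ℝ} {a b f0 f1 f2 g0 g1 g2 : ℝ} (hab : a ≤ b)
    (hf : ∀ x ∈ Icc a b, f x = f0 + f1 * x + f2 * x ^ 2)
    (hg : ∀ x ∈ Icc a b, g x = g0 + g1 * x + g2 * x ^ 2) :
    ∫ x in a..b, f x * g x = f0 * g0 * (b - a) + (f0 * g1 + f1 * g0) * ((b ^ 2 - a ^ 2) / 2) +
      (f0 * g2 + f1 * g1 + f2 * g0) * ((b ^ 3 - a ^ 3) / 3) +
      (f1 * g2 + f2 * g1) * ((b ^ 4 - a ^ 4) / 4) + f2 * g2 * ((b ^ 5 - a ^ 5) / 5) := by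
  have e : ∫ x in a..b, f x * g x =
      ∫ x in a..b, (f0 + f1 * x + f2 * x ^ 2) * (g0 + g1 * x + g2 * x ^ 2) := by
    refine intervalIntegral.integral_congr fun x hx => ?_
    rw [uIcc_of_le hab] at hx
    simp only [hf x hx, hg x hx]
  rw [e, intervalIntegral.integral_eq_sub_of_hasDerivAt (f := fun x => f0 * g0 * x +
    (f0 * g1 + f1 * g0) * (x ^ 2 / 2) + (f0 * g2 + f1 * g1 + f2 * g0) * (x ^ 3 / 3) +
      (f1 * g2 + f2 * g1) * (x ^ 4 / 4) + f2 * g2 * (x ^ 5 / 5))]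
  · ring
  · intro x _
    have h := (((((hasDerivAt_id x).const_mul (f0 * g0)).add
      (((hasDerivAt_pow 2 x).div_const 2).const_mul (f0 * g1 + f1 * g0))).add
      (((hasDerivAt_pow 3 x).div_const 3).const_mul (f0 * g2 + f1 * g1 + f2 * g0))).add
      (((hasDerivAt_pow 4 x).div_const 4).const_mul (f1 * g2 + f2 * g1))).add
      (((hasDerivAt_pow 5 x).div_const 5).const_mul (f2 * g2))
    refine HasDerivAt.congr_deriv (by exact h) ?_
    norm_num; ring
  · exact Continuous.intervalIntegrable (by fun_prop) _ _

/-- Integrals of functions vanishing outside the support of the profiles split at the knots. -/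
lemma tsplit {f g : ℝ → ℝ} (hf : Continuous f) (hg : Continuous g)
    (h0 : ∀ x, x ≤ -199 / 200 ∨ 4 ≤ x → f x = 0) :
    ∫ x, f x * g x = (∫ x in (-199 / 200 : ℝ)..(-99 / 100), f x * g x) +
      (∫ x in (-99 / 100 : ℝ)..(-1 / 100), f x * g x) +
      (∫ x in (-1 / 100 : ℝ)..(-1 / 200), f x * g x) +
      (∫ x in (-1 / 200 : ℝ)..0, f x * g x) + ∫ x in (0 : ℝ)..4, f x * g x := by
  have hi : ∀ a b : ℝ, IntervalIntegrable (fun x => f x * g x) volume a b := fun a b =>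
    (hf.mul hg).intervalIntegrable a b
  rw [intervalIntegral.integral_add_adjacent_intervals (hi _ _) (hi _ _),
    intervalIntegral.integral_add_adjacent_intervals (hi _ _) (hi _ _),
    intervalIntegral.integral_add_adjacent_intervals (hi _ _) (hi _ _),
    intervalIntegral.integral_add_adjacent_intervals (hi _ _) (hi _ _),
    intervalIntegral.integral_of_le (by norm_num)]
  refine (setIntegral_eq_integral_of_forall_compl_eq_zero fun x hx => ?_).symm
  rw [h0 x, zero_mul]
  rw [mem_Ioc, not_and_or, not_lt, not_le] at hx
  exact hx.imp id le_of_lt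

lemma tD : ∫ x, tA' x * tA' x = 1345685424 / 25 := by
  rw [tsplit (by fun_prop) (by fun_prop) (fun x hx => (tvan hx).2.1),
    int_quad (by norm_num) (fun x hx => (piece0 hx.1 hx.2).2.1) (fun x hx => (piece0 hx.1 hx.2).2.1),
    int_quad (by norm_num) (fun x hx => (piece1 hx.1 hx.2).2.1) (fun x hx => (piece1 hx.1 hx.2).2.1),
    int_quad (by norm_num) (fun x hx => (piece2 hx.1 hx.2).2.1) (fun x hx => (piece2 hx.1 hx.2).2.1),
    int_quad (by norm_num) (fun x hx => (piece3 hx.1 hx.2).2.1) (fun x hx => (piece3 hx.1 hx.2).2.1),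
    int_quad (by norm_num) (fun x hx => (piece4 hx.1 hx.2).2.1) (fun x hx => (piece4 hx.1 hx.2).2.1)]
  norm_num

lemma tN : ∫ x, tA x * tA x = 28354471424649 / 625000 := by
  rw [tsplit (by fun_prop) (by fun_prop) (fun x hx => (tvan hx).1),
    int_quad (by norm_num) (fun x hx => (piece0 hx.1 hx.2).1) (fun x hx => (piece0 hx.1 hx.2).1),
    int_quad (by norm_num) (fun x hx => (piece1 hx.1 hx.2).1) (fun x hx => (piece1 hx.1 hx.2).1),
    int_quad (by norm_num) (fun x hx => (piece2 hx.1 hx.2).1) (fun x hx => (piece2 hx.1 hx.2).1),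
    int_quad (by norm_num) (fun x hx => (piece3 hx.1 hx.2).1) (fun x hx => (piece3 hx.1 hx.2).1),
    int_quad (by norm_num) (fun x hx => (piece4 hx.1 hx.2).1) (fun x hx => (piece4 hx.1 hx.2).1)]
  norm_num

lemma tbeta : ∫ x, tB x * tB x = 6181045563 / 200000000000 := by
  rw [tsplit (by fun_prop) (by fun_prop) (fun x hx => (tvan hx).2.2.1),
    int_quad (by norm_num) (fun x hx => (piece0 hx.1 hx.2).2.2.1) (fun x hx => (piece0 hx.1 hx.2).2.2.1),
    int_quad (by norm_num) (fun x hx => (piece1 hx.1 hx.2).2.2.1) (fun x hx => (piece1 hx.1 hx.2).2.2.1),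
    int_quad (by norm_num) (fun x hx => (piece2 hx.1 hx.2).2.2.1) (fun x hx => (piece2 hx.1 hx.2).2.2.1),
    int_quad (by norm_num) (fun x hx => (piece3 hx.1 hx.2).2.2.1) (fun x hx => (piece3 hx.1 hx.2).2.2.1),
    int_quad (by norm_num) (fun x hx => (piece4 hx.1 hx.2).2.2.1) (fun x hx => (piece4 hx.1 hx.2).2.2.1)]
  norm_num

lemma tbeta' : ∫ x, tB' x * tB' x = 79233 / 250000 := by
  rw [tsplit (by fun_prop) (by fun_prop) (fun x hx => (tvan hx).2.2.2),
    int_quad (by norm_num) (fun x hx => (piece0 hx.1 hx.2).2.2.2) (fun x hx => (piece0 hx.1 hx.2).2.2.2),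
    int_quad (by norm_num) (fun x hx => (piece1 hx.1 hx.2).2.2.2) (fun x hx => (piece1 hx.1 hx.2).2.2.2),
    int_quad (by norm_num) (fun x hx => (piece2 hx.1 hx.2).2.2.2) (fun x hx => (piece2 hx.1 hx.2).2.2.2),
    int_quad (by norm_num) (fun x hx => (piece3 hx.1 hx.2).2.2.2) (fun x hx => (piece3 hx.1 hx.2).2.2.2),
    int_quad (by norm_num) (fun x hx => (piece4 hx.1 hx.2).2.2.2) (fun x hx => (piece4 hx.1 hx.2).2.2.2)]
  norm_num

lemma tp : ∫ x, tA x * tB x = 6039459704663 / 12000000000 := by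
  rw [tsplit (by fun_prop) (by fun_prop) (fun x hx => (tvan hx).1),
    int_quad (by norm_num) (fun x hx => (piece0 hx.1 hx.2).1) (fun x hx => (piece0 hx.1 hx.2).2.2.1),
    int_quad (by norm_num) (fun x hx => (piece1 hx.1 hx.2).1) (fun x hx => (piece1 hx.1 hx.2).2.2.1),
    int_quad (by norm_num) (fun x hx => (piece2 hx.1 hx.2).1) (fun x hx => (piece2 hx.1 hx.2).2.2.1),
    int_quad (by norm_num) (fun x hx => (piece3 hx.1 hx.2).1) (fun x hx => (piece3 hx.1 hx.2).2.2.1),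
    int_quad (by norm_num) (fun x hx => (piece4 hx.1 hx.2).1) (fun x hx => (piece4 hx.1 hx.2).2.2.1)]
  norm_num

lemma tq : ∫ x, tA' x * tB' x = -19943 / 15000 := by
  rw [tsplit (by fun_prop) (by fun_prop) (fun x hx => (tvan hx).2.1),
    int_quad (by norm_num) (fun x hx => (piece0 hx.1 hx.2).2.1) (fun x hx => (piece0 hx.1 hx.2).2.2.2),
    int_quad (by norm_num) (fun x hx => (piece1 hx.1 hx.2).2.1) (fun x hx => (piece1 hx.1 hx.2).2.2.2),
    int_quad (by norm_num) (fun x hx => (piece2 hx.1 hx.2).2.1) (fun x hx => (piece2 hx.1 hx.2).2.2.2),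
    int_quad (by norm_num) (fun x hx => (piece3 hx.1 hx.2).2.1) (fun x hx => (piece3 hx.1 hx.2).2.2.2),
    int_quad (by norm_num) (fun x hx => (piece4 hx.1 hx.2).2.1) (fun x hx => (piece4 hx.1 hx.2).2.2.2)]
  norm_num

/-- The trial function on the guide. -/
def tW (p : ℝ × ℝ) : ℝ := tA p.1 * tB p.2 + tB p.1 * tA p.2

lemma contDiff_tW : ContDiff ℝ 1 tW := by
  have hA := contDiff_of_hasDerivAt hasDerivAt_tA continuous_tA'
  have hB := contDiff_of_hasDerivAt hasDerivAt_tB continuous_tB'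
  unfold tW; fun_prop

lemma tW_support : Function.support tW ⊆
    (Icc (-199 / 200 : ℝ) 4 ×ˢ Icc (-199 / 200 : ℝ) 4) ∩ {p | p.1 ≤ -1 / 200 ∨ p.2 ≤ -1 / 200} := by
  intro p hp
  rw [Function.mem_support] at hp
  by_contra hn
  apply hp
  simp only [mem_inter_iff, mem_prod, mem_Icc, mem_ofPred_eq] at hn
  unfold tW
  by_cases h1 : p.1 < -199 / 200 ∨ 4 < p.1
  · have := tvan (h1.imp le_of_lt le_of_lt); rw [this.1, this.2.2.1]; ring
  by_cases h2 : p.2 < -199 / 200 ∨ 4 < p.2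
  · have := tvan (h2.imp le_of_lt le_of_lt); rw [this.1, this.2.2.1]; ring
  push Not at h1 h2
  have h3 : ¬ (p.1 ≤ -1 / 200 ∨ p.2 ≤ -1 / 200) := fun h => hn ⟨⟨h1, h2⟩, h⟩
  push Not at h3
  rw [(tB_van h3.1.le).1, (tB_van h3.2.le).1]; ring

lemma tW_tsupport : tsupport tW ⊆
    (Icc (-199 / 200 : ℝ) 4 ×ˢ Icc (-199 / 200 : ℝ) 4) ∩ {p | p.1 ≤ -1 / 200 ∨ p.2 ≤ -1 / 200} := by
  refine closure_minimal tW_support ((isClosed_Icc.prod isClosed_Icc).inter ?_)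
  exact (isClosed_le continuous_fst continuous_const).union
    (isClosed_le continuous_snd continuous_const)

lemma tW_compact : HasCompactSupport tW :=
  (isCompact_Icc.prod isCompact_Icc).of_isClosed_subset (isClosed_tsupport _)
    (tW_tsupport.trans inter_subset_left)

lemma tW_Gam : tsupport tW ⊆ Gam := by
  intro p hp
  obtain ⟨⟨h1, h2⟩, h3⟩ := tW_tsupport hp
  simp only [mem_Icc, mem_ofPred_eq] at h1 h2 h3
  refine ⟨lt_min (by linarith) (by linarith), min_lt_iff.2 (h3.imp ?_ ?_)⟩ <;>
    · intro; linarith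

lemma hasCompactSupport_van {f : ℝ → ℝ} (h : ∀ x, x ≤ -199 / 200 ∨ 4 ≤ x → f x = 0) :
    HasCompactSupport f := by
  refine HasCompactSupport.intro (K := Icc (-199 / 200 : ℝ) 4) isCompact_Icc fun x hx => h x ?_
  rw [mem_Icc, not_and_or, not_le, not_le] at hx
  exact hx.imp le_of_lt le_of_lt

lemma int_prod4 {f g h k : ℝ → ℝ} (hf : Continuous f) (hg : Continuous g) (hh : Continuous h)
    (hk : Continuous k) (f0 : ∀ x, x ≤ -199 / 200 ∨ 4 ≤ x → f x = 0)
    (h0 : ∀ x, x ≤ -199 / 200 ∨ 4 ≤ x → h x = 0) :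
    Integrable (fun p : ℝ × ℝ => f p.1 * g p.1 * (h p.2 * k p.2)) ∧
    ∫ p : ℝ × ℝ, f p.1 * g p.1 * (h p.2 * k p.2) = (∫ x, f x * g x) * ∫ x, h x * k x := by
  have i1 : Integrable (fun x => f x * g x) :=
    (hf.mul hg).integrable_of_hasCompactSupport (hasCompactSupport_van f0).mul_right
  have i2 : Integrable (fun x => h x * k x) :=
    (hh.mul hk).integrable_of_hasCompactSupport (hasCompactSupport_van h0).mul_right
  refine ⟨i1.mul_prod i2, ?_⟩
  exact integral_prod_mul (μ := volume) (ν := volume) (fun x => f x * g x) (fun x => h x * k x)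

lemma pd_tW (p : ℝ × ℝ) : pd1 tW p = tA' p.1 * tB p.2 + tB' p.1 * tA p.2 ∧
    pd2 tW p = tA p.1 * tB' p.2 + tB p.1 * tA' p.2 := by
  obtain ⟨x, y⟩ := p
  exact ⟨(hasDerivAt_fst contDiff_tW x y).unique
      (((hasDerivAt_tA x).mul_const (tB y)).add ((hasDerivAt_tB x).mul_const (tA y))),
    (hasDerivAt_snd contDiff_tW x y).unique
      (((hasDerivAt_tB y).const_mul (tA x)).add ((hasDerivAt_tA y).const_mul (tB x)))⟩

lemma int_Gam_tW {F : ℝ × ℝ → ℝ} (h : ∀ p, p ∉ tsupport tW → F p = 0) :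
    ∫ p in Gam, F p = ∫ p, F p :=
  setIntegral_eq_integral_of_forall_compl_eq_zero fun p hp => h p fun h' => hp (tW_Gam h')

lemma tW_mass : ∫ p in Gam, tW p ^ 2 = 2 * ((∫ x, tA x * tA x) * (∫ x, tB x * tB x) +
    (∫ x, tA x * tB x) * ∫ x, tA x * tB x) := by
  rw [int_Gam_tW fun p hp => by rw [image_eq_zero_of_notMem_tsupport hp]; ring]
  have v1 : ∀ x, x ≤ -199 / 200 ∨ 4 ≤ x → tA x = 0 := fun x hx => (tvan hx).1
  have v2 : ∀ x, x ≤ -199 / 200 ∨ 4 ≤ x → tB x = 0 := fun x hx => (tvan hx).2.2.1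
  have cA := continuous_tA
  have cB := continuous_tB
  have a1 := int_prod4 cA cA cB cB v1 v2
  have a2 := int_prod4 cB cB cA cA v2 v1
  have a3 := int_prod4 cA cB cA cB v1 v1
  have e : ∀ p : ℝ × ℝ, tW p ^ 2 = tA p.1 * tA p.1 * (tB p.2 * tB p.2) +
      tB p.1 * tB p.1 * (tA p.2 * tA p.2) + 2 * (tA p.1 * tB p.1 * (tA p.2 * tB p.2)) := by
    intro p; unfold tW; ring
  simp_rw [e]
  rw [integral_add (by exact a1.1.add a2.1) (a3.1.const_mul 2), integral_add a1.1 a2.1,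
    integral_const_mul, a1.2, a2.2, a3.2]
  ring

lemma tW_energy : ∫ p in Gam, gradSq2 tW p = 2 * ((∫ x, tA' x * tA' x) * (∫ x, tB x * tB x) +
    (∫ x, tB' x * tB' x) * (∫ x, tA x * tA x) +
    2 * ((∫ x, tA x * tB x) * ∫ x, tA' x * tB' x)) := by
  rw [int_Gam_tW fun p hp => by
    have : fderiv ℝ tW p = 0 := image_eq_zero_of_notMem_tsupport
      fun h => hp (tsupport_fderiv_subset ℝ h)
    unfold gradSq2; rw [this]; simp]
  have v1 : ∀ x, x ≤ -199 / 200 ∨ 4 ≤ x → tA x = 0 := fun x hx => (tvan hx).1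
  have v2 : ∀ x, x ≤ -199 / 200 ∨ 4 ≤ x → tB x = 0 := fun x hx => (tvan hx).2.2.1
  have v3 : ∀ x, x ≤ -199 / 200 ∨ 4 ≤ x → tA' x = 0 := fun x hx => (tvan hx).2.1
  have v4 : ∀ x, x ≤ -199 / 200 ∨ 4 ≤ x → tB' x = 0 := fun x hx => (tvan hx).2.2.2
  have cA := continuous_tA
  have cB := continuous_tB
  have cA' := continuous_tA'
  have cB' := continuous_tB'
  have a1 := int_prod4 cA' cA' cB cB v3 v2
  have a2 := int_prod4 cB' cB' cA cA v4 v1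
  have a3 := int_prod4 cA' cB' cA cB v3 v1
  have b1 := int_prod4 cB cB cA' cA' v2 v3
  have b2 := int_prod4 cA cA cB' cB' v1 v4
  have b3 := int_prod4 cA cB cA' cB' v1 v3
  have e : ∀ p : ℝ × ℝ, gradSq2 tW p = tA' p.1 * tA' p.1 * (tB p.2 * tB p.2) +
      tB' p.1 * tB' p.1 * (tA p.2 * tA p.2) + 2 * (tA' p.1 * tB' p.1 * (tA p.2 * tB p.2)) +
      tB p.1 * tB p.1 * (tA' p.2 * tA' p.2) +
      tA p.1 * tA p.1 * (tB' p.2 * tB' p.2) + 2 * (tA p.1 * tB p.1 * (tA' p.2 * tB' p.2)) := by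
    intro p; rw [gradSq2_eq, (pd_tW p).1, (pd_tW p).2]; ring
  simp_rw [e]
  have j2 := a1.1.add a2.1
  have j3 := j2.add (a3.1.const_mul 2)
  have j4 := j3.add b1.1
  have j5 := j4.add b2.1
  rw [integral_add (by exact j5) (b3.1.const_mul 2), integral_add (by exact j4) b2.1,
    integral_add (by exact j3) b1.1, integral_add (by exact j2) (a3.1.const_mul 2),
    integral_add a1.1 a2.1,
    integral_const_mul, integral_const_mul, a1.2, a2.2, a3.2, b1.2, b2.2, b3.2]
  ring

/-- The Rayleigh quotient of the trial function `tW` does not exceed `9.869 < π²`. -/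
lemma lamG_lt : lamG < π ^ 2 := by
  have h := lamG_le contDiff_tW tW_compact tW_Gam
  rw [tW_mass, tW_energy, tD, tN, tbeta, tbeta', tp, tq] at h
  have hpi : (9.869 : ℝ) < π ^ 2 := by nlinarith [Real.pi_gt_d4]
  norm_num at h hpi
  linarith

lemma tW_mass_ne : ∫ p in Gam, tW p ^ 2 ≠ 0 := by
  rw [tW_mass, tN, tbeta, tp]; norm_num

/-! ### Comparison of the finite and the infinite guide -/

/-- The integral over the guide of a function supported in a bounded set. -/
lemma int_Gam_eq {K : Set (ℝ × ℝ)} (hK : IsCompact K) (r : ℝ) : ∃ R, r ≤ R ∧ 0 < R ∧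
    ∀ F : ℝ × ℝ → ℝ, (∀ p, p ∉ K → F p = 0) → ∫ p in Gam, F p = ∫ p in GamR R, F p := by
  obtain ⟨B, hB⟩ := hK.isBounded.exists_norm_le
  refine ⟨max (max r 1) (B + 1), (le_max_left _ _).trans (le_max_left _ _), ?_, fun F hF => ?_⟩
  · have : (1 : ℝ) ≤ max (max r 1) (B + 1) := (le_max_right _ _).trans (le_max_left _ _)
    linarith
  · refine (setIntegral_eq_of_subset_of_forall_sdiff_eq_zero isOpen_Gam.measurableSet
      inter_subset_left fun p hp => hF p fun hpK => hp.2 ⟨hp.1, ?_⟩)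
    have h1 := hB p hpK
    have h2 : |p.1| ≤ B := (norm_fst_le p).trans h1
    have h3 : |p.2| ≤ B := (norm_snd_le p).trans h1
    have h4 : B + 1 ≤ max (max r 1) (B + 1) := le_max_right _ _
    have h5 := abs_add_le p.1 1
    have h6 := abs_add_le p.2 1
    rw [abs_one] at h5 h6
    exact ⟨by linarith, by linarith⟩

lemma AdmR_of_tsupport {R : ℝ} {W : ℝ × ℝ → ℝ} (hW : ContDiff ℝ 1 W) (hs : tsupport W ⊆ Gam)
    (hR : 0 < R) : AdmR R W :=
  ⟨hW, fun _ hp => image_eq_zero_of_notMem_tsupport fun h =>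
    DirB_disjoint_Gam hR hp (hs h)⟩

lemma gradSq2_eq_zero {W : ℝ × ℝ → ℝ} {p : ℝ × ℝ} (hp : p ∉ tsupport W) : gradSq2 W p = 0 := by
  have : fderiv ℝ W p = 0 := image_eq_zero_of_notMem_tsupport
    fun h => hp (tsupport_fderiv_subset ℝ h)
  unfold gradSq2; rw [this]; simp

/-- Neumann bracketing: the arms contribute at least `π²`. -/
lemma le_lamG {μ r : ℝ} (hμ : μ ≤ π ^ 2) (hr : 0 ≤ r)
    (h : ∀ W, ContDiff ℝ 1 W → tsupport W ⊆ Gam →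
      μ * ∫ p in GamR r, W p ^ 2 ≤ ∫ p in GamR r, gradSq2 W p) : μ ≤ lamG := by
  refine le_csInf ⟨_, tW, contDiff_tW, tW_compact, tW_Gam, tW_mass_ne, rfl⟩ ?_
  rintro _ ⟨W, hW, hc, hs, hne, rfl⟩
  have hpos : 0 < ∫ p in Gam, W p ^ 2 := lt_of_le_of_ne (int_sq_nonneg _ _) (Ne.symm hne)
  rw [le_div_iff₀ hpos]
  obtain ⟨R, hrR, hR, hF⟩ := int_Gam_eq hc r
  rw [hF _ fun p hp => by rw [image_eq_zero_of_notMem_tsupport hp]; ring,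
    hF _ fun p hp => gradSq2_eq_zero hp]
  have h1 := poincare_arms hR (AdmR_of_tsupport hW hs hR) hr hrR
  have h2 := h W hW hs
  have h3 : ∫ p in GamR r, W p ^ 2 ≤ ∫ p in GamR R, W p ^ 2 := by
    have hc : Continuous fun p => W p ^ 2 := hW.continuous.pow 2
    refine setIntegral_mono_set (integrableOn_GamR hR.le hc.continuousOn)
      (Eventually.of_forall fun p => sq_nonneg _) (LE.le.eventuallyLE ?_)
    intro p hp
    rw [mem_GamR hr] at hp
    rw [mem_GamR hR.le]
    exact ⟨hp.1, hp.2.1, hp.2.2.1.trans_le hrR, hp.2.2.2.1.trans_le hrR, hp.2.2.2.2⟩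
  nlinarith

/-- Domain monotonicity by Neumann bracketing; the arms beyond `Γ_R` do not lower the infimum because
`lamG < π²`. -/
lemma lamR_le_lamG {R : ℝ} (hR : 0 < R) : lamR R ≤ lamG := by
  have h := le_lamG (μ := min (lamR R) (π ^ 2)) (min_le_right _ _) hR.le fun W hW hs =>
    (mul_le_mul_of_nonneg_right (min_le_left _ _) (int_sq_nonneg _ _)).trans
      (lamR_le (AdmR_of_tsupport hW hs hR))
  rcases min_le_iff.1 h with h | h
  · exact h
  · exact absurd h (not_le.2 lamG_lt)

lemma lamR_lt {R : ℝ} (hR : 0 < R) : lamR R < π ^ 2 := (lamR_le_lamG hR).trans_lt lamG_lt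

lemma sq_le_of_vanish {g g' : ℝ → ℝ} (hg : ∀ x, HasDerivAt g (g' x) x) (hc : Continuous g')
    (h0 : g (-1) = 0) : ∫ x in (-1 : ℝ)..0, g x ^ 2 ≤ ∫ x in (-1 : ℝ)..0, g' x ^ 2 := by
  have hgc : Continuous g := continuous_iff_continuousAt.2 fun x => (hg x).continuousAt
  set D := ∫ x in (-1 : ℝ)..0, g' x ^ 2 with hD
  have key : ∀ x ∈ Icc (-1 : ℝ) 0, g x ^ 2 ≤ D := by
    intro x hx
    have e1 : ∫ y in (-1 : ℝ)..x, g' y = g x := by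
      rw [intervalIntegral.integral_eq_sub_of_hasDerivAt (fun y _ => hg y)
        (hc.intervalIntegrable _ _), h0, sub_zero]
    set m := g x with hm
    have h1 : 0 ≤ ∫ y in (-1 : ℝ)..x, (g' y - m) ^ 2 :=
      intervalIntegral.integral_nonneg hx.1 fun y _ => sq_nonneg _
    have e2 : ∫ y in (-1 : ℝ)..x, (g' y - m) ^ 2 =
        (∫ y in (-1 : ℝ)..x, g' y ^ 2) - 2 * m * m + (x + 1) * m ^ 2 := by
      have : ∀ y, (g' y - m) ^ 2 = g' y ^ 2 - 2 * m * g' y + m ^ 2 := fun y => by ring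
      simp_rw [this]
      rw [intervalIntegral.integral_add (Continuous.intervalIntegrable (by fun_prop) _ _)
        (Continuous.intervalIntegrable (by fun_prop) _ _),
        intervalIntegral.integral_sub (Continuous.intervalIntegrable (by fun_prop) _ _)
        (Continuous.intervalIntegrable (by fun_prop) _ _), intervalIntegral.integral_const_mul, e1]
      simp
    have h2 : ∫ y in (-1 : ℝ)..x, g' y ^ 2 ≤ D := by
      rw [hD, ← intervalIntegral.integral_add_adjacent_intervals (a := -1) (b := x) (c := 0)
        (Continuous.intervalIntegrable (by fun_prop) _ _)
        (Continuous.intervalIntegrable (by fun_prop) _ _)]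
      have : 0 ≤ ∫ y in x..(0 : ℝ), g' y ^ 2 :=
        intervalIntegral.integral_nonneg hx.2 fun y _ => sq_nonneg (g' y)
      linarith
    nlinarith [mul_nonneg (sub_nonneg.2 hx.2) (sq_nonneg m)]
  calc ∫ x in (-1 : ℝ)..0, g x ^ 2 ≤ ∫ x in (-1 : ℝ)..0, D :=
        ii_mono (by fun_prop) (by fun_prop) (by norm_num) key
    _ = D := by simp

lemma one_le_lamG : 1 ≤ lamG := by
  refine le_lamG (r := 0) (by nlinarith [Real.pi_gt_three]) le_rfl fun W hW hs => ?_
  have hWc := hW.continuous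
  have c1 := continuous_pd1 hW
  have c2 : Continuous fun p => W p ^ 2 := by fun_prop
  have c3 : Continuous fun p => pd1 W p ^ 2 := by fun_prop
  have h1 : ∫ p in GamR 0, pd1 W p ^ 2 ≤ ∫ p in GamR 0, gradSq2 W p :=
    setIntegral_mono (integrableOn_GamR le_rfl c3.continuousOn)
      (integrableOn_GamR le_rfl (continuous_gradSq2 hW).continuousOn) fun p => by
        rw [gradSq2_eq]; nlinarith [sq_nonneg (pd2 W p)]
  refine le_trans ?_ h1
  rw [one_mul, integral_GamR_zero c2, integral_GamR_zero c3, ii_swap c2, ii_swap c3]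
  refine ii_mono (cont_slice' c2 _ _) (cont_slice' c3 _ _) (by norm_num) fun y _ => ?_
  refine sq_le_of_vanish (fun x => hasDerivAt_fst hW x y) (by fun_prop) ?_
  exact image_eq_zero_of_notMem_tsupport fun h => not_mem_Gam_left y (hs h)

lemma omega_sq : omega ^ 2 = π ^ 2 - lamG := Real.sq_sqrt (by linarith [lamG_lt])
lemma omega_pos : 0 < omega := Real.sqrt_pos.2 (by linarith [lamG_lt])

/-! ### Decay of the eigenfunctions along the arms -/

/-- A `C¹` step from `0` (for `x ≤ 0`) to `1` (for `x ≥ 1`). -/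
def stp (x : ℝ) : ℝ := 2 * (max x 0) ^ 2 - 4 * (max (x - 1 / 2) 0) ^ 2 + 2 * (max (x - 1) 0) ^ 2

/-- The derivative of `stp`. -/
def stp' (x : ℝ) : ℝ := 4 * (max x 0) - 8 * (max (x - 1 / 2) 0) + 4 * (max (x - 1) 0)

lemma hasDerivAt_stp (x : ℝ) : HasDerivAt stp (stp' x) x := by
  have h := (((hasDerivAt_posSq x).const_mul 2).sub
    (((hasDerivAt_posSq (x - 1 / 2)).comp_sub_const x (1 / 2)).const_mul 4)).add
    (((hasDerivAt_posSq (x - 1)).comp_sub_const x 1).const_mul 2)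
  refine HasDerivAt.congr_deriv (by exact h) ?_
  simp only [stp']; ring

@[fun_prop] lemma continuous_stp' : Continuous stp' := by unfold stp'; fun_prop
@[fun_prop] lemma continuous_stp : Continuous stp := by unfold stp; fun_prop

lemma stp_facts (x : ℝ) : 0 ≤ stp x ∧ stp x ≤ 1 ∧ 0 ≤ stp' x ∧ stp' x ≤ 2 ∧
    (x ≤ 0 → stp x = 0 ∧ stp' x = 0) ∧ (1 ≤ x → stp x = 1 ∧ stp' x = 0) := by
  unfold stp stp'
  rcases le_total x 0 with h | h
  · rw [max_eq_right h, max_eq_right (by linarith : x - 1 / 2 ≤ 0),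
      max_eq_right (by linarith : x - 1 ≤ 0)]
    norm_num; linarith
  rcases le_total x (1 / 2) with h2 | h2
  · rw [max_eq_left h, max_eq_right (by linarith : x - 1 / 2 ≤ 0),
      max_eq_right (by linarith : x - 1 ≤ 0)]
    refine ⟨by nlinarith, by nlinarith, by nlinarith, by nlinarith, fun h3 => ?_, fun h3 => by linarith⟩
    have : x = 0 := le_antisymm h3 h
    subst this; norm_num
  rcases le_total x 1 with h3 | h3
  · rw [max_eq_left h, max_eq_left (by linarith : 0 ≤ x - 1 / 2),
      max_eq_right (by linarith : x - 1 ≤ 0)]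
    refine ⟨by nlinarith, by nlinarith, by nlinarith, by nlinarith, fun h3 => by linarith, fun h4 => ?_⟩
    have : x = 1 := le_antisymm h3 h4
    subst this; norm_num
  · rw [max_eq_left h, max_eq_left (by linarith : 0 ≤ x - 1 / 2),
      max_eq_left (by linarith : 0 ≤ x - 1)]
    refine ⟨by nlinarith, by nlinarith, by nlinarith, by nlinarith, fun h3 => by linarith, fun h4 => ?_⟩
    constructor <;> ring

lemma contDiff_sum {g g' : ℝ → ℝ} (h : ∀ x, HasDerivAt g (g' x) x) (hc : Continuous g') :
    ContDiff ℝ 1 (fun p : ℝ × ℝ => g p.1 + g p.2) := by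
  have := contDiff_of_hasDerivAt h hc
  fun_prop

lemma pd_sum {g g' : ℝ → ℝ} (h : ∀ x, HasDerivAt g (g' x) x) (hc : Continuous g')
    (p : ℝ × ℝ) : pd1 (fun p : ℝ × ℝ => g p.1 + g p.2) p = g' p.1 ∧
      pd2 (fun p : ℝ × ℝ => g p.1 + g p.2) p = g' p.2 := by
  obtain ⟨x, y⟩ := p
  exact ⟨(hasDerivAt_fst (contDiff_sum h hc) x y).unique ((h x).add_const (g y)),
    (hasDerivAt_snd (contDiff_sum h hc) x y).unique ((h y).const_add (g x))⟩

/-- The exponential weight `e^{3ω(x₁-R)} + e^{3ω(x₂-R)}`, concentrated at the ends of `Γ_R`. -/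
def Yw (R : ℝ) (p : ℝ × ℝ) : ℝ := exp (3 * omega * (p.1 - R)) + exp (3 * omega * (p.2 - R))

@[fun_prop] lemma continuous_Yw (R : ℝ) : Continuous (Yw R) := by unfold Yw; fun_prop

lemma Yw_nonneg (R : ℝ) (p : ℝ × ℝ) : 0 ≤ Yw R p := by unfold Yw; positivity

/-- The Agmon profile `y - y²/2` with `y = e^{ω(x-R)}`, cut off at the corner.  The correction `y²/2`
makes the derivative vanish at the end `x = R` and leaves a positive remainder in the IMS formula. -/
def agm (R x : ℝ) : ℝ := stp x * (exp (omega * (x - R)) - exp (omega * (x - R)) ^ 2 / 2)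

/-- The derivative of `agm`. -/
def agm' (R x : ℝ) : ℝ := stp' x * (exp (omega * (x - R)) - exp (omega * (x - R)) ^ 2 / 2) +
  stp x * (omega * (exp (omega * (x - R)) - exp (omega * (x - R)) ^ 2))

lemma hasDerivAt_agm (R x : ℝ) : HasDerivAt (agm R) (agm' R x) x := by
  have h1 : HasDerivAt (fun x => exp (omega * (x - R))) (exp (omega * (x - R)) * (omega * 1)) x :=
    (((hasDerivAt_id x).sub_const R).const_mul omega).exp
  have h := (hasDerivAt_stp x).mul (h1.sub ((h1.pow 2).div_const 2))
  refine HasDerivAt.congr_deriv (by exact h) ?_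
  simp only [agm', Pi.sub_apply, Pi.pow_apply]; push_cast; ring

@[fun_prop] lemma continuous_agm' (R : ℝ) : Continuous (agm' R) := by unfold agm'; fun_prop

/-- Away from the corner `ω² agm² - agm'² = ω² (y³ - ¾ y⁴)` with `y = e^{ω(x-R)} ≤ 1`: the quadratic
correction in the profile makes this comparable to `y³`. -/
lemma agm_pointwise {R x : ℝ} (hx : x ≤ R) :
    0 ≤ agm R x ∧ omega ^ 2 / 4 * exp (3 * omega * (x - R)) ≤ omega ^ 2 * agm R x ^ 2 - agm' R x ^ 2 +
      (omega ^ 2 / 4 + (2 + omega) ^ 2) * exp (2 * omega * (1 - R)) := by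
  have hω := omega_pos
  obtain ⟨s0, s1, d0, d2, hz, ho⟩ := stp_facts x
  set y := exp (omega * (x - R)) with hy
  have y0 : 0 < y := exp_pos _
  have y1 : y ≤ 1 := exp_le_one_iff.2 (mul_nonpos_of_nonneg_of_nonpos hω.le (by linarith))
  have e3 : exp (3 * omega * (x - R)) = y ^ 3 := by
    rw [hy, ← exp_nat_mul]; congr 1; push_cast; ring
  have hE0 : 0 < exp (2 * omega * (1 - R)) := exp_pos _
  rw [e3]
  refine ⟨mul_nonneg s0 (by nlinarith), ?_⟩
  rcases le_total 1 x with h | h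
  · have e := ho h
    have : omega ^ 2 * agm R x ^ 2 - agm' R x ^ 2 = omega ^ 2 * (y ^ 3 - 3 / 4 * y ^ 4) := by
      unfold agm agm'; rw [e.1, e.2, ← hy]; ring
    rw [this]
    have : 0 ≤ omega ^ 2 * (y ^ 3 * (1 - y)) :=
      mul_nonneg (sq_nonneg _) (mul_nonneg (by positivity) (by linarith))
    have : 0 ≤ (omega ^ 2 / 4 + (2 + omega) ^ 2) * exp (2 * omega * (1 - R)) := by positivity
    nlinarith
  · have hyE : y ^ 2 ≤ exp (2 * omega * (1 - R)) := by
      rw [hy, ← exp_nat_mul]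
      apply exp_le_exp.2; push_cast; nlinarith
    have h3 : y ^ 3 ≤ y ^ 2 := by nlinarith [sq_nonneg y]
    have hg : |agm' R x| ≤ (2 + omega) * y := by
      unfold agm'
      rw [← hy, abs_le]
      have a1 : 0 ≤ y - y ^ 2 / 2 := by nlinarith
      have a2 : 0 ≤ y - y ^ 2 := by nlinarith
      have b1 : stp' x * (y - y ^ 2 / 2) ≤ 2 * y := mul_le_mul d2 (by nlinarith) a1 (by norm_num)
      have b2 : stp x * (omega * (y - y ^ 2)) ≤ 1 * (omega * y) :=
        mul_le_mul s1 (mul_le_mul_of_nonneg_left (by nlinarith) hω.le) (by positivity) (by norm_num)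
      have b3 : 0 ≤ stp' x * (y - y ^ 2 / 2) := mul_nonneg d0 a1
      have b4 : 0 ≤ stp x * (omega * (y - y ^ 2)) := by positivity
      constructor <;> nlinarith
    have hg2 : agm' R x ^ 2 ≤ (2 + omega) ^ 2 * y ^ 2 := by
      rw [← mul_pow, ← sq_abs]; exact pow_le_pow_left₀ (abs_nonneg _) hg 2
    have := mul_le_mul_of_nonneg_left hyE (by positivity : 0 ≤ omega ^ 2 / 4 + (2 + omega) ^ 2)
    have := mul_le_mul_of_nonneg_left h3 (by positivity : 0 ≤ omega ^ 2 / 4)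
    nlinarith [sq_nonneg (omega * agm R x)]

/-- Poincaré in the arms for functions vanishing on the corner square. -/
lemma arms_of_vanish {R : ℝ} (hR : 0 < R) {W : ℝ × ℝ → ℝ} (hW : AdmR R W)
    (h0 : ∀ p ∈ GamR 0, W p = 0) : π ^ 2 * (∫ p in GamR R, W p ^ 2) ≤ ∫ p in GamR R, gradSq2 W p := by
  have h := poincare_arms hR hW le_rfl hR.le
  have e : ∫ p in GamR 0, W p ^ 2 = 0 :=
    setIntegral_eq_zero_of_forall_eq_zero fun p hp => by rw [h0 p hp]; ring
  rw [e] at h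
  linarith [int_gradSq2_nonneg (GamR 0) W]

/-- Agmon estimate: the eigenfunction mass near the ends is `O(e^{-2ωR})`. -/
lemma agmon : ∃ C, 0 ≤ C ∧ ∀ R v, 1 ≤ R → IsFirstEF R v →
    ∫ p in GamR R, Yw R p * v p ^ 2 ≤ C * exp (-2 * omega * R) := by
  have hω := omega_pos
  set K := omega ^ 2 / 4 + (2 + omega) ^ 2 with hK
  refine ⟨4 / omega ^ 2 * (2 * K * exp (2 * omega)), by positivity, fun R v hR hv => ?_⟩
  have hR0 : 0 < R := by linarith
  obtain ⟨V, h, -⟩ := exists_AGS hR0 hv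
  have hn : ∫ p in GamR R, v p ^ 2 = 1 := hv.2.2.2.2.2.2.2
  set G : ℝ × ℝ → ℝ := fun p => agm R p.1 + agm R p.2 with hG
  have hGd : ContDiff ℝ 1 G := contDiff_sum (hasDerivAt_agm R) (continuous_agm' R)
  have hGc := hGd.continuous
  have hp := pd_sum (hasDerivAt_agm R) (continuous_agm' R)
  have c1 := continuous_pd1 hGd
  have c2 := continuous_pd2 hGd
  have t1 := h.ims hGd
  have t2 := (h.tendsto_sq (H := fun p => G p ^ 2) (by fun_prop)).const_mul (π ^ 2)
  have key := le_of_tendsto_of_tendsto' t2 t1 fun n => by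
    rw [aI_one]
    have := arms_of_vanish hR0 ((h.adm n).mul_left hGd) fun p hp0 => by
      rw [mem_GamR le_rfl] at hp0
      simp only [hG, agm, ((stp_facts p.1).2.2.2.2.1 hp0.2.2.1.le).1,
        ((stp_facts p.2).2.2.2.2.1 hp0.2.2.2.1.le).1]; ring
    simpa only [mul_pow] using this
  simp only [one_mul] at key
  have i1 : IntegrableOn (fun p => G p ^ 2 * v p ^ 2) (GamR R) :=
    integrableOn_GamR hR0.le ((hGc.pow 2).continuousOn.mul (h.vc.pow 2))
  have i2 : IntegrableOn (fun p => (pd1 G p ^ 2 + pd2 G p ^ 2) * v p ^ 2) (GamR R) :=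
    integrableOn_GamR hR0.le (((c1.pow 2).add (c2.pow 2)).continuousOn.mul (h.vc.pow 2))
  have i3 : IntegrableOn (fun p => Yw R p * v p ^ 2) (GamR R) :=
    integrableOn_GamR hR0.le ((continuous_Yw R).continuousOn.mul (h.vc.pow 2))
  have i4 : IntegrableOn (fun p => v p ^ 2) (GamR R) := integrableOn_GamR hR0.le (h.vc.pow 2)
  have hle : omega ^ 2 * (∫ p in GamR R, G p ^ 2 * v p ^ 2) ≤
      ∫ p in GamR R, (pd1 G p ^ 2 + pd2 G p ^ 2) * v p ^ 2 := by
    have : 0 ≤ ∫ p in GamR R, G p ^ 2 * v p ^ 2 := integral_nonneg fun p => by positivity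
    rw [omega_sq]; nlinarith [lamR_le_lamG hR0]
  have main : omega ^ 2 / 4 * (∫ p in GamR R, Yw R p * v p ^ 2) ≤
      omega ^ 2 * (∫ p in GamR R, G p ^ 2 * v p ^ 2) -
      (∫ p in GamR R, (pd1 G p ^ 2 + pd2 G p ^ 2) * v p ^ 2) +
      2 * K * exp (2 * omega * (1 - R)) * ∫ p in GamR R, v p ^ 2 := by
    rw [← integral_const_mul, ← integral_const_mul, ← integral_const_mul,
      ← integral_sub (i1.const_mul _) i2, ← integral_add _ (i4.const_mul _)]
    · refine setIntegral_mono_on (i3.const_mul _) (((i1.const_mul _).sub i2).add (i4.const_mul _))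
        (measurableSet_GamR R) fun p hpR => ?_
      rw [mem_GamR hR0.le] at hpR
      obtain ⟨a0, a1⟩ := agm_pointwise hpR.2.2.1.le
      obtain ⟨b0, b1⟩ := agm_pointwise hpR.2.2.2.1.le
      have e : omega ^ 2 / 4 * Yw R p ≤ omega ^ 2 * G p ^ 2 - (pd1 G p ^ 2 + pd2 G p ^ 2) +
          2 * K * exp (2 * omega * (1 - R)) := by
        rw [(hp p).1, (hp p).2]
        simp only [hG, Yw, hK]
        nlinarith [mul_nonneg (sq_nonneg omega) (mul_nonneg a0 b0)]
      have := mul_le_mul_of_nonneg_right e (sq_nonneg (v p))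
      linarith
    · exact (i1.const_mul _).sub i2
  rw [hn] at main
  have e : exp (2 * omega * (1 - R)) = exp (2 * omega) * exp (-2 * omega * R) := by
    rw [← exp_add]; congr 1; ring
  rw [e] at main
  have h4 : 4 / omega ^ 2 * (omega ^ 2 / 4 * (∫ p in GamR R, Yw R p * v p ^ 2)) =
    ∫ p in GamR R, Yw R p * v p ^ 2 := by field_simp
  rw [← h4]
  have : omega ^ 2 / 4 * (∫ p in GamR R, Yw R p * v p ^ 2) ≤
    2 * K * exp (2 * omega) * exp (-2 * omega * R) := by linarith
  calc _ ≤ 4 / omega ^ 2 * (2 * K * exp (2 * omega) * exp (-2 * omega * R)) :=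
        mul_le_mul_of_nonneg_left this (by positivity)
    _ = _ := by ring

/-! ### Exponentially small quantities at the ends -/

/-- Cutoff equal to `1` on the parts of the arms at distance at most `2` from the ends of `Γ_R`
and to `0` at distance at least `3`. -/
def endc (R : ℝ) (p : ℝ × ℝ) : ℝ := stp (p.1 - R + 3) + stp (p.2 - R + 3)

lemma hasDerivAt_stp_shift (R x : ℝ) :
    HasDerivAt (fun x => stp (x - R + 3)) (stp' (x - R + 3)) x := by
  have h1 : HasDerivAt (fun x : ℝ => x - R + 3) 1 x := ((hasDerivAt_id x).sub_const R).add_const 3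
  refine HasDerivAt.congr_deriv (by exact (hasDerivAt_stp (x - R + 3)).comp x h1) ?_
  ring

lemma contDiff_endc (R : ℝ) : ContDiff ℝ 1 (endc R) :=
  contDiff_sum (hasDerivAt_stp_shift R) (by fun_prop)

@[fun_prop] lemma continuous_endc (R : ℝ) : Continuous (endc R) := (contDiff_endc R).continuous

lemma pd_endc (R : ℝ) (p : ℝ × ℝ) :
    pd1 (endc R) p = stp' (p.1 - R + 3) ∧ pd2 (endc R) p = stp' (p.2 - R + 3) :=
  pd_sum (hasDerivAt_stp_shift R) (by fun_prop) p

lemma endc_nonneg (R : ℝ) (p : ℝ × ℝ) : 0 ≤ endc R p :=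
  add_nonneg (stp_facts _).1 (stp_facts _).1

/-- Common constant in the comparison of the end cutoff with the weight `Yw`. -/
def K9 : ℝ := 4 * exp (9 * omega)

lemma K9_pos : 0 < K9 := by unfold K9; positivity

lemma stp_shift_le (R x : ℝ) : stp (x - R + 3) ≤ exp (9 * omega) * exp (3 * omega * (x - R)) ∧
    stp' (x - R + 3) ≤ 2 * (exp (9 * omega) * exp (3 * omega * (x - R))) ∧
    stp' (x - R + 3) ^ 2 ≤ 4 * (exp (9 * omega) * exp (3 * omega * (x - R))) := by
  obtain ⟨s0, s1, d0, d2, hz, -⟩ := stp_facts (x - R + 3)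
  rw [← exp_add]
  rcases le_total (x - R + 3) 0 with h | h
  · rw [(hz h).1, (hz h).2]
    refine ⟨by positivity, by positivity, by rw [zero_pow two_ne_zero]; positivity⟩
  · have : 1 ≤ exp (9 * omega + 3 * omega * (x - R)) := by
      apply one_le_exp; nlinarith [omega_pos]
    refine ⟨by linarith, by linarith, by nlinarith⟩

lemma endc_le (R : ℝ) (p : ℝ × ℝ) : endc R p ≤ K9 * Yw R p ∧ endc R p ^ 2 ≤ K9 * Yw R p ∧
    pd1 (endc R) p ^ 2 + pd2 (endc R) p ^ 2 ≤ K9 * Yw R p := by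
  obtain ⟨a1, a2, a3⟩ := stp_shift_le R p.1
  obtain ⟨b1, b2, b3⟩ := stp_shift_le R p.2
  obtain ⟨s0, s1, -⟩ := stp_facts (p.1 - R + 3)
  obtain ⟨t0, t1, -⟩ := stp_facts (p.2 - R + 3)
  rw [(pd_endc R p).1, (pd_endc R p).2]
  unfold endc K9 Yw
  refine ⟨by nlinarith, by nlinarith, by linarith⟩

/-- A constant in the Agmon estimate. -/
def CA : ℝ := agmon.choose

lemma CA_nonneg : 0 ≤ CA := agmon.choose_spec.1

lemma agmon_weight {R K : ℝ} {v H : ℝ × ℝ → ℝ} (hR : 1 ≤ R) (hv : IsFirstEF R v) (hK : 0 ≤ K)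
    (hH : ContinuousOn H (closure (GamR R))) (h : ∀ p ∈ GamR R, H p ≤ K * Yw R p) :
    ∫ p in GamR R, H p * v p ^ 2 ≤ K * CA * exp (-2 * omega * R) := by
  have hR0 : 0 ≤ R := by linarith
  have vc : ContinuousOn v (closure (GamR R)) := hv.2.1
  have h1 : ∫ p in GamR R, H p * v p ^ 2 ≤ ∫ p in GamR R, K * (Yw R p * v p ^ 2) := by
    refine setIntegral_mono_on (integrableOn_GamR hR0 (hH.mul (vc.pow 2)))
      (integrableOn_GamR hR0 (((continuous_Yw R).continuousOn.mul (vc.pow 2)).const_smul K))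
      (measurableSet_GamR R) fun p hp => ?_
    have := mul_le_mul_of_nonneg_right (h p hp) (sq_nonneg (v p))
    linarith
  rw [integral_const_mul] at h1
  have h2 := mul_le_mul_of_nonneg_left (agmon.choose_spec.2 R v hR hv) hK
  calc _ ≤ _ := h1
    _ ≤ _ := h2
    _ = _ := by unfold CA; ring

/-- On the guide, `endc` is identically `1` beyond distance `R - 2` along the arms. -/
lemma endc_eq_one {R : ℝ} (hR : 3 ≤ R) {p : ℝ × ℝ} (hp : p ∈ Gam) (h : R - 2 ≤ p.1 ∨ R - 2 ≤ p.2) :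
    endc R p = 1 := by
  have hm := hp.2
  rw [min_lt_iff] at hm
  have key : ∀ x y : ℝ, R - 2 ≤ x → y < 0 → stp (x - R + 3) = 1 ∧ stp (y - R + 3) = 0 :=
    fun x y hx hy => ⟨((stp_facts _).2.2.2.2.2 (by linarith)).1,
      ((stp_facts _).2.2.2.2.1 (by linarith)).1⟩
  unfold endc
  rcases h with h | h
  · have hy : p.2 < 0 := by rcases hm with h' | h' <;> linarith
    rw [(key _ _ h hy).1, (key _ _ h hy).2, add_zero]
  · have hy : p.1 < 0 := by rcases hm with h' | h' <;> linarith
    rw [(key _ _ h hy).1, (key _ _ h hy).2, zero_add]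

/-- The first eigenvalues of the finite guides converge exponentially fast. -/
lemma lamG_sub_lamR {R : ℝ} {v : ℝ × ℝ → ℝ} (hR : 3 ≤ R) (hv : IsFirstEF R v) :
    lamG - lamR R ≤ (1 + 2 * π ^ 2) * K9 * CA * exp (-2 * omega * R) := by
  have hR0 : 0 < R := by linarith
  obtain ⟨V, h, hV⟩ := exists_AGS hR0 hv
  have hn : ∫ p in GamR R, v p ^ 2 = 1 := hv.2.2.2.2.2.2.2
  set G : ℝ × ℝ → ℝ := fun p => 1 + (-1) * endc R p with hG
  have hGd : ContDiff ℝ 1 G := contDiff_const.add (contDiff_const.mul (contDiff_endc R))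
  have hGc := hGd.continuous
  have c1 := continuous_pd1 (contDiff_endc R)
  have c2 := continuous_pd2 (contDiff_endc R)
  have hp1 : ∀ p, pd1 G p = - pd1 (endc R) p := fun p => by
    have := pd1_add_smul (W := fun _ => 1) contDiff_const (contDiff_endc R) (-1) p
    rw [hG, this]; simp [pd1]
  have hp2 : ∀ p, pd2 G p = - pd2 (endc R) p := fun p => by
    have := pd2_add_smul (W := fun _ => 1) contDiff_const (contDiff_endc R) (-1) p
    rw [hG, this]; simp [pd2]
  have t1 := h.ims hGd
  have t2 := (h.tendsto_sq (H := fun p => G p ^ 2) (by fun_prop)).const_mul lamG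
  have key := le_of_tendsto_of_tendsto' t2 t1 fun n => by
    rw [aI_one]
    have hsub : tsupport (fun p => G p * V n p) ⊆ tsupport (V n) := tsupport_mul_subset_right
    have hcs : HasCompactSupport (fun p => G p * V n p) :=
      (hV n).1.of_isClosed_subset (isClosed_tsupport _) hsub
    have := lamG_le (hGd.mul (h.adm n).1) hcs (hsub.trans (hV n).2)
    have hz : ∀ p ∈ Gam, p ∉ GamR R → ∀ᶠ q in 𝓝 p, G q * V n q = 0 := by
      intro p hp hpR
      have h3 : R ≤ p.1 ∨ R ≤ p.2 := by
        by_contra hcon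
        push Not at hcon
        apply hpR
        rw [mem_GamR hR0.le]
        have h1 := lt_min_iff.1 hp.1
        have h2 := min_lt_iff.1 hp.2
        exact ⟨h1.1, h1.2, hcon.1, hcon.2, h2⟩
      have h4 : ∀ᶠ q : ℝ × ℝ in 𝓝 p, R - 2 ≤ q.1 ∨ R - 2 ≤ q.2 := by
        rcases h3 with h3 | h3
        · exact (continuous_fst.continuousAt.eventually
            (lt_mem_nhds (show R - 2 < p.1 by linarith))).mono fun q hq => Or.inl (le_of_lt hq)
        · exact (continuous_snd.continuousAt.eventually
            (lt_mem_nhds (show R - 2 < p.2 by linarith))).mono fun q hq => Or.inr (le_of_lt hq)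
      filter_upwards [h4, isOpen_Gam.mem_nhds hp] with q hq hqG
      simp only [hG, endc_eq_one hR hqG hq]; ring
    have e1 : ∫ p in GamR R, (G p * V n p) ^ 2 = ∫ p in Gam, (G p * V n p) ^ 2 :=
      (setIntegral_eq_of_subset_of_forall_sdiff_eq_zero isOpen_Gam.measurableSet
        inter_subset_left fun p hp => by
          rw [(hz p hp.1 hp.2).self_of_nhds]; ring).symm
    have e2 : ∫ p in GamR R, gradSq2 (fun p => G p * V n p) p =
        ∫ p in Gam, gradSq2 (fun p => G p * V n p) p :=
      (setIntegral_eq_of_subset_of_forall_sdiff_eq_zero isOpen_Gam.measurableSet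
        inter_subset_left fun p hp => gradSq2_eq_zero fun hcl => by
          rw [tsupport, mem_closure_iff_frequently] at hcl
          exact hcl ((hz p hp.1 hp.2).mono fun q hq hq2 => hq2 hq)).symm
    rw [e2]
    rw [← e1] at this
    simpa only [mul_pow] using this
  simp only [one_mul, hp1, hp2, neg_sq] at key
  have i1 : IntegrableOn (fun p => G p ^ 2 * v p ^ 2) (GamR R) :=
    integrableOn_GamR hR0.le ((hGc.pow 2).continuousOn.mul (h.vc.pow 2))
  have i3 : IntegrableOn (fun p => endc R p * v p ^ 2) (GamR R) :=
    integrableOn_GamR hR0.le ((continuous_endc R).continuousOn.mul (h.vc.pow 2))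
  have i4 : IntegrableOn (fun p => v p ^ 2) (GamR R) := integrableOn_GamR hR0.le (h.vc.pow 2)
  have m1 := agmon_weight (R := R) (by linarith) hv K9_pos.le
    ((c1.pow 2).add (c2.pow 2)).continuousOn (fun p _ => (endc_le R p).2.2)
  have m2 := agmon_weight (R := R) (by linarith) hv K9_pos.le
    (continuous_endc R).continuousOn (fun p _ => (endc_le R p).1)
  have m3 : 1 - 2 * (∫ p in GamR R, endc R p * v p ^ 2) ≤ ∫ p in GamR R, G p ^ 2 * v p ^ 2 := by
    rw [← hn, ← integral_const_mul, ← integral_sub i4 (i3.const_mul _)]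
    refine integral_mono (i4.sub (i3.const_mul _)) i1 fun p => ?_
    simp only [hG]
    nlinarith [mul_nonneg (sq_nonneg (endc R p)) (sq_nonneg (v p))]
  have h0 : 0 ≤ lamG - lamR R := by linarith [lamR_le_lamG hR0]
  have h1 : lamG - lamR R ≤ π ^ 2 := by linarith [lamG_lt, lamR_nonneg R]
  have m0 : 0 ≤ ∫ p in GamR R, endc R p * v p ^ 2 :=
    integral_nonneg fun p => mul_nonneg (endc_nonneg R p) (sq_nonneg _)
  have f1 := mul_le_mul_of_nonneg_left m3 h0
  have f2 := mul_le_mul_of_nonneg_right h1 m0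
  have f3 := mul_le_mul_of_nonneg_left m2 (sq_nonneg π)
  simp only [Pi.add_apply, Pi.pow_apply] at m1
  nlinarith

/-! ### Transport between guides of different lengths -/

/-- The stretching `x ↦ x + h (x - t + 1)₊²`, mapping `(-1, t)` onto `(-1, t + h)`. -/
def phi (t h x : ℝ) : ℝ := x + h * (max (x - t + 1) 0) ^ 2

/-- The derivative of `phi` in `x`. -/
def phi' (t h x : ℝ) : ℝ := 1 + h * (2 * max (x - t + 1) 0)

/-- The inverse of `phi`. -/
def psi (t h y : ℝ) : ℝ :=
  y - max (y - t + 1) 0 + 2 * max (y - t + 1) 0 / (1 + sqrt (1 + 4 * h * max (y - t + 1) 0))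

/-- The stretching of the guide in both variables. -/
def Phi (t h : ℝ) (p : ℝ × ℝ) : ℝ × ℝ := (phi t h p.1, phi t h p.2)

/-- The inverse of `Phi`. -/
def Psi (t h : ℝ) (p : ℝ × ℝ) : ℝ × ℝ := (psi t h p.1, psi t h p.2)

@[fun_prop] lemma continuous_phi (t h : ℝ) : Continuous (phi t h) := by unfold phi; fun_prop
@[fun_prop] lemma continuous_phi' (t h : ℝ) : Continuous (phi' t h) := by unfold phi'; fun_prop

lemma hasDerivAt_phi (t h x : ℝ) : HasDerivAt (phi t h) (phi' t h x) x := by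
  have h1 : HasDerivAt (fun x : ℝ => x - t + 1) 1 x := ((hasDerivAt_id x).sub_const t).add_const 1
  have h2 := (hasDerivAt_id x).add (((hasDerivAt_posSq (x - t + 1)).comp x h1).const_mul h)
  refine HasDerivAt.congr_deriv (by exact h2) ?_
  simp only [phi']; ring

lemma one_le_phi' {h : ℝ} (hh : 0 ≤ h) (t x : ℝ) : 1 ≤ phi' t h x := by
  have := le_max_right (x - t + 1) 0
  unfold phi'; nlinarith

lemma phi'_le {t h x : ℝ} (hh : 0 ≤ h) (hx : x ≤ t) : phi' t h x ≤ 1 + 2 * h := by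
  have : max (x - t + 1) 0 ≤ 1 := max_le (by linarith) (by norm_num)
  unfold phi'; nlinarith

lemma phi_strictMono {h : ℝ} (hh : 0 ≤ h) (t : ℝ) : StrictMono (phi t h) := by
  refine strictMono_of_hasDerivAt_pos (f' := phi' t h) (fun x => hasDerivAt_phi t h x) fun x => ?_
  linarith [one_le_phi' hh t x]

lemma le_phi {h : ℝ} (hh : 0 ≤ h) (t x : ℝ) : x ≤ phi t h x := by
  unfold phi; have := mul_nonneg hh (sq_nonneg (max (x - t + 1) 0)); linarith

lemma phi_of_le {t x : ℝ} (h : ℝ) (hx : x ≤ t - 1) : phi t h x = x := by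
  unfold phi; rw [max_eq_right (by linarith)]; ring

lemma phi'_of_le {t x : ℝ} (h : ℝ) (hx : x ≤ t - 1) : phi' t h x = 1 := by
  unfold phi'; rw [max_eq_right (by linarith)]; ring

lemma phi_self (t h : ℝ) : phi t h t = t + h := by
  unfold phi; rw [max_eq_left (by linarith)]; ring

lemma phi_psi {h : ℝ} (hh : 0 ≤ h) (t y : ℝ) : phi t h (psi t h y) = y := by
  have hq0 := sqrt_nonneg (1 + 4 * h * max (y - t + 1) 0)
  have hw0 := le_max_right (y - t + 1) 0
  have hq := sq_sqrt (show 0 ≤ 1 + 4 * h * max (y - t + 1) 0 by positivity)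
  rcases le_total (y - t + 1) 0 with hy | hy
  · have : psi t h y = y := by unfold psi; rw [max_eq_right hy]; simp
    rw [this, phi_of_le h (by linarith)]
  · unfold phi
    have e : psi t h y - t + 1 = 2 * max (y - t + 1) 0 / (1 + sqrt (1 + 4 * h * max (y - t + 1) 0)) := by
      unfold psi; rw [max_eq_left hy]; ring
    have e2 : psi t h y = 2 * max (y - t + 1) 0 / (1 + sqrt (1 + 4 * h * max (y - t + 1) 0)) + t - 1 := by
      linarith
    rw [e, e2, max_eq_left (a := 2 * max (y - t + 1) 0 / _) (by positivity)]
    rw [max_eq_left hy] at hq hq0 ⊢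
    set q := sqrt (1 + 4 * h * (y - t + 1))
    have hq1 : 1 + q ≠ 0 := by positivity
    field_simp
    linear_combination -(y - t + 1) * hq

lemma psi_phi {h : ℝ} (hh : 0 ≤ h) (t x : ℝ) : psi t h (phi t h x) = x :=
  (phi_strictMono hh t).injective (phi_psi hh t _)

lemma continuous_psi {h : ℝ} (hh : 0 ≤ h) (t : ℝ) : Continuous (psi t h) := by
  unfold psi
  refine Continuous.add (by fun_prop) (Continuous.div (by fun_prop) (by fun_prop) fun y => ?_)
  positivity

lemma contDiff_psi {h : ℝ} (hh : 0 ≤ h) (t : ℝ) : ContDiff ℝ 1 (psi t h) := by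
  refine contDiff_of_hasDerivAt (f' := fun y => (phi' t h (psi t h y))⁻¹) (fun y => ?_) ?_
  · exact HasDerivAt.of_local_left_inverse (continuous_psi hh t).continuousAt
      (hasDerivAt_phi t h (psi t h y)) (by linarith [one_le_phi' hh t (psi t h y)])
      (Eventually.of_forall fun y => phi_psi hh t y)
  · exact Continuous.inv₀ ((continuous_phi' t h).comp (continuous_psi hh t))
      fun y => by linarith [one_le_phi' hh t (psi t h y)]

lemma contDiff_phi (t h : ℝ) : ContDiff ℝ 1 (phi t h) :=
  contDiff_of_hasDerivAt (hasDerivAt_phi t h) (continuous_phi' t h)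

lemma contDiff_Phi (t h : ℝ) : ContDiff ℝ 1 (Phi t h) :=
  ((contDiff_phi t h).comp contDiff_fst).prodMk ((contDiff_phi t h).comp contDiff_snd)

lemma contDiff_Psi {h : ℝ} (hh : 0 ≤ h) (t : ℝ) : ContDiff ℝ 1 (Psi t h) :=
  ((contDiff_psi hh t).comp contDiff_fst).prodMk ((contDiff_psi hh t).comp contDiff_snd)

@[fun_prop] lemma continuous_Phi (t h : ℝ) : Continuous (Phi t h) := (contDiff_Phi t h).continuous

lemma Phi_Psi {h : ℝ} (hh : 0 ≤ h) (t : ℝ) (p : ℝ × ℝ) : Phi t h (Psi t h p) = p := by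
  simp [Phi, Psi, phi_psi hh]

lemma Psi_Phi {h : ℝ} (hh : 0 ≤ h) (t : ℝ) (p : ℝ × ℝ) : Psi t h (Phi t h p) = p := by
  simp [Phi, Psi, psi_phi hh]

lemma Phi_mem_GamR {t h : ℝ} (ht : 1 ≤ t) (hh : 0 ≤ h) {p : ℝ × ℝ} : Phi t h p ∈ GamR (t + h) ↔ p ∈ GamR t := by
  have hm := phi_strictMono hh t
  have e0 : phi t h 0 = 0 := phi_of_le h (by linarith)
  have e1 : phi t h (-1) = -1 := phi_of_le h (by linarith)
  rw [mem_GamR (by linarith), mem_GamR (by linarith)]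
  have a : ∀ x, (-1 < phi t h x ↔ -1 < x) := fun x => by
    conv_lhs => rw [← e1]
    exact hm.lt_iff_lt
  have b : ∀ x, (phi t h x < 0 ↔ x < 0) := fun x => by
    conv_lhs => rw [← e0]
    exact hm.lt_iff_lt
  have c : ∀ x, (phi t h x < t + h ↔ x < t) := fun x => by
    conv_lhs => rw [← phi_self t h]
    exact hm.lt_iff_lt
  simp only [Phi, a, b, c]

lemma Phi_mem_DirB {t h : ℝ} (ht : 1 ≤ t) (hh : 0 ≤ h) {p : ℝ × ℝ} : Phi t h p ∈ DirB (t + h) ↔ p ∈ DirB t := by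
  have hm := phi_strictMono hh t
  have e0 : phi t h 0 = 0 := phi_of_le h (by linarith)
  have e1 : phi t h (-1) = -1 := phi_of_le h (by linarith)
  rw [mem_DirB (by linarith), mem_DirB (by linarith), Phi_mem_GamR ht hh]
  have a : ∀ x, (-1 ≤ phi t h x ↔ -1 ≤ x) := fun x => by
    conv_lhs => rw [← e1]
    exact hm.le_iff_le
  have b : ∀ x, (phi t h x ≤ 0 ↔ x ≤ 0) := fun x => by
    conv_lhs => rw [← e0]
    exact hm.le_iff_le
  have c : ∀ x, (phi t h x < t + h ↔ x < t) := fun x => by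
    conv_lhs => rw [← phi_self t h]
    exact hm.lt_iff_lt
  simp only [Phi, a, b, c]

lemma Phi_image {t h : ℝ} (ht : 1 ≤ t) (hh : 0 ≤ h) : Phi t h '' GamR t = GamR (t + h) := by
  ext q
  constructor
  · rintro ⟨p, hp, rfl⟩; exact (Phi_mem_GamR ht hh).2 hp
  · intro hq
    refine ⟨Psi t h q, ?_, Phi_Psi hh t q⟩
    rw [← Phi_mem_GamR ht hh, Phi_Psi hh]; exact hq

/-- Change of variables between `Γ_t` and `Γ_{t+h}`. -/
lemma integral_Phi {t h : ℝ} (ht : 1 ≤ t) (hh : 0 ≤ h) (F : ℝ × ℝ → ℝ) : ∫ p in GamR (t + h), F p =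
    ∫ p in GamR t, phi' t h p.1 * phi' t h p.2 * F (Phi t h p) := by
  rw [← Phi_image ht hh]
  let D : ℝ × ℝ → (ℝ × ℝ →L[ℝ] ℝ × ℝ) := fun p =>
    (phi' t h p.1 • ContinuousLinearMap.id ℝ ℝ).prodMap (phi' t h p.2 • ContinuousLinearMap.id ℝ ℝ)
  have hD : ∀ p ∈ GamR t, HasFDerivWithinAt (Phi t h) (D p) (GamR t) p := fun p _ => by
    have h1 := (hasDerivAt_phi t h p.1).hasFDerivAt.prodMap (p := p) (hasDerivAt_phi t h p.2).hasFDerivAt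
    refine HasFDerivAt.hasFDerivWithinAt ?_
    have e : D p = (ContinuousLinearMap.toSpanSingleton ℝ (phi' t h p.1)).prodMap
        (ContinuousLinearMap.toSpanSingleton ℝ (phi' t h p.2)) := by
      ext <;> simp [D]
    rw [e]
    exact h1
  rw [integral_image_eq_integral_abs_det_fderiv_smul volume (measurableSet_GamR t) hD]
  · congr 1; funext p
    have e : (D p).det = phi' t h p.1 * phi' t h p.2 := by
      have : (D p).det = LinearMap.det ((phi' t h p.1 • LinearMap.id (R := ℝ) (M := ℝ)).prodMap
          (phi' t h p.2 • LinearMap.id (R := ℝ) (M := ℝ))) := rfl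
      rw [this, LinearMap.det_prodMap]; simp
    have p1 := one_le_phi' hh t p.1
    have p2 := one_le_phi' hh t p.2
    rw [e, abs_of_nonneg (by positivity), smul_eq_mul]
  · intro a _ b _ hab
    rw [← Psi_Phi hh t a, hab, Psi_Phi hh t b]

lemma pd_Phi {t h : ℝ} {W : ℝ × ℝ → ℝ} (hW : ContDiff ℝ 1 W) (p : ℝ × ℝ) :
    pd1 (fun p => W (Phi t h p)) p = pd1 W (Phi t h p) * phi' t h p.1 ∧
    pd2 (fun p => W (Phi t h p)) p = pd2 W (Phi t h p) * phi' t h p.2 := by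
  obtain ⟨x, y⟩ := p
  have hc : ContDiff ℝ 1 (fun p => W (Phi t h p)) := hW.comp (contDiff_Phi t h)
  constructor
  · exact (hasDerivAt_fst hc x y).unique
      ((hasDerivAt_fst hW (phi t h x) (phi t h y)).comp x (hasDerivAt_phi t h x))
  · exact (hasDerivAt_snd hc x y).unique
      ((hasDerivAt_snd hW (phi t h x) (phi t h y)).comp y (hasDerivAt_phi t h y))


/-- Weight of `∂₁` in the transported Dirichlet form. -/
def wc (t h : ℝ) (p : ℝ × ℝ) : ℝ := phi' t h p.2 / phi' t h p.1

/-- Weight of `∂₂` in the transported Dirichlet form. -/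
def wd (t h : ℝ) (p : ℝ × ℝ) : ℝ := phi' t h p.1 / phi' t h p.2

/-- Jacobian of `Phi`. -/
def wJ (t h : ℝ) (p : ℝ × ℝ) : ℝ := phi' t h p.1 * phi' t h p.2

lemma aI_Phi {t h : ℝ} (ht : 1 ≤ t) (hh : 0 ≤ h) {W Z : ℝ × ℝ → ℝ} (hW : ContDiff ℝ 1 W) (hZ : ContDiff ℝ 1 Z) :
    aI (t + h) (fun _ => 1) (fun _ => 1) W Z =
      aI t (wc t h) (wd t h) (fun p => W (Phi t h p)) (fun p => Z (Phi t h p)) := by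
  unfold aI
  rw [integral_Phi ht hh]
  congr 1; funext p
  rw [(pd_Phi hW p).1, (pd_Phi hW p).2, (pd_Phi hZ p).1, (pd_Phi hZ p).2]
  have p1 : phi' t h p.1 ≠ 0 := by linarith [one_le_phi' hh t p.1]
  have p2 : phi' t h p.2 ≠ 0 := by linarith [one_le_phi' hh t p.2]
  unfold wc wd
  field_simp

lemma AdmR_Phi {t h : ℝ} (ht : 1 ≤ t) (hh : 0 ≤ h) {W : ℝ × ℝ → ℝ} (hW : AdmR (t + h) W) : AdmR t (fun p => W (Phi t h p)) :=
  ⟨hW.1.comp (contDiff_Phi t h), fun p hp => hW.2 _ ((Phi_mem_DirB ht hh).2 hp)⟩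

lemma AdmR_Psi {t h : ℝ} (ht : 1 ≤ t) (hh : 0 ≤ h) {W : ℝ × ℝ → ℝ} (hW : AdmR t W) : AdmR (t + h) (fun p => W (Psi t h p)) :=
  ⟨hW.1.comp (contDiff_Psi hh t), fun p hp => hW.2 _ ((Phi_mem_DirB ht hh).1
    (by rw [Phi_Psi hh]; exact hp))⟩

lemma continuous_weights {t h : ℝ} (hh : 0 ≤ h) :
    Continuous (wc t h) ∧ Continuous (wd t h) ∧ Continuous (wJ t h) := by
  have p1 : ∀ x, phi' t h x ≠ 0 := fun x => by linarith [one_le_phi' hh t x]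
  refine ⟨?_, ?_, ?_⟩
  · exact Continuous.div (by fun_prop) (by fun_prop) fun p => p1 _
  · exact Continuous.div (by fun_prop) (by fun_prop) fun _ => p1 _
  · unfold wJ; fun_prop

/-- An approximate ground state on `Γ_{t+h}` is transported by `Φ` to one on `Γ_t`, for the weighted
forms. -/
lemma AGS.transport {t h : ℝ} (ht : 1 ≤ t) (hh : 0 ≤ h) {v : ℝ × ℝ → ℝ} {V : ℕ → ℝ × ℝ → ℝ}
    (H : AGS (t + h) (fun _ => 1) (fun _ => 1) (fun _ => 1) (lamR (t + h)) v V) :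
    AGS t (wc t h) (wd t h) (wJ t h) (lamR (t + h)) (fun p => v (Phi t h p))
      (fun n p => V n (Phi t h p)) := by
  obtain ⟨cc, cd, cJ⟩ := continuous_weights (t := t) hh
  have pp : ∀ x, 0 ≤ phi' t h x := fun x => by linarith [one_le_phi' hh t x]
  refine ⟨by linarith, cc, cd, cJ, fun _ _ => div_nonneg (pp _) (pp _),
    fun _ _ => div_nonneg (pp _) (pp _), fun _ _ => mul_nonneg (pp _) (pp _), H.lam0, ?_,
    fun n => AdmR_Phi ht hh (H.adm n), fun n p hp => H.close n _ ((Phi_mem_GamR ht hh).2 hp),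
    fun W hW => ?_, fun n => ?_⟩
  · refine H.vc.comp (continuous_Phi t h).continuousOn ?_
    rw [← Phi_image ht hh]
    exact (mapsTo_image _ _).closure (continuous_Phi t h)
  · have h1 := H.min _ (AdmR_Psi ht hh hW)
    rw [aI_Phi ht hh (AdmR_Psi ht hh hW).1 (AdmR_Psi ht hh hW).1] at h1
    unfold mI at h1 ⊢
    rw [integral_Phi ht hh] at h1
    simp only [Psi_Phi hh, one_mul] at h1
    exact h1
  · have h1 := H.energy n
    rw [aI_Phi ht hh (H.adm n).1 (H.adm n).1, integral_Phi ht hh] at h1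
    simp only [one_mul] at h1
    exact h1

/-! ### Dependence of the eigenfunctions on the length of the guide -/

/-- `A n → a` uniformly on `Γ_R` with rate `O(1/n)`. -/
structure UC (R : ℝ) (A : ℕ → ℝ × ℝ → ℝ) (a : ℝ × ℝ → ℝ) : Prop where
  hR : 0 < R
  cont : ContinuousOn a (closure (GamR R))
  contA : ∀ n, Continuous (A n)
  close : ∃ K, 0 ≤ K ∧ ∀ n, ∀ p ∈ GamR R, |A n p - a p| ≤ K * (1 / ((n : ℝ) + 1))

lemma AGS.uc {R : ℝ} {c d J : ℝ × ℝ → ℝ} {lam : ℝ} {v : ℝ × ℝ → ℝ} {V : ℕ → ℝ × ℝ → ℝ}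
    (h : AGS R c d J lam v V) : UC R V v :=
  ⟨h.hR, h.vc, fun n => (h.adm n).1.continuous, 1, zero_le_one, fun n p hp => by
    rw [one_mul]; exact h.close n p hp⟩

lemma UC.add_smul {R : ℝ} {A B : ℕ → ℝ × ℝ → ℝ} {a b : ℝ × ℝ → ℝ} (hA : UC R A a) (hB : UC R B b)
    (τ : ℝ) : UC R (fun n p => A n p + τ * B n p) (fun p => a p + τ * b p) := by
  obtain ⟨K, hK0, hK⟩ := hA.close
  obtain ⟨L, hL0, hL⟩ := hB.close
  refine ⟨hA.hR, hA.cont.add (hB.cont.const_smul τ), fun n => ?_, K + |τ| * L, by positivity,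
    fun n p hp => ?_⟩
  · have := hA.contA n; have := hB.contA n; fun_prop
  · have e : A n p + τ * B n p - (a p + τ * b p) = (A n p - a p) + τ * (B n p - b p) := by ring
    rw [e]
    refine (abs_add_le _ _).trans ?_
    rw [abs_mul, add_mul, mul_assoc]
    exact add_le_add (hK n p hp) (mul_le_mul_of_nonneg_left (hL n p hp) (abs_nonneg _))

lemma UC.tendsto {R : ℝ} {A B : ℕ → ℝ × ℝ → ℝ} {a b : ℝ × ℝ → ℝ} (hA : UC R A a) (hB : UC R B b)
    {H : ℝ × ℝ → ℝ} (hH : ContinuousOn H (closure (GamR R))) :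
    Tendsto (fun n => ∫ p in GamR R, H p * (A n p * B n p)) atTop
      (𝓝 (∫ p in GamR R, H p * (a p * b p))) := by
  obtain ⟨K, hK0, hK⟩ := hA.close
  obtain ⟨L, hL0, hL⟩ := hB.close
  obtain ⟨CH, hCH0, hCH⟩ := exists_bound hA.hR hH
  obtain ⟨Ca, hCa0, hCa⟩ := exists_bound hA.hR hA.cont
  obtain ⟨Cb, hCb0, hCb⟩ := exists_bound hA.hR hB.cont
  refine tendsto_int_of_close hA.hR (C := CH * ((Ca + K) * L + K * Cb)) (fun n => ?_) ?_ ?_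
  · exact integrableOn_GamR hA.hR.le
      (hH.mul ((hA.contA n).continuousOn.mul (hB.contA n).continuousOn))
  · exact integrableOn_GamR hA.hR.le (hH.mul (hA.cont.mul hB.cont))
  · intro n p hp
    have e : H p * (A n p * B n p) - H p * (a p * b p) =
        H p * (A n p * (B n p - b p) + (A n p - a p) * b p) := by ring
    have h2 : 1 / ((n : ℝ) + 1) ≤ 1 := by
      rw [div_le_one (by positivity)]; linarith [(Nat.cast_nonneg n : (0 : ℝ) ≤ n)]
    have h20 : 0 ≤ 1 / ((n : ℝ) + 1) := by positivity
    have h3 : |A n p| ≤ Ca + K := by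
      have h4 := hK n p hp
      have h5 := hCa p hp
      have h6 : |A n p| ≤ |A n p - a p| + |a p| := by
        simpa using abs_add_le (A n p - a p) (a p)
      nlinarith
    rw [e, abs_mul, mul_assoc]
    refine mul_le_mul (hCH p hp) ?_ (abs_nonneg _) hCH0
    refine (abs_add_le _ _).trans ?_
    rw [abs_mul, abs_mul]
    have f1 := mul_le_mul h3 (hL n p hp) (abs_nonneg _) (by positivity)
    have f2 := mul_le_mul (hK n p hp) (hCb p hp) (abs_nonneg _) (by positivity)
    nlinarith

lemma aI_compare {R K : ℝ} (hR : 0 < R) {c d c' d' W : ℝ × ℝ → ℝ} (hc : Continuous c)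
    (hd : Continuous d) (hc' : Continuous c') (hd' : Continuous d') (hW : ContDiff ℝ 1 W)
    (h : ∀ p ∈ GamR R, c p ≤ K * c' p ∧ d p ≤ K * d' p) :
    aI R c d W W ≤ K * aI R c' d' W W := by
  unfold aI
  rw [← integral_const_mul]
  refine setIntegral_mono_on (intOn hR (cont_aI hc hd hW hW))
    ((intOn hR (cont_aI hc' hd' hW hW)).const_mul K) (measurableSet_GamR R) fun p hp => ?_
  have h1 := mul_le_mul_of_nonneg_right (h p hp).1 (mul_self_nonneg (pd1 W p))
  have h2 := mul_le_mul_of_nonneg_right (h p hp).2 (mul_self_nonneg (pd2 W p))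
  linarith

lemma wfacts {t h : ℝ} (ht : 1 ≤ t) (hh : 0 ≤ h) {p : ℝ × ℝ} (hp : p ∈ GamR t) :
    |1 - wc t h p| ≤ 2 * h ∧ |1 - wd t h p| ≤ 2 * h ∧ 1 ≤ wJ t h p ∧ wJ t h p ≤ 1 + 2 * h ∧
    (p.1 ≤ t - 1 → p.2 ≤ t - 1 → wc t h p = 1 ∧ wd t h p = 1 ∧ wJ t h p = 1) := by
  rw [mem_GamR (by linarith)] at hp
  obtain ⟨-, -, h3, h4, h5⟩ := hp
  have a1 := one_le_phi' hh t p.1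
  have a2 := one_le_phi' hh t p.2
  have b1 := phi'_le hh h3.le
  have b2 := phi'_le hh h4.le
  have key : ∀ a, 1 ≤ a → a ≤ 1 + 2 * h → |1 - a / 1| ≤ 2 * h ∧ |1 - 1 / a| ≤ 2 * h := by
    intro a ha hb
    have i1 : 1 / a ≤ 1 := by rw [div_le_one (by linarith)]; exact ha
    have i2 : 2 - a ≤ 1 / a := by rw [le_div_iff₀ (by linarith)]; nlinarith [sq_nonneg (a - 1)]
    rw [abs_le, abs_le]
    refine ⟨⟨by linarith, by linarith⟩, by linarith, by linarith⟩
  unfold wc wd wJ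
  rcases h5 with h5 | h5
  · rw [phi'_of_le h (show p.1 ≤ t - 1 by linarith)]
    refine ⟨(key _ a2 b2).1, (key _ a2 b2).2, by linarith, by linarith, fun _ h => ?_⟩
    rw [phi'_of_le _ h]; norm_num
  · rw [phi'_of_le h (show p.2 ≤ t - 1 by linarith)]
    refine ⟨(key _ a1 b1).2, (key _ a1 b1).1, by linarith, by linarith, fun h _ => ?_⟩
    rw [phi'_of_le _ h]; norm_num

lemma wfacts' {t h : ℝ} (ht : 1 ≤ t) (hh : 0 ≤ h) (h1 : h ≤ 1) {p : ℝ × ℝ} (hp : p ∈ GamR t) :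
    1 / 3 ≤ wc t h p ∧ wc t h p ≤ 3 ∧ 1 / 3 ≤ wd t h p ∧ wd t h p ≤ 3 := by
  rw [mem_GamR (by linarith)] at hp
  obtain ⟨-, -, h3, h4, h5⟩ := hp
  have a1 := one_le_phi' hh t p.1
  have a2 := one_le_phi' hh t p.2
  have b1 := phi'_le hh h3.le
  have b2 := phi'_le hh h4.le
  have key : ∀ a b, 1 ≤ a → a ≤ 1 + 2 * h → 1 ≤ b → b ≤ 1 + 2 * h → 1 / 3 ≤ a / b ∧ a / b ≤ 3 :=
    fun a b a1 a2 b1 b2 => ⟨by rw [le_div_iff₀ (by linarith)]; linarith,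
      by rw [div_le_iff₀ (by linarith)]; linarith⟩
  exact ⟨(key _ _ a2 b2 a1 b1).1, (key _ _ a2 b2 a1 b1).2, (key _ _ a1 b1 a2 b2).1,
    (key _ _ a1 b1 a2 b2).2⟩

lemma pd_endc_mul {t : ℝ} (ht : 3 ≤ t) {W : ℝ × ℝ → ℝ} {p : ℝ × ℝ} (hp : p ∈ GamR t)
    (h : t - 1 < p.1 ∨ t - 1 < p.2) :
    pd1 (fun p => endc t p * W p) p = pd1 W p ∧ pd2 (fun p => endc t p * W p) p = pd2 W p := by
  have h4 : ∀ᶠ q : ℝ × ℝ in 𝓝 p, t - 2 ≤ q.1 ∨ t - 2 ≤ q.2 := by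
    rcases h with h3 | h3
    · exact (continuous_fst.continuousAt.eventually
        (lt_mem_nhds (show t - 2 < p.1 by linarith))).mono fun q hq => Or.inl (le_of_lt hq)
    · exact (continuous_snd.continuousAt.eventually
        (lt_mem_nhds (show t - 2 < p.2 by linarith))).mono fun q hq => Or.inr (le_of_lt hq)
  have e : (fun p => endc t p * W p) =ᶠ[𝓝 p] W := by
    filter_upwards [h4, isOpen_Gam.mem_nhds hp.1] with q hq hqG
    rw [endc_eq_one ht hqG hq, one_mul]
  unfold pd1 pd2
  rw [e.fderiv_eq]
  exact ⟨rfl, rfl⟩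

/-- The exponentially small decay factor `e^{-2ωt}`. -/
def E2 (t : ℝ) : ℝ := exp (-2 * omega * t)

lemma E2_pos (t : ℝ) : 0 < E2 t := exp_pos _

lemma E2_le_one {t : ℝ} (ht : 0 ≤ t) : E2 t ≤ 1 :=
  exp_le_one_iff.2 (by nlinarith [mul_nonneg omega_pos.le ht])

/-- Constant for the decay of transported eigenfunctions. -/
def CB : ℝ := exp (3 * omega) * CA

lemma CB_nonneg : 0 ≤ CB := mul_nonneg (exp_pos _).le CA_nonneg

/-- The Agmon estimate for an eigenfunction on `Γ_{t+h}` transported back to `Γ_t`. -/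
lemma agmon_transport {t h K : ℝ} (ht : 1 ≤ t) (hh : 0 ≤ h) (h1 : h ≤ 1) {v H : ℝ × ℝ → ℝ}
    (hv : IsFirstEF (t + h) v) (hK : 0 ≤ K) (hH : ContinuousOn H (closure (GamR t)))
    (hw : ∀ p ∈ GamR t, H p ≤ K * Yw t p) :
    ∫ p in GamR t, H p * v (Phi t h p) ^ 2 ≤ K * CB * E2 t := by
  have hω := omega_pos
  have ht0 : 0 ≤ t := by linarith
  have h2 := agmon_weight (R := t + h) (v := v) (H := fun p => K * exp (3 * omega) * Yw (t + h) p)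
    (by linarith) hv (mul_nonneg hK (exp_pos (3 * omega)).le)
    (((continuous_Yw _).const_smul (K * exp (3 * omega))).continuousOn) (fun p _ => le_rfl)
  rw [integral_Phi ht hh] at h2
  have hvc : ContinuousOn (fun p => v (Phi t h p)) (closure (GamR t)) := by
    refine hv.2.1.comp (continuous_Phi t h).continuousOn ?_
    rw [← Phi_image ht hh]
    exact (mapsTo_image _ _).closure (continuous_Phi t h)
  have hY : ∀ p, K * Yw t p ≤ K * exp (3 * omega) * Yw (t + h) (Phi t h p) := fun p => by
    have key : ∀ x, exp (3 * omega * (x - t)) ≤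
        exp (3 * omega) * exp (3 * omega * (phi t h x - (t + h))) := fun x => by
      rw [← exp_add]
      apply exp_le_exp.2
      nlinarith [mul_le_mul_of_nonneg_left (le_phi hh t x) hω.le, mul_le_mul_of_nonneg_left h1 hω.le]
    have a := key p.1
    have b := key p.2
    rw [mul_assoc]
    refine mul_le_mul_of_nonneg_left ?_ hK
    simp only [Yw, Phi]
    linarith
  have h3 : ∫ p in GamR t, H p * v (Phi t h p) ^ 2 ≤ ∫ p in GamR t, phi' t h p.1 * phi' t h p.2 *
      (K * exp (3 * omega) * Yw (t + h) (Phi t h p) * v (Phi t h p) ^ 2) := by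
    refine setIntegral_mono_on (integrableOn_GamR ht0 (hH.mul (hvc.pow 2)))
      (integrableOn_GamR ht0 ?_) (measurableSet_GamR t) fun p hp => ?_
    · exact ContinuousOn.mul (by fun_prop) (ContinuousOn.mul (by fun_prop) (hvc.pow 2))
    · have a1 := one_le_phi' hh t p.1
      have a2 := one_le_phi' hh t p.2
      have f1 := mul_le_mul_of_nonneg_right ((hw p hp).trans (hY p)) (sq_nonneg (v (Phi t h p)))
      have f0 : 0 ≤ K * exp (3 * omega) * Yw (t + h) (Phi t h p) * v (Phi t h p) ^ 2 :=
        mul_nonneg (mul_nonneg (mul_nonneg hK (exp_pos _).le) (Yw_nonneg _ _)) (sq_nonneg _)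
      have f2 : 1 ≤ phi' t h p.1 * phi' t h p.2 := by nlinarith
      nlinarith
  refine h3.trans (h2.trans ?_)
  have e : exp (-2 * omega * (t + h)) ≤ E2 t := exp_le_exp.2 (by nlinarith [mul_nonneg hω.le hh])
  unfold CB
  have : 0 ≤ K * (exp (3 * omega) * CA) := mul_nonneg hK (mul_nonneg (exp_pos _).le CA_nonneg)
  nlinarith [mul_le_mul_of_nonneg_left e this]

lemma young {k h δ : ℝ} (hk : |k| ≤ 2 * h) (hδ : 0 < δ) (x y : ℝ) :
    k * (x * y) ≤ h ^ 2 / δ * (x * x) + δ * (y * y) := by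
  have h1 : k * (x * y) ≤ 2 * h * (|x| * |y|) := by
    refine (le_abs_self _).trans ?_
    rw [abs_mul, abs_mul]
    exact mul_le_mul_of_nonneg_right hk (by positivity)
  have h2 : h ^ 2 / δ * (x * x) + δ * (y * y) - 2 * h * (|x| * |y|) = (h * |x| - δ * |y|) ^ 2 / δ := by
    rw [← abs_mul_abs_self x, ← abs_mul_abs_self y]; field_simp; ring
  have : 0 ≤ (h * |x| - δ * |y|) ^ 2 / δ := by positivity
  linarith

/-- The transported form differs from the Dirichlet form only near the ends. -/
lemma aI_cross {t h δ : ℝ} (ht : 3 ≤ t) (hh : 0 ≤ h) (hδ : 0 < δ)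
    {W Z : ℝ × ℝ → ℝ} (hW : ContDiff ℝ 1 W) (hZ : ContDiff ℝ 1 Z) :
    aI t (fun _ => 1) (fun _ => 1) W Z ≤ aI t (wc t h) (wd t h) W Z +
      h ^ 2 / δ * aI t (fun _ => 1) (fun _ => 1) (fun p => endc t p * W p) (fun p => endc t p * W p) +
      δ * aI t (fun _ => 1) (fun _ => 1) Z Z := by
  have ht0 : 0 < t := by linarith
  obtain ⟨cc, cd, -⟩ := continuous_weights (t := t) hh
  have hGW := (contDiff_endc t).mul hW
  have i1 := intOn ht0 (cont_aI (c := fun _ => 1) (d := fun _ => 1) continuous_const continuous_const hW hZ)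
  have i2 := intOn ht0 (cont_aI cc cd hW hZ)
  have i3 := (intOn ht0 (cont_aI (c := fun _ => 1) (d := fun _ => 1) continuous_const
    continuous_const hGW hGW)).const_mul (h ^ 2 / δ)
  have i4 := (intOn ht0 (cont_aI (c := fun _ => 1) (d := fun _ => 1) continuous_const
    continuous_const hZ hZ)).const_mul δ
  unfold aI
  rw [← integral_const_mul, ← integral_const_mul, ← integral_add i2 i3, ← integral_add _ i4]
  · refine setIntegral_mono_on i1 ((i2.add i3).add i4) (measurableSet_GamR t) fun p hp => ?_
    obtain ⟨w1, w2, -, -, w5⟩ := wfacts (by linarith) hh hp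
    have y0 : ∀ x y : ℝ, 0 ≤ h ^ 2 / δ * (x * x) + δ * (y * y) := fun x y =>
      add_nonneg (mul_nonneg (by positivity) (mul_self_nonneg _))
        (mul_nonneg hδ.le (mul_self_nonneg _))
    by_cases hc : p.1 ≤ t - 1 ∧ p.2 ≤ t - 1
    · obtain ⟨e1, e2, -⟩ := w5 hc.1 hc.2
      rw [e1, e2]
      have := y0 (pd1 (fun p => endc t p * W p) p) (pd1 Z p)
      have := y0 (pd2 (fun p => endc t p * W p) p) (pd2 Z p)
      linarith
    · have hc' : t - 1 < p.1 ∨ t - 1 < p.2 := by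
        by_contra h'; push Not at h'; exact hc h'
      rw [(pd_endc_mul ht hp hc').1, (pd_endc_mul ht hp hc').2]
      have := young w1 hδ (pd1 W p) (pd1 Z p)
      have := young w2 hδ (pd2 W p) (pd2 Z p)
      linarith
  · exact i2.add i3

lemma wJ_sub_le {t h : ℝ} (ht : 3 ≤ t) (hh : 0 ≤ h) {p : ℝ × ℝ} (hp : p ∈ GamR t) :
    wJ t h p - 1 ≤ 2 * h * endc t p := by
  obtain ⟨-, -, -, w4, w5⟩ := wfacts (by linarith) hh hp
  by_cases hc : p.1 ≤ t - 1 ∧ p.2 ≤ t - 1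
  · rw [(w5 hc.1 hc.2).2.2]
    have := mul_nonneg hh (endc_nonneg t p)
    linarith
  · have hc' : t - 2 ≤ p.1 ∨ t - 2 ≤ p.2 := by
      by_contra h'; push Not at h'; exact hc ⟨by linarith, by linarith⟩
    rw [endc_eq_one ht hp.1 hc']; linarith

/-- The Young parameter `ω² / (4π²)`, small enough to be absorbed by the spectral gap. -/
def dlt : ℝ := omega ^ 2 / (4 * π ^ 2)

/-- Constant for the component orthogonal to the eigenfunction. -/
def C1 : ℝ := 2 / omega ^ 2 * (1 / dlt) * (K9 * CB) * (10 * π ^ 2 + 9)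

lemma dlt_pos : 0 < dlt := by
  have := omega_pos; have := pi_pos; unfold dlt; positivity

lemma dlt_le : dlt ≤ 1 / 4 := by
  have := pi_pos
  unfold dlt
  rw [div_le_div_iff₀ (by positivity) (by norm_num), omega_sq]
  nlinarith [lamG_nonneg]

lemma C1_nonneg : 0 ≤ C1 := by
  have := omega_pos; have := dlt_pos; have := K9_pos; have := CB_nonneg
  unfold C1; positivity

/-- The arithmetic that closes the estimate of the orthogonal part: `N` is its squared norm. -/
lemma orth_arith {q N D ls lG P δ W A B G M : ℝ} (hq0 : 0 ≤ q) (N0 : 0 ≤ N) (D0 : 0 ≤ D)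
    (hls0 : 0 ≤ ls) (hlsG : ls ≤ lG) (hls2 : ls ≤ P) (hδ0 : 0 ≤ δ) (hδe : P * δ = W / 4)
    (hW : W = P - lG) (m1 : B ≤ 3 * D) (m2 : G ≤ 3 * D) (m3 : M ≤ D)
    (m4 : A ≤ N + (q * M + δ * N))
    (lim : (1 - δ) * (P * N) ≤ ls * A + q * (3 * (ls * B + G))) :
    W / 2 * N ≤ q * D * (10 * P + 9) := by
  have n2 := mul_le_mul_of_nonneg_left m4 hls0
  have n1 : ls * (q * M) ≤ P * (q * D) :=
    (mul_le_mul_of_nonneg_left (mul_le_mul_of_nonneg_left m3 hq0) hls0).trans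
      (mul_le_mul_of_nonneg_right hls2 (mul_nonneg hq0 D0))
  have n4 : ls * (δ * N) ≤ P * (δ * N) := mul_le_mul_of_nonneg_right hls2 (mul_nonneg hδ0 N0)
  have n5 : ls * N ≤ lG * N := mul_le_mul_of_nonneg_right hlsG N0
  have n7 : ls * B ≤ P * (3 * D) :=
    (mul_le_mul_of_nonneg_left m1 hls0).trans (mul_le_mul_of_nonneg_right hls2 (by linarith))
  have n9 := mul_le_mul_of_nonneg_left (add_le_add n7 m2) hq0
  have e1 : P * δ * N = W / 4 * N := by rw [hδe]
  have e2 : W * N = P * N - lG * N := by rw [hW]; ring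
  linarith

/-- The part of the transported eigenfunction `v_{t+h} ∘ Φ` orthogonal to `v_t` is `O(h e^{-ωt})`. -/
lemma orth_part {t h α : ℝ} (ht : 3 ≤ t) (hh : 0 ≤ h) (h1 : h ≤ 1) {v w : ℝ × ℝ → ℝ}
    (hv : IsFirstEF t v) (hw : IsFirstEF (t + h) w)
    (hα : α = ∫ p in GamR t, w (Phi t h p) * v p) :
    ∫ p in GamR t, (w (Phi t h p) - α * v p) ^ 2 ≤ C1 * h ^ 2 * E2 t ∧
    ∫ p in GamR t, w (Phi t h p) ^ 2 = α ^ 2 + ∫ p in GamR t, (w (Phi t h p) - α * v p) ^ 2 := by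
  have ht0 : 0 < t := by linarith
  have ht1 : 1 ≤ t := by linarith
  have hs0 : 0 < t + h := by linarith
  obtain ⟨V, hV, -⟩ := exists_AGS ht0 hv
  obtain ⟨U, hU0, -⟩ := exists_AGS hs0 hw
  have hU := hU0.transport ht1 hh
  clear hU0
  have hn : ∫ p in GamR t, v p ^ 2 = 1 := hv.2.2.2.2.2.2.2
  obtain ⟨cc, cd, cJ⟩ := continuous_weights (t := t) hh
  set wt : ℝ × ℝ → ℝ := fun p => w (Phi t h p) with hwt
  set Ut : ℕ → ℝ × ℝ → ℝ := fun n p => U n (Phi t h p) with hUt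
  set ls := lamR (t + h) with hls
  have hls0 : 0 ≤ ls := hU.lam0
  have hlsG : ls ≤ lamG := lamR_le_lamG hs0
  -- `z` is the component of `w ∘ Φ` orthogonal to `v`, and `Z n` are admissible functions near it
  set z : ℝ × ℝ → ℝ := fun p => wt p + (-α) * v p with hz
  set Z : ℕ → ℝ × ℝ → ℝ := fun n p => Ut n p + (-α) * V n p with hZ
  have uV := hV.uc
  have uU := hU.uc
  have uZ : UC t Z z := uU.add_smul uV (-α)
  have aZ : ∀ n, AdmR t (Z n) := fun n => (hU.adm n).add_smul (hV.adm n) (-α)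
  have vc := hV.vc
  have wcn := hU.vc
  have zc := uZ.cont
  have c1f : ContinuousOn (fun _ : ℝ × ℝ => (1 : ℝ)) (closure (GamR t)) := continuousOn_const
  -- `z ⟂ v`, so that Pythagoras gives the second claim
  have iww : IntegrableOn (fun p => wt p ^ 2) (GamR t) := integrableOn_GamR ht0.le (wcn.pow 2)
  have iwv : IntegrableOn (fun p => wt p * v p) (GamR t) := integrableOn_GamR ht0.le (wcn.mul vc)
  have ivv : IntegrableOn (fun p => v p ^ 2) (GamR t) := integrableOn_GamR ht0.le (vc.pow 2)
  have izz : IntegrableOn (fun p => z p ^ 2) (GamR t) := integrableOn_GamR ht0.le (zc.pow 2)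
  have jvz : IntegrableOn (fun p => v p * z p) (GamR t) := integrableOn_GamR ht0.le (vc.mul zc)
  have ivz : ∫ p in GamR t, v p * z p = 0 := by
    have e : ∀ p, v p * z p = wt p * v p + (-α) * v p ^ 2 := fun p => by simp only [hz]; ring
    simp only [e]
    rw [integral_add iwv (ivv.const_mul _), integral_const_mul, hn, hα]; ring
  have iwz : ∫ p in GamR t, wt p * z p = ∫ p in GamR t, z p ^ 2 := by
    have e : ∀ p, wt p * z p = z p ^ 2 + α * (v p * z p) := fun p => by simp only [hz]; ring
    simp only [e]
    rw [integral_add izz (jvz.const_mul _), integral_const_mul, ivz]; ring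
  have iw2 : ∫ p in GamR t, wt p ^ 2 = α ^ 2 + ∫ p in GamR t, z p ^ 2 := by
    have e : ∀ p, wt p ^ 2 = z p ^ 2 + (2 * α * (v p * z p) + α ^ 2 * v p ^ 2) := fun p => by
      simp only [hz]; ring
    have j1 : IntegrableOn (fun p => 2 * α * (v p * z p)) (GamR t) :=
      jvz.const_mul _
    have j2 : IntegrableOn (fun p => 2 * α * (v p * z p) + α ^ 2 * v p ^ 2) (GamR t) :=
      j1.add (ivv.const_mul _)
    simp only [e]
    rw [integral_add izz j2, integral_add j1 (ivv.const_mul _),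
      integral_const_mul, integral_const_mul, ivz, hn]; ring
  have ez : ∀ p, (wt p - α * v p) ^ 2 = z p ^ 2 := fun p => by simp only [hz]; ring
  change (∫ p in GamR t, (wt p - α * v p) ^ 2 ≤ _) ∧
    (∫ p in GamR t, wt p ^ 2 = α ^ 2 + ∫ p in GamR t, (wt p - α * v p) ^ 2)
  simp only [ez]
  refine ⟨?_, iw2⟩
  -- `AGS.orth` requires the energies of the test functions `Z n` to stay bounded
  have bound1 : ∃ K, ∀ n, aI t (fun _ => 1) (fun _ => 1) (Z n) (Z n) ≤ K := by
    refine ⟨2 * (3 * (ls * ∫ p in GamR t, wJ t h p * wt p ^ 2)) +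
      2 * α ^ 2 * (lamR t * ∫ p in GamR t, 1 * v p ^ 2), fun n => ?_⟩
    have e1 := aI_expand ht0 (c := fun _ => 1) (d := fun _ => 1) continuous_const continuous_const
      (hU.adm n).1 (hV.adm n).1 (-α)
    have e2 := aI_expand ht0 (c := fun _ => 1) (d := fun _ => 1) continuous_const continuous_const
      (hU.adm n).1 (hV.adm n).1 α
    have e3 := aI_nonneg (R := t) (c := fun _ => 1) (d := fun _ => 1)
      (W := fun p => Ut n p + α * V n p) (fun _ _ => zero_le_one) (fun _ _ => zero_le_one)
    have e4 := aI_compare (K := 3) (c := fun _ => 1) (d := fun _ => 1) ht0 continuous_const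
      continuous_const cc cd (hU.adm n).1
      fun p hp => by
        have := wfacts' ht1 hh h1 hp
        exact ⟨by linarith [this.1], by linarith [this.2.2.1]⟩
    have e5 := hU.energy n
    have e6 := mul_le_mul_of_nonneg_left (hV.energy n) (sq_nonneg α)
    linarith
  obtain ⟨K, hK⟩ := bound1
  have bound2 : ∀ n, aI t (wc t h) (wd t h) (Z n) (Z n) ≤ 3 * K := fun n => by
    have := aI_compare (K := 3) (c' := fun _ => 1) (d' := fun _ => 1) ht0 cc cd continuous_const
      continuous_const (aZ n).1 fun p hp => by
        have := wfacts' ht1 hh h1 hp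
        exact ⟨by linarith [this.2.1], by linarith [this.2.2.2]⟩
    linarith [hK n]
  have o1 := hU.orth aZ bound2
  have o2 := hV.orth aZ hK
  -- the spectral gap for `Z n`, with the Dirichlet form of `Ut n` exchanged for the transported
  -- form, for which `Ut n` is an approximate ground state, at the cost of an end term
  set δ := dlt with hδ
  have hδ0 : 0 < δ := dlt_pos
  have hδ1 : δ ≤ 1 / 4 := dlt_le
  have pre : ∀ n, (1 - δ) * (lamR t * (∫ p in GamR t, 1 * (Z n p * v p)) ^ 2 +
      π ^ 2 * ((∫ p in GamR t, 1 * (Z n p * Z n p)) - (∫ p in GamR t, 1 * (Z n p * v p)) ^ 2)) ≤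
      (aI t (wc t h) (wd t h) (Ut n) (Z n) - ls * mI t (wJ t h) (Ut n) (Z n)) +
      ls * (∫ p in GamR t, wJ t h p * (Ut n p * Z n p)) -
      α * ((aI t (fun _ => 1) (fun _ => 1) (V n) (Z n) - lamR t * mI t (fun _ => 1) (V n) (Z n)) +
        lamR t * ∫ p in GamR t, 1 * (V n p * Z n p)) +
      h ^ 2 / δ * (3 * aI t (wc t h) (wd t h) (fun p => endc t p * Ut n p)
        (fun p => endc t p * Ut n p)) := fun n => by
    have g := gap hV hn (lamR_lt ht0) (aZ n)
    rw [← aI_one] at g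
    simp only [one_mul, mI]
    have e0 : ∀ p, Z n p * Z n p = Z n p ^ 2 := fun p => by ring
    simp only [e0]
    have x1 := aI_cross ht hh hδ0 (hU.adm n).1 (aZ n).1
    have x2 : aI t (fun _ => 1) (fun _ => 1) (Z n) (Z n) = aI t (fun _ => 1) (fun _ => 1) (Z n) (Ut n) +
      (-α) * aI t (fun _ => 1) (fun _ => 1) (Z n) (V n) :=
      aI_add_smul_right ht0 continuous_const continuous_const (aZ n).1 (hU.adm n).1 (hV.adm n).1 (-α)
    rw [aI_comm _ _ _ (Z n) (Ut n), aI_comm _ _ _ (Z n) (V n)] at x2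
    have x3 := aI_compare (K := 3) (c := fun _ => 1) (d := fun _ => 1) ht0 continuous_const
      continuous_const cc cd ((contDiff_endc t).mul (hU.adm n).1)
      fun p hp => by
        have := wfacts' ht1 hh h1 hp
        exact ⟨by linarith [this.1], by linarith [this.2.2.1]⟩
    have x4 := mul_le_mul_of_nonneg_left x3 (by positivity : 0 ≤ h ^ 2 / δ)
    have x5 := mul_le_mul_of_nonneg_left g (by linarith : 0 ≤ 1 - δ)
    linarith
  have lf : Tendsto (fun n => ∫ p in GamR t, 1 * (Z n p * v p)) atTop
      (𝓝 (∫ p in GamR t, 1 * (z p * v p))) := by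
    obtain ⟨L, hL0, hL⟩ := uZ.close
    obtain ⟨B, hB0, hB⟩ := exists_bound ht0 vc
    refine tendsto_int_of_close ht0 (C := L * B) (fun n => ?_) ?_ ?_
    · exact integrableOn_GamR ht0.le (c1f.mul ((uZ.contA n).continuousOn.mul vc))
    · exact integrableOn_GamR ht0.le (c1f.mul (zc.mul vc))
    · intro n p hp
      have e : 1 * (Z n p * v p) - 1 * (z p * v p) = (Z n p - z p) * v p := by ring
      rw [e, abs_mul]
      have := mul_le_mul (hL n p hp) (hB p hp) (abs_nonneg _) (by positivity)
      linarith
  have lZ := uZ.tendsto uZ c1f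
  have lUZ := uU.tendsto uZ cJ.continuousOn
  have lVZ := uV.tendsto uZ c1f
  have lG := hU.ims (contDiff_endc t)
  have lim := le_of_tendsto_of_tendsto'
    ((((lf.pow 2).const_mul (lamR t)).add ((lZ.sub (lf.pow 2)).const_mul (π ^ 2))).const_mul (1 - δ))
    (((o1.add (lUZ.const_mul ls)).sub ((o2.add (lVZ.const_mul (lamR t))).const_mul α)).add
      ((lG.const_mul 3).const_mul (h ^ 2 / δ))) pre
  have e0 : ∀ p, z p * z p = z p ^ 2 := fun p => by ring
  have e1 : ∀ p, z p * v p = v p * z p := fun p => by ring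
  simp only [one_mul, e0, e1, ivz] at lim
  -- the end term is exponentially small by the Agmon estimate
  have D0 : 0 ≤ K9 * CB * E2 t := mul_nonneg (mul_nonneg K9_pos.le CB_nonneg) (E2_pos t).le
  have m1 : ∫ p in GamR t, wJ t h p * endc t p ^ 2 * wt p ^ 2 ≤ 3 * K9 * CB * E2 t := by
    refine agmon_transport ht1 hh h1 hw (by linarith [K9_pos])
      (H := fun p => wJ t h p * endc t p ^ 2) (by fun_prop) fun p hp => ?_
    obtain ⟨-, -, w3, w4, -⟩ := wfacts ht1 hh hp
    have := (endc_le t p).2.1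
    have : wJ t h p * endc t p ^ 2 ≤ 3 * endc t p ^ 2 :=
      mul_le_mul_of_nonneg_right (by linarith) (sq_nonneg _)
    linarith
  have m2 : ∫ p in GamR t, (wc t h p * pd1 (endc t) p ^ 2 + wd t h p * pd2 (endc t) p ^ 2) * wt p ^ 2
      ≤ 3 * K9 * CB * E2 t := by
    have c1 := continuous_pd1 (contDiff_endc t)
    have c2 := continuous_pd2 (contDiff_endc t)
    refine agmon_transport ht1 hh h1 hw (by linarith [K9_pos])
      (H := fun p => wc t h p * pd1 (endc t) p ^ 2 + wd t h p * pd2 (endc t) p ^ 2)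
      (by fun_prop) fun p hp => ?_
    obtain ⟨-, w2, -, w4⟩ := wfacts' ht1 hh h1 hp
    have := (endc_le t p).2.2
    have := mul_le_mul_of_nonneg_right w2 (sq_nonneg (pd1 (endc t) p))
    have := mul_le_mul_of_nonneg_right w4 (sq_nonneg (pd2 (endc t) p))
    linarith
  have m3 : ∫ p in GamR t, endc t p ^ 2 * wt p ^ 2 ≤ K9 * CB * E2 t :=
    agmon_transport ht1 hh h1 hw K9_pos.le (H := fun p => endc t p ^ 2) (by fun_prop)
      fun p hp => (endc_le t p).2.1
  have m4 : ∫ p in GamR t, wJ t h p * (wt p * z p) ≤ (∫ p in GamR t, z p ^ 2) +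
      (h ^ 2 / δ * (∫ p in GamR t, endc t p ^ 2 * wt p ^ 2) + δ * ∫ p in GamR t, z p ^ 2) := by
    have j1 : IntegrableOn (fun p => wt p * z p) (GamR t) := integrableOn_GamR ht0.le (wcn.mul zc)
    have j2 : IntegrableOn (fun p => h ^ 2 / δ * (endc t p ^ 2 * wt p ^ 2)) (GamR t) :=
      (integrableOn_GamR ht0.le
        (((continuous_endc t).pow 2).continuousOn.mul (wcn.pow 2))).const_mul _
    have j3 : IntegrableOn (fun p => δ * z p ^ 2) (GamR t) := izz.const_mul _
    suffices key : ∫ p in GamR t, wJ t h p * (wt p * z p) ≤ (∫ p in GamR t, wt p * z p) +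
      ((∫ p in GamR t, h ^ 2 / δ * (endc t p ^ 2 * wt p ^ 2)) + ∫ p in GamR t, δ * z p ^ 2) by
      rwa [iwz, integral_const_mul, integral_const_mul] at key
    rw [← integral_add j2 j3, ← integral_add j1]
    · refine setIntegral_mono_on (integrableOn_GamR ht0.le (cJ.continuousOn.mul (wcn.mul zc)))
        (j1.add (j2.add j3)) (measurableSet_GamR t) fun p hp => ?_
      obtain ⟨-, -, w3, -, -⟩ := wfacts ht1 hh hp
      have w6 := wJ_sub_le ht hh hp
      have y := young (k := 2 * h) (h := h) (by rw [abs_of_nonneg (by positivity)]) hδ0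
        (endc t p * |wt p|) |z p|
      have y1 : (wJ t h p - 1) * (wt p * z p) ≤ (2 * h * endc t p) * (|wt p| * |z p|) := by
        rw [← abs_mul]
        exact (mul_le_mul_of_nonneg_left (le_abs_self _) (by linarith)).trans
          (mul_le_mul_of_nonneg_right w6 (abs_nonneg _))
      have y2 : endc t p * |wt p| * (endc t p * |wt p|) = endc t p ^ 2 * wt p ^ 2 := by
        rw [← sq_abs (wt p)]; ring
      rw [y2, abs_mul_abs_self] at y
      nlinarith
    · exact j2.add j3
  set N := ∫ p in GamR t, z p ^ 2 with hN
  have N0 : 0 ≤ N := integral_nonneg fun p => sq_nonneg _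
  set D := K9 * CB * E2 t with hD
  have hq0 : 0 ≤ h ^ 2 / δ := by positivity
  have hls2 : ls ≤ π ^ 2 := hlsG.trans lamG_lt.le
  have hωp := omega_pos
  have hπ := pi_pos
  have hδe : π ^ 2 * δ = omega ^ 2 / 4 := by rw [hδ, dlt]; field_simp
  have e3 : 3 * K9 * CB * E2 t = 3 * D := by rw [hD]; ring
  rw [e3] at m1 m2
  have fin : omega ^ 2 / 2 * N ≤ h ^ 2 / δ * D * (10 * π ^ 2 + 9) :=
    orth_arith hq0 N0 D0 hls0 hlsG hls2 hδ0.le hδe omega_sq m1 m2 m3 m4 (by linarith)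
  calc N = 2 / omega ^ 2 * (omega ^ 2 / 2 * N) := by field_simp
    _ ≤ 2 / omega ^ 2 * (h ^ 2 / δ * D * (10 * π ^ 2 + 9)) :=
      mul_le_mul_of_nonneg_left fin (by positivity)
    _ = C1 * h ^ 2 * E2 t := by rw [C1, hD]; ring

/-- Constant for the change of mass under transport. -/
def C2 : ℝ := 2 * K9 * CB + C1

/-- Constant for the `L²` variation of the eigenfunctions. -/
def CG : ℝ := C1 + C2 ^ 2

lemma CG_nonneg : 0 ≤ CG := add_nonneg C1_nonneg (sq_nonneg _)

lemma continuousOn_comp_Phi {t h : ℝ} (ht : 1 ≤ t) (hh : 0 ≤ h) {w : ℝ × ℝ → ℝ}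
    (hw : ContinuousOn w (closure (GamR (t + h)))) :
    ContinuousOn (fun p => w (Phi t h p)) (closure (GamR t)) := by
  refine hw.comp (continuous_Phi t h).continuousOn fun p hp => ?_
  rw [← Phi_image ht hh]
  exact image_closure_subset_closure_image (continuous_Phi t h) (mem_image_of_mem _ hp)

/-- The eigenfunctions vary in a Lipschitz way along the transport `Φ`, with an exponentially
small Lipschitz constant. -/
lemma ef_variation {t h : ℝ} (ht : 3 ≤ t) (hh : 0 ≤ h) (h1 : h ≤ 1) {v w : ℝ × ℝ → ℝ}
    (hv : IsFirstEF t v) (hw : IsFirstEF (t + h) w) :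
    ∫ p in GamR t, (w (Phi t h p) - v p) ^ 2 ≤ CG * h ^ 2 * E2 t := by
  have ht0 : 0 ≤ t := by linarith
  have ht1 : 1 ≤ t := by linarith
  set α := ∫ p in GamR t, w (Phi t h p) * v p with hα
  obtain ⟨o1, o2⟩ := orth_part ht hh h1 hv hw hα
  have hn : ∫ p in GamR t, v p ^ 2 = 1 := hv.2.2.2.2.2.2.2
  have hn' : ∫ p in GamR (t + h), w p ^ 2 = 1 := hw.2.2.2.2.2.2.2
  have vc := hv.2.1
  have wcn := continuousOn_comp_Phi ht1 hh hw.2.1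
  obtain ⟨-, -, cJ⟩ := continuous_weights (t := t) hh
  have α0 : 0 ≤ α := setIntegral_nonneg (measurableSet_GamR t) fun p hp =>
    mul_nonneg (hw.2.2.2.2.2.2.1 _ ((Phi_mem_GamR ht1 hh).2 hp)).le (hv.2.2.2.2.2.2.1 p hp).le
  have iww : IntegrableOn (fun p => w (Phi t h p) ^ 2) (GamR t) :=
    integrableOn_GamR ht0 (wcn.pow 2)
  have iJw : IntegrableOn (fun p => wJ t h p * w (Phi t h p) ^ 2) (GamR t) :=
    integrableOn_GamR ht0 (cJ.continuousOn.mul (wcn.pow 2))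
  have iew : IntegrableOn (fun p => endc t p * w (Phi t h p) ^ 2) (GamR t) :=
    integrableOn_GamR ht0 ((continuous_endc t).continuousOn.mul (wcn.pow 2))
  have iwv : IntegrableOn (fun p => w (Phi t h p) * v p) (GamR t) :=
    integrableOn_GamR ht0 (wcn.mul vc)
  have ivv : IntegrableOn (fun p => v p ^ 2) (GamR t) := integrableOn_GamR ht0 (vc.pow 2)
  have hJ : ∫ p in GamR t, wJ t h p * w (Phi t h p) ^ 2 = 1 := by
    rw [integral_Phi ht1 hh] at hn'
    exact hn'
  have m1 : ∫ p in GamR t, endc t p * w (Phi t h p) ^ 2 ≤ K9 * CB * E2 t :=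
    agmon_transport ht1 hh h1 hw K9_pos.le (continuous_endc t).continuousOn
      fun p _ => (endc_le t p).1
  have up : 1 - ∫ p in GamR t, w (Phi t h p) ^ 2 ≤ 2 * h * (K9 * CB * E2 t) := by
    refine le_trans ?_ (mul_le_mul_of_nonneg_left m1 (by positivity))
    rw [← hJ, ← integral_sub iJw iww, ← integral_const_mul]
    refine setIntegral_mono_on (iJw.sub iww) (iew.const_mul _) (measurableSet_GamR t)
      fun p hp => ?_
    have := mul_le_mul_of_nonneg_right (wJ_sub_le ht hh hp) (sq_nonneg (w (Phi t h p)))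
    linarith
  have dn : ∫ p in GamR t, w (Phi t h p) ^ 2 ≤ 1 := by
    rw [← hJ]
    refine setIntegral_mono_on iww iJw (measurableSet_GamR t) fun p hp => ?_
    have := mul_le_mul_of_nonneg_right (wfacts ht1 hh hp).2.2.1 (sq_nonneg (w (Phi t h p)))
    linarith
  set N := ∫ p in GamR t, (w (Phi t h p) - α * v p) ^ 2 with hN
  have N0 : 0 ≤ N := integral_nonneg fun p => sq_nonneg _
  have ex : ∫ p in GamR t, (w (Phi t h p) - v p) ^ 2 = N + (1 - α) ^ 2 := by
    have e : ∀ p, (w (Phi t h p) - v p) ^ 2 =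
      w (Phi t h p) ^ 2 + (-2 * (w (Phi t h p) * v p) + v p ^ 2) := fun p => by ring
    have j : IntegrableOn (fun p => -2 * (w (Phi t h p) * v p) + v p ^ 2) (GamR t) :=
      (iwv.const_mul _).add ivv
    simp only [e]
    rw [integral_add iww j, integral_add (iwv.const_mul _) ivv, integral_const_mul, hn, ← hα, o2]
    ring
  have hE := E2_pos t
  have hE1 := E2_le_one ht0
  have hC1 := C1_nonneg
  have hKC : 0 ≤ K9 * CB := mul_nonneg K9_pos.le CB_nonneg
  -- `0 ≤ 1 - α² ≤ C₂ h e^{-2ωt}`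
  have b1 : 1 - α ^ 2 ≤ C2 * h * E2 t := by
    have : C1 * h ^ 2 * E2 t ≤ C1 * h * E2 t := by
      have : C1 * (h * h) ≤ C1 * h := mul_le_mul_of_nonneg_left (by nlinarith) hC1
      have := mul_le_mul_of_nonneg_right this hE.le
      linarith
    rw [C2]; nlinarith
  have b0 : 0 ≤ 1 - α ^ 2 := by linarith
  have α1 : α ≤ 1 := by nlinarith
  have b2 : (1 - α) ^ 2 ≤ (C2 * h * E2 t) ^ 2 := by
    have : 1 - α ≤ 1 - α ^ 2 := by nlinarith
    exact pow_le_pow_left₀ (by linarith) (this.trans b1) 2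
  have b3 : (C2 * h * E2 t) ^ 2 ≤ C2 ^ 2 * h ^ 2 * E2 t := by
    have : (C2 ^ 2 * h ^ 2 * E2 t) * E2 t ≤ (C2 ^ 2 * h ^ 2 * E2 t) * 1 :=
      mul_le_mul_of_nonneg_left hE1 (by positivity)
    nlinarith
  rw [ex, CG]
  nlinarith

/-! ### The derivative of the coefficient `f` -/

lemma cauchy_GamR {t : ℝ} (ht : 0 ≤ t) {a b : ℝ × ℝ → ℝ} (ha : ContinuousOn a (closure (GamR t)))
    (hb : ContinuousOn b (closure (GamR t))) :
    (∫ p in GamR t, a p * b p) ^ 2 ≤ (∫ p in GamR t, a p ^ 2) * ∫ p in GamR t, b p ^ 2 := by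
  have ia : IntegrableOn (fun p => a p ^ 2) (GamR t) := integrableOn_GamR ht (ha.pow 2)
  have ib : IntegrableOn (fun p => b p ^ 2) (GamR t) := integrableOn_GamR ht (hb.pow 2)
  have iab : IntegrableOn (fun p => a p * b p) (GamR t) := integrableOn_GamR ht (ha.mul hb)
  refine cauchy_of_quadratic fun τ => ?_
  have h0 : 0 ≤ ∫ p in GamR t, (a p + τ * b p) ^ 2 := integral_nonneg fun p => sq_nonneg _
  have e : ∀ p, (a p + τ * b p) ^ 2 = a p ^ 2 + (2 * τ * (a p * b p) + τ ^ 2 * b p ^ 2) :=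
    fun p => by ring
  have j : IntegrableOn (fun p => 2 * τ * (a p * b p) + τ ^ 2 * b p ^ 2) (GamR t) :=
    (iab.const_mul _).add (ib.const_mul _)
  simp only [e] at h0
  rw [integral_add ia j, integral_add (iab.const_mul _) (ib.const_mul _), integral_const_mul,
    integral_const_mul] at h0
  linarith

/-- The slope `max (x - t + 1) 0` that drives the transport. -/
def mx (t x : ℝ) : ℝ := max (x - t + 1) 0

@[fun_prop] lemma continuous_mx (t : ℝ) : Continuous (mx t) := by unfold mx; fun_prop

/-- The slice `u(·, t + h)` pulled back to `Γ_t`, with its Jacobian. -/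
def kr (t : ℝ) (u : ℝ × ℝ × ℝ → ℝ) (h : ℝ) (p : ℝ × ℝ) : ℝ :=
  wJ t h p * u (phi t h p.1, phi t h p.2, t + h)

/-- The derivative of `kr` in `h`. -/
def kr' (t : ℝ) (u : ℝ × ℝ × ℝ → ℝ) (h : ℝ) (p : ℝ × ℝ) : ℝ :=
  (2 * mx t p.1 * phi' t h p.2 + phi' t h p.1 * (2 * mx t p.2)) *
      u (phi t h p.1, phi t h p.2, t + h) +
    wJ t h p * fderiv ℝ u (phi t h p.1, phi t h p.2, t + h) (mx t p.1 ^ 2, mx t p.2 ^ 2, 1)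

lemma hasDerivAt_kr (t : ℝ) {u : ℝ × ℝ × ℝ → ℝ} (hu : ContDiff ℝ 1 u) (h : ℝ) (p : ℝ × ℝ) :
    HasDerivAt (fun h => kr t u h p) (kr' t u h p) h := by
  have a : ∀ x, HasDerivAt (fun h => phi t h x) (mx t x ^ 2) h := fun x => by
    refine HasDerivAt.congr_deriv (by exact ((hasDerivAt_id h).mul_const (mx t x ^ 2)).const_add x) ?_
    ring
  have b : ∀ x, HasDerivAt (fun h => phi' t h x) (2 * mx t x) h := fun x => by
    refine HasDerivAt.congr_deriv (by exact ((hasDerivAt_id h).mul_const (2 * mx t x)).const_add 1) ?_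
    ring
  have c := (a p.1).prodMk ((a p.2).prodMk ((hasDerivAt_id h).const_add t))
  have d := ((hu.differentiable one_ne_zero) (phi t h p.1, phi t h p.2, t + h)).hasFDerivAt.comp_hasDerivAt h c
  exact HasDerivAt.congr_deriv (by exact ((b p.1).mul (b p.2)).mul d) rfl

lemma continuous_kr (t : ℝ) {u : ℝ × ℝ × ℝ → ℝ} (hu : Continuous u) :
    Continuous fun q : ℝ × ℝ × ℝ => kr t u q.1 q.2 := by
  unfold kr wJ phi phi'
  fun_prop

lemma continuous_kr' (t : ℝ) {u : ℝ × ℝ × ℝ → ℝ} (hu : ContDiff ℝ 1 u) :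
    Continuous fun q : ℝ × ℝ × ℝ => kr' t u q.1 q.2 := by
  have h1 := hu.continuous
  have h2 := hu.continuous_fderiv one_ne_zero
  unfold kr' wJ phi phi'
  fun_prop

/-- A function jointly continuous in a parameter is bounded on the guide, locally uniformly. -/
lemma exists_bound_param {t : ℝ} (ht : 0 < t) {k : ℝ → ℝ × ℝ → ℝ} (hk : Continuous fun q : ℝ × ℝ × ℝ => k q.1 q.2) :
    ∃ C, 0 ≤ C ∧ ∀ h ∈ Metric.ball (0 : ℝ) 1, ∀ p ∈ GamR t, |k h p| ≤ C := by
  obtain ⟨C, hC⟩ := ((isCompact_Icc (a := (-1 : ℝ)) (b := 1)).prod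
    (isCompact_closure_GamR ht.le)).exists_bound_of_continuousOn hk.continuousOn
  refine ⟨max C 0, le_max_right _ _, fun h hh p hp => ?_⟩
  rw [Metric.mem_ball, dist_zero_right, norm_eq_abs, abs_lt] at hh
  exact (hC (h, p) ⟨⟨hh.1.le, hh.2.le⟩, subset_closure hp⟩).trans (le_max_left _ _)

lemma hasDerivAt_int_kr {t : ℝ} (ht : 0 < t) {u : ℝ × ℝ × ℝ → ℝ} (hu : ContDiff ℝ 1 u)
    {v : ℝ × ℝ → ℝ} (hv : ContinuousOn v (closure (GamR t))) :
    HasDerivAt (fun h => ∫ p in GamR t, kr t u h p * v p) (∫ p in GamR t, kr' t u 0 p * v p) 0 := by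
  have c1 := continuous_kr t hu.continuous
  have c2 := continuous_kr' t hu
  obtain ⟨C, hC0, hC⟩ := exists_bound_param ht c2
  obtain ⟨B, hB0, hB⟩ := exists_bound ht hv
  have i1 : ∀ h, IntegrableOn (fun p => kr t u h p * v p) (GamR t) := fun h =>
    integrableOn_GamR ht.le ((c1.comp (Continuous.prodMk_right h)).continuousOn.mul hv)
  have i2 : IntegrableOn (fun p => kr' t u 0 p * v p) (GamR t) :=
    integrableOn_GamR ht.le ((c2.comp (Continuous.prodMk_right 0)).continuousOn.mul hv)
  refine (hasDerivAt_integral_of_dominated_loc_of_deriv_le (F := fun h p => kr t u h p * v p)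
    (F' := fun h p => kr' t u h p * v p) (bound := fun _ => C * B)
    (Metric.ball_mem_nhds (0 : ℝ) one_pos) (Eventually.of_forall fun h => (i1 h).aestronglyMeasurable) (i1 0)
    i2.aestronglyMeasurable ?_ ?_ ?_).2
  · refine ae_restrict_of_forall_mem (measurableSet_GamR t) fun p hp h hh => ?_
    rw [norm_eq_abs, abs_mul]
    exact mul_le_mul (hC h hh p hp) (hB p hp) (abs_nonneg _) hC0
  · exact integrableOn_const (volume_GamR_lt_top ht.le).ne
  · exact Eventually.of_forall fun p h _ => (hasDerivAt_kr t hu h p).mul_const _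

lemma tendsto_int_kr_sq {t : ℝ} (ht : 0 < t) {u : ℝ × ℝ × ℝ → ℝ} (hu : Continuous u) :
    Tendsto (fun h => ∫ p in GamR t, kr t u h p ^ 2) (𝓝 0) (𝓝 (∫ p in GamR t, kr t u 0 p ^ 2)) := by
  have c1 := continuous_kr t hu
  obtain ⟨C, hC0, hC⟩ := exists_bound_param ht c1
  refine (continuousAt_of_dominated (F := fun h p => kr t u h p ^ 2) (bound := fun _ => C ^ 2) ?_ ?_ ?_ ?_)
  · exact Eventually.of_forall fun h => (integrableOn_GamR ht.le
      ((c1.comp (Continuous.prodMk_right h)).pow 2).continuousOn).aestronglyMeasurable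
  · filter_upwards [Metric.ball_mem_nhds (0 : ℝ) one_pos] with h hh
    refine ae_restrict_of_forall_mem (measurableSet_GamR t) fun p hp => ?_
    rw [norm_pow, norm_eq_abs]
    exact pow_le_pow_left₀ (abs_nonneg _) (hC h hh p hp) 2
  · exact integrableOn_const (volume_GamR_lt_top ht.le).ne
  · exact Eventually.of_forall fun p => ((c1.comp (Continuous.prodMk_left p)).pow 2).continuousAt

/-- The coefficient `f(t) = ∫_{Γ_t} u(·, t) v_t`. -/
def fp (v : ℝ → ℝ × ℝ → ℝ) (u : ℝ × ℝ × ℝ → ℝ) (s : ℝ) : ℝ :=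
  ∫ p in GamR s, u (p.1, p.2, s) * v s p

lemma kr_zero (t : ℝ) (u : ℝ × ℝ × ℝ → ℝ) (p : ℝ × ℝ) : kr t u 0 p = u (p.1, p.2, t) := by
  simp [kr, wJ, phi, phi']

lemma kr'_zero (t : ℝ) (u : ℝ × ℝ × ℝ → ℝ) (p : ℝ × ℝ) : kr' t u 0 p =
    2 * (mx t p.1 + mx t p.2) * u (p.1, p.2, t) +
      fderiv ℝ u (p.1, p.2, t) (mx t p.1 ^ 2, mx t p.2 ^ 2, 1) := by
  simp only [kr', wJ, phi, phi', zero_mul, add_zero, mul_one, one_mul]; ring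

lemma fderiv_split (u : ℝ × ℝ × ℝ → ℝ) (x : ℝ × ℝ × ℝ) (a b : ℝ) :
    fderiv ℝ u x (a, b, 1) = a * fderiv ℝ u x (1, 0, 0) + b * fderiv ℝ u x (0, 1, 0) +
      fderiv ℝ u x (0, 0, 1) := by
  have e : ((a, b, 1) : ℝ × ℝ × ℝ) = a • (1, 0, 0) + b • (0, 1, 0) + (0, 0, 1) := by simp
  rw [e, map_add, map_add, map_smul, map_smul, smul_eq_mul, smul_eq_mul]

/-- Replacing `v_{t+h}` by the transported `v_t` costs only an exponentially small error in
`f'(t)`. -/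
lemma deriv_close {v : ℝ → ℝ × ℝ → ℝ} (hV : ∀ s, 0 < s → IsFirstEF s (v s)) {u : ℝ × ℝ × ℝ → ℝ}
    (hu : ContDiff ℝ 1 u) {t : ℝ} (ht : 3 ≤ t) (hd : DifferentiableAt ℝ (fp v u) t) :
    (deriv (fp v u) t - ∫ p in GamR t, kr' t u 0 p * v t p) ^ 2 ≤
      (∫ p in GamR t, u (p.1, p.2, t) ^ 2) * (CG * E2 t) := by
  have ht0 : 0 < t := by linarith
  have ht1 : 1 ≤ t := by linarith
  have hv := hV t ht0
  set g : ℝ → ℝ := fun h => fp v u (t + h) - ∫ p in GamR t, kr t u h p * v t p with hg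
  have d1 : HasDerivAt (fun h => fp v u (t + h)) (deriv (fp v u) t) 0 := by
    have : HasDerivAt (fp v u) (deriv (fp v u) t) (t + 0) := by rw [add_zero]; exact hd.hasDerivAt
    exact this.comp_const_add t 0
  have d2 : HasDerivAt g (deriv (fp v u) t - ∫ p in GamR t, kr' t u 0 p * v t p) 0 :=
    d1.sub (hasDerivAt_int_kr ht0 hu hv.2.1)
  have g0 : g 0 = 0 := by
    simp only [hg, add_zero, kr_zero, fp, sub_self]
  rw [hasDerivAt_iff_tendsto_slope_zero] at d2
  have d3 := (d2.mono_left (nhdsWithin_mono (0 : ℝ) (fun x (hx : x ∈ Ioi (0:ℝ)) => ne_of_gt hx))).pow 2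
  have d4 : Tendsto (fun h => (∫ p in GamR t, kr t u h p ^ 2) * (CG * E2 t)) (𝓝[>] 0)
      (𝓝 ((∫ p in GamR t, kr t u 0 p ^ 2) * (CG * E2 t))) :=
    ((tendsto_int_kr_sq ht0 hu.continuous).mono_left nhdsWithin_le_nhds).mul_const _
  simp only [kr_zero] at d4
  refine le_of_tendsto_of_tendsto d3 d4 ?_
  filter_upwards [Ioo_mem_nhdsGT (zero_lt_one' ℝ)] with h hh
  rw [zero_add, g0, sub_zero, smul_eq_mul]
  have hw := hV (t + h) (by linarith [hh.1])
  have wcn := continuousOn_comp_Phi ht1 hh.1.le hw.2.1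
  have kc : ContinuousOn (kr t u h) (closure (GamR t)) :=
    ((continuous_kr t hu.continuous).comp (Continuous.prodMk_right h)).continuousOn
  have e : g h = ∫ p in GamR t, kr t u h p * (v (t + h) (Phi t h p) - v t p) := by
    have j1 : IntegrableOn (fun p => kr t u h p * v (t + h) (Phi t h p)) (GamR t) :=
      integrableOn_GamR ht0.le (kc.mul wcn)
    have j2 : IntegrableOn (fun p => kr t u h p * v t p) (GamR t) :=
      integrableOn_GamR ht0.le (kc.mul hv.2.1)
    simp only [mul_sub]
    rw [integral_sub j1 j2]
    simp only [hg, fp]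
    rw [integral_Phi ht1 hh.1.le]
    congr 2
    funext p
    simp only [kr, wJ, Phi]; ring
  have c1 := cauchy_GamR ht0.le kc (wcn.sub hv.2.1)
  have c2 := ef_variation ht hh.1.le hh.2.le hv hw
  have hk0 : 0 ≤ ∫ p in GamR t, kr t u h p ^ 2 := integral_nonneg fun p => sq_nonneg _
  have c3 : g h ^ 2 ≤ (∫ p in GamR t, kr t u h p ^ 2) * (CG * h ^ 2 * E2 t) := by
    rw [e]; exact c1.trans (mul_le_mul_of_nonneg_left c2 hk0)
  have hh0 : 0 < h := hh.1
  calc (h⁻¹ * g h) ^ 2 = (h⁻¹) ^ 2 * g h ^ 2 := by ring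
    _ ≤ (h⁻¹) ^ 2 * ((∫ p in GamR t, kr t u h p ^ 2) * (CG * h ^ 2 * E2 t)) :=
      mul_le_mul_of_nonneg_left c3 (sq_nonneg _)
    _ = _ := by field_simp

lemma mx_facts {t : ℝ} (ht : 3 ≤ t) {p : ℝ × ℝ} (hp : p ∈ GamR t) :
    0 ≤ mx t p.1 ∧ mx t p.1 ≤ 1 ∧ 0 ≤ mx t p.2 ∧ mx t p.2 ≤ 1 ∧ mx t p.1 + mx t p.2 ≤ 1 ∧
    (endc t p = 1 ∨ mx t p.1 = 0 ∧ mx t p.2 = 0) := by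
  have hp' := hp
  rw [mem_GamR (by linarith)] at hp'
  obtain ⟨-, -, h3, h4, h5⟩ := hp'
  have a : ∀ x, x < t → mx t x ≤ 1 := fun x hx => max_le (by linarith) zero_le_one
  have b : ∀ x, x < 0 → mx t x = 0 := fun x hx => max_eq_right (by linarith)
  have c : ∀ x, 0 ≤ mx t x := fun x => le_max_right _ _
  refine ⟨c _, a _ h3, c _, a _ h4, ?_, ?_⟩
  · rcases h5 with h5 | h5
    · rw [b _ h5]; linarith [a _ h4]
    · rw [b _ h5]; linarith [a _ h3]
  · by_cases hc : t - 2 ≤ p.1 ∨ t - 2 ≤ p.2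
    · exact Or.inl (endc_eq_one ht hp.1 hc)
    · push Not at hc
      exact Or.inr ⟨max_eq_right (by linarith), max_eq_right (by linarith)⟩

lemma gradSq2_slice {u : ℝ × ℝ × ℝ → ℝ} (hu : ContDiff ℝ 1 u) (t : ℝ) (p : ℝ × ℝ) :
    gradSq2 (fun p => u (p.1, p.2, t)) p =
      fderiv ℝ u (p.1, p.2, t) (1, 0, 0) ^ 2 + fderiv ℝ u (p.1, p.2, t) (0, 1, 0) ^ 2 := by
  have l : HasFDerivAt (fun p : ℝ × ℝ => (p.1, p.2, t))
      ((ContinuousLinearMap.fst ℝ ℝ ℝ).prod ((ContinuousLinearMap.snd ℝ ℝ ℝ).prod 0)) p :=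
    hasFDerivAt_fst.prodMk (hasFDerivAt_snd.prodMk (hasFDerivAt_const t p))
  have := (((hu.differentiable one_ne_zero) (p.1, p.2, t)).hasFDerivAt.comp p l).fderiv
  unfold gradSq2
  change fderiv ℝ (fun p : ℝ × ℝ => u (p.1, p.2, t)) p = _ at this
  rw [this]; simp

/-- The terms of the derivative of `∫ kr v` produced by the motion of the ends are exponentially
small, because `v` is small where the transport acts. -/
lemma end_terms {v : ℝ × ℝ → ℝ} {t : ℝ} (ht : 3 ≤ t) (hv : IsFirstEF t v) {u : ℝ × ℝ × ℝ → ℝ}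
    (hu : ContDiff ℝ 1 u) :
    ((∫ p in GamR t, kr' t u 0 p * v p) - ∫ p in GamR t, fderiv ℝ u (p.1, p.2, t) (0, 0, 1) * v p) ^ 2 ≤
      12 * ((∫ p in GamR t, u (p.1, p.2, t) ^ 2) + ∫ p in GamR t, gradSq2 (fun p => u (p.1, p.2, t)) p) *
        (K9 * CA * E2 t) := by
  have ht0 : 0 ≤ t := by linarith
  have c1 : Continuous fun p : ℝ × ℝ => u (p.1, p.2, t) := by have := hu.continuous; fun_prop
  have hD := hu.continuous_fderiv one_ne_zero
  have c2 : ∀ y, Continuous fun p : ℝ × ℝ => fderiv ℝ u (p.1, p.2, t) y := fun y => by fun_prop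
  have c2a := c2 (1, 0, 0)
  have c2b := c2 (0, 1, 0)
  have c2c := c2 (0, 0, 1)
  have hg := fun p => gradSq2_slice hu t p
  set ρ : ℝ × ℝ → ℝ := fun p => 2 * (mx t p.1 + mx t p.2) * u (p.1, p.2, t) +
    (mx t p.1 ^ 2 * fderiv ℝ u (p.1, p.2, t) (1, 0, 0) +
      mx t p.2 ^ 2 * fderiv ℝ u (p.1, p.2, t) (0, 1, 0)) with hρ
  have cρ : Continuous ρ := by fun_prop
  have vc := hv.2.1
  have e1 : (∫ p in GamR t, kr' t u 0 p * v p) -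
      ∫ p in GamR t, fderiv ℝ u (p.1, p.2, t) (0, 0, 1) * v p =
      ∫ p in GamR t, ρ p * (endc t p * v p) := by
    rw [← integral_sub]
    · refine setIntegral_congr_fun (measurableSet_GamR t) fun p hp => ?_
      obtain ⟨-, -, -, -, -, h6⟩ := mx_facts ht hp
      simp only [kr'_zero, hρ]
      rw [fderiv_split u _ (mx t p.1 ^ 2)]
      rcases h6 with h6 | ⟨h6, h7⟩
      · rw [h6]; ring
      · rw [h6, h7]; ring
    · exact integrableOn_GamR ht0
        (((continuous_kr' t hu).comp (Continuous.prodMk_right 0)).continuousOn.mul vc)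
    · exact integrableOn_GamR ht0 (c2c.continuousOn.mul vc)
  have e2 : ∫ p in GamR t, (endc t p * v p) ^ 2 ≤ K9 * CA * E2 t := by
    simp only [mul_pow]
    exact agmon_weight (by linarith) hv K9_pos.le (H := fun p => endc t p ^ 2) (by fun_prop)
      fun p hp => (endc_le t p).2.1
  have i1 : IntegrableOn (fun p : ℝ × ℝ => u (p.1, p.2, t) ^ 2) (GamR t) :=
    integrableOn_GamR ht0 (c1.pow 2).continuousOn
  have i2 : IntegrableOn (fun p => gradSq2 (fun p => u (p.1, p.2, t)) p) (GamR t) := by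
    simp only [hg]
    exact integrableOn_GamR ht0 (by fun_prop)
  have e3 : ∫ p in GamR t, ρ p ^ 2 ≤ 12 * ((∫ p in GamR t, u (p.1, p.2, t) ^ 2) +
      ∫ p in GamR t, gradSq2 (fun p => u (p.1, p.2, t)) p) := by
    rw [← integral_add i1 i2, ← integral_const_mul]
    refine setIntegral_mono_on (integrableOn_GamR ht0 (cρ.pow 2).continuousOn)
      ((i1.add i2).const_mul _) (measurableSet_GamR t) fun p hp => ?_
    obtain ⟨h1, h2, h3, h4, h5, -⟩ := mx_facts ht hp
    simp only [hg, hρ]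
    generalize fderiv ℝ u (p.1, p.2, t) (1, 0, 0) = a
    generalize fderiv ℝ u (p.1, p.2, t) (0, 1, 0) = b
    generalize u (p.1, p.2, t) = c
    have q : ∀ x y z : ℝ, (x + (y + z)) ^ 2 ≤ 3 * (x ^ 2 + y ^ 2 + z ^ 2) := fun x y z => by
      nlinarith [sq_nonneg (x - y), sq_nonneg (y - z), sq_nonneg (x - z)]
    refine (q _ _ _).trans ?_
    have s : ∀ k x : ℝ, 0 ≤ k → k ≤ 1 → (k * x) ^ 2 ≤ x ^ 2 := fun k x h0 h1 => by
      rw [mul_pow]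
      have : k ^ 2 ≤ 1 := pow_le_one₀ h0 h1
      nlinarith [sq_nonneg x]
    have s1 := s (mx t p.1 + mx t p.2) (2 * c) (by linarith) h5
    have s2 := s _ a (sq_nonneg (mx t p.1)) (pow_le_one₀ h1 h2)
    have s3 := s _ b (sq_nonneg (mx t p.2)) (pow_le_one₀ h3 h4)
    have s1' : (2 * (mx t p.1 + mx t p.2) * c) ^ 2 = ((mx t p.1 + mx t p.2) * (2 * c)) ^ 2 := by ring
    nlinarith [sq_nonneg a, sq_nonneg b]
  rw [e1]
  refine (cauchy_GamR ht0 cρ.continuousOn ((continuous_endc t).continuousOn.mul vc)).trans ?_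
  exact mul_le_mul e3 e2 (integral_nonneg fun p => sq_nonneg _)
    (mul_nonneg (by norm_num) (add_nonneg (integral_nonneg fun p => sq_nonneg _) (int_gradSq2_nonneg _ _)))

/-! ### The inequality on a slice -/

/-- Slices of functions vanishing on `∂Ω_L³ ∩ ∂Λ` are admissible on the finite guides. -/
lemma AdmR_slice {L t : ℝ} (hL : 0 ≤ L) (ht : L < t) {u : ℝ × ℝ × ℝ → ℝ} (hu : ContDiff ℝ 1 u)
    (hb : ∀ x ∈ frontier (Om3 L) ∩ frontier Lam3, u x = 0) :
    AdmR t (fun p => u (p.1, p.2, t)) := by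
  have ht0 : 0 < t := by linarith
  refine ⟨hu.comp (contDiff_fst.prodMk (contDiff_snd.prodMk contDiff_const)), fun p hp => ?_⟩
  have hpc : p ∈ closure (GamR t) := frontier_subset_closure hp.1
  rw [mem_DirB ht0] at hp
  obtain ⟨h1, h2, h3, h4, -, h6⟩ := hp
  have hcont : Continuous fun q : ℝ × ℝ => (q.1, q.2, t) := by fun_prop
  have sub : ∀ S : Set (ℝ × ℝ × ℝ), (∀ q ∈ GamR t, (q.1, q.2, t) ∈ S) → (p.1, p.2, t) ∉ S →
      (p.1, p.2, t) ∈ frontier S := fun S hS hn => by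
    refine ⟨?_, fun h => hn (interior_subset h)⟩
    refine closure_mono ?_ (image_closure_subset_closure_image hcont (mem_image_of_mem _ hpc))
    rintro _ ⟨q, hq, rfl⟩
    exact hS q hq
  refine hb _ ⟨sub _ (fun q hq => ⟨ht, hq⟩) fun h => h6 h.2, sub _ (fun q hq => ?_) fun h => h6 ?_⟩
  · obtain ⟨a, b⟩ := hq.1
    refine ⟨?_, ?_⟩
    · simp only [lt_min_iff] at a ⊢
      exact ⟨a.1, a.2, by linarith⟩
    · simp only [min_lt_iff] at b ⊢
      tauto
  · obtain ⟨a, b⟩ := h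
    simp only [lt_min_iff] at a
    simp only [min_lt_iff] at b
    rw [mem_GamR ht0.le]
    refine ⟨a.1, a.2.1, h3, h4, ?_⟩
    rcases b with b | b | b
    · exact Or.inl b
    · exact Or.inr b
    · linarith

/-- Constant in the comparison of `f'` with `∂₃u`. -/
def CS : ℝ := 2 * CG + 24 * (K9 * CA)

/-- Constant in the loss of the slice inequality. -/
def CT : ℝ := (1 + 2 * π ^ 2) * K9 * CA + CS * (π ^ 2 + 1)

lemma CS_nonneg : 0 ≤ CS := by
  have := CG_nonneg; have := mul_nonneg K9_pos.le CA_nonneg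
  unfold CS; linarith

lemma CT_nonneg : 0 ≤ CT := by
  have := CS_nonneg; have := K9_pos; have := CA_nonneg
  unfold CT; positivity

/-- Pythagoras for the projection onto the normalized function `v`. -/
lemma int_proj {t : ℝ} (ht : 0 ≤ t) {w v : ℝ × ℝ → ℝ} (hw : Continuous w)
    (hv : ContinuousOn v (closure (GamR t))) (hn : ∫ p in GamR t, v p ^ 2 = 1) {f : ℝ}
    (hf : f = ∫ p in GamR t, w p * v p) :
    ∫ p in GamR t, (w p - f * v p) ^ 2 = (∫ p in GamR t, w p ^ 2) - f ^ 2 := by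
  have i1 : IntegrableOn (fun p => w p ^ 2) (GamR t) := integrableOn_GamR ht (hw.pow 2).continuousOn
  have i2 : IntegrableOn (fun p => w p * v p) (GamR t) :=
    integrableOn_GamR ht (hw.continuousOn.mul hv)
  have i3 : IntegrableOn (fun p => v p ^ 2) (GamR t) := integrableOn_GamR ht (hv.pow 2)
  have e : ∀ p, (w p - f * v p) ^ 2 = w p ^ 2 + (-2 * f * (w p * v p) + f ^ 2 * v p ^ 2) :=
    fun p => by ring
  have j : IntegrableOn (fun p => -2 * f * (w p * v p) + f ^ 2 * v p ^ 2) (GamR t) :=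
    (i2.const_mul _).add (i3.const_mul _)
  simp only [e]
  rw [integral_add i1 j, integral_add (i2.const_mul _) (i3.const_mul _), integral_const_mul,
    integral_const_mul, hn, ← hf]
  ring

/-- `½ f'²` is bounded by the energy of `∂₃u` in the slice, up to an exponentially small multiple of
the `H¹` norm of the slice.  Where `f` is not differentiable, `deriv` is `0` and the bound is trivial. -/
lemma half_deriv_sq_le {v : ℝ → ℝ × ℝ → ℝ} (hV : ∀ s, 0 < s → IsFirstEF s (v s))
    {u : ℝ × ℝ × ℝ → ℝ} (hu : ContDiff ℝ 1 u) {t : ℝ} (ht : 3 ≤ t) :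
    1 / 2 * deriv (fp v u) t ^ 2 ≤ (∫ p in GamR t, fderiv ℝ u (p.1, p.2, t) (0, 0, 1) ^ 2) +
      CS * E2 t * ((∫ p in GamR t, u (p.1, p.2, t) ^ 2) +
        ∫ p in GamR t, gradSq2 (fun p => u (p.1, p.2, t)) p) := by
  have ht0 : 0 < t := by linarith
  have hv := hV t ht0
  have D0 : 0 ≤ ∫ p in GamR t, fderiv ℝ u (p.1, p.2, t) (0, 0, 1) ^ 2 :=
    integral_nonneg fun p => sq_nonneg _
  have U0 : 0 ≤ ∫ p in GamR t, u (p.1, p.2, t) ^ 2 := integral_nonneg fun p => sq_nonneg _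
  have Q0 := int_gradSq2_nonneg (GamR t) (fun p => u (p.1, p.2, t))
  have hE := E2_pos t
  by_cases hd : DifferentiableAt ℝ (fp v u) t
  swap
  · rw [deriv_zero_of_not_differentiableAt hd]
    have := mul_nonneg (mul_nonneg CS_nonneg hE.le) (add_nonneg U0 Q0)
    linarith
  have a1 := deriv_close hV hu ht hd
  have a2 := end_terms ht hv hu
  have a3 := cauchy_GamR ht0.le (a := fun p => fderiv ℝ u (p.1, p.2, t) (0, 0, 1))
    (by have hD := hu.continuous_fderiv one_ne_zero; fun_prop) hv.2.1
  rw [hv.2.2.2.2.2.2.2, mul_one] at a3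
  set U := ∫ p in GamR t, u (p.1, p.2, t) ^ 2
  set Q := ∫ p in GamR t, gradSq2 (fun p => u (p.1, p.2, t)) p
  set D := ∫ p in GamR t, fderiv ℝ u (p.1, p.2, t) (0, 0, 1) ^ 2
  set A := ∫ p in GamR t, kr' t u 0 p * v t p
  set B := ∫ p in GamR t, fderiv ℝ u (p.1, p.2, t) (0, 0, 1) * v t p
  set f' := deriv (fp v u) t
  have s : 1 / 2 * f' ^ 2 ≤ B ^ 2 + (2 * (f' - A) ^ 2 + 2 * (A - B) ^ 2) := by
    nlinarith [sq_nonneg (f' - 2 * B), sq_nonneg ((f' - A) - (A - B))]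
  have q : 0 ≤ Q * (CG * E2 t) := mul_nonneg Q0 (mul_nonneg CG_nonneg hE.le)
  have e : CS * E2 t * (U + Q) = 2 * (U * (CG * E2 t)) + 2 * (Q * (CG * E2 t)) +
      2 * (12 * (U + Q) * (K9 * CA * E2 t)) := by rw [CS]; ring
  linarith

/-- The Born–Oppenheimer inequality on a single slice. -/
lemma slice_ineq {v : ℝ → ℝ × ℝ → ℝ} (hV : ∀ s, 0 < s → IsFirstEF s (v s))
    {u : ℝ × ℝ × ℝ → ℝ} (hu : ContDiff ℝ 1 u) {t : ℝ} (ht : 3 ≤ t)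
    (ha : AdmR t (fun p => u (p.1, p.2, t))) (hsmall : CS * E2 t * (π ^ 2 + 1) ≤ omega ^ 2) :
    1 / 2 * deriv (fp v u) t ^ 2 + (lamG - CT * E2 t) * fp v u t ^ 2 +
      lamG * ∫ p in GamR t, (u (p.1, p.2, t) - fp v u t * v t p) ^ 2 ≤
      ∫ p in GamR t, gradSq3 u (p.1, p.2, t) := by
  have ht0 : 0 < t := by linarith
  have hv := hV t ht0
  have hn := hv.2.2.2.2.2.2.2
  have h1 := half_deriv_sq_le hV hu ht
  obtain ⟨V, hVa, -⟩ := exists_AGS ht0 hv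
  have h2 := gap hVa hn (lamR_lt ht0) ha
  have h3 := lamG_sub_lamR ht hv
  change _ ≤ _ * E2 t at h3
  have hpr := int_proj ht0.le ha.1.continuous hv.2.1 hn (f := fp v u t) rfl
  have hpr0 : 0 ≤ ∫ p in GamR t, (u (p.1, p.2, t) - fp v u t * v t p) ^ 2 :=
    integral_nonneg fun p => sq_nonneg _
  have hG : ∫ p in GamR t, gradSq3 u (p.1, p.2, t) =
      (∫ p in GamR t, gradSq2 (fun p => u (p.1, p.2, t)) p) +
      ∫ p in GamR t, fderiv ℝ u (p.1, p.2, t) (0, 0, 1) ^ 2 := by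
    have hD := hu.continuous_fderiv one_ne_zero
    rw [← integral_add]
    · simp only [gradSq2_slice hu, gradSq3]
    · exact integrableOn_GamR ht0.le (continuous_gradSq2 ha.1).continuousOn
    · exact integrableOn_GamR ht0.le (by fun_prop)
  rw [hpr] at hpr0 ⊢
  rw [hG]
  change lamR t * fp v u t ^ 2 + π ^ 2 * ((∫ p in GamR t, u (p.1, p.2, t) ^ 2) - fp v u t ^ 2) ≤ _ at h2
  set U := ∫ p in GamR t, u (p.1, p.2, t) ^ 2
  set Q := ∫ p in GamR t, gradSq2 (fun p => u (p.1, p.2, t)) p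
  set D := ∫ p in GamR t, fderiv ℝ u (p.1, p.2, t) (0, 0, 1) ^ 2
  set f := fp v u t
  set ε := CS * E2 t with hε
  have hε0 : 0 ≤ ε := mul_nonneg CS_nonneg (E2_pos t).le
  have hω := omega_sq
  have hlt := lamG_lt
  have hl0 := lamG_nonneg
  have hπ : 0 < π ^ 2 + 1 := by positivity
  have hε1 : ε ≤ 1 := by
    by_contra hc
    push Not at hc
    nlinarith
  have hlr := (lamR_lt ht0).le
  have f0 := sq_nonneg f
  have b1 := mul_le_mul_of_nonneg_left h2 (by linarith : 0 ≤ 1 - ε)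
  have b2 : (lamG - CT * E2 t + ε) * f ^ 2 ≤ (1 - ε) * lamR t * f ^ 2 := by
    refine mul_le_mul_of_nonneg_right ?_ f0
    have : ε * lamR t ≤ ε * π ^ 2 := mul_le_mul_of_nonneg_left hlr hε0
    have e : CT * E2 t = (1 + 2 * π ^ 2) * K9 * CA * E2 t + ε * (π ^ 2 + 1) := by
      rw [CT, hε]; ring
    linarith
  have b3 : (lamG + ε) * (U - f ^ 2) ≤ (1 - ε) * π ^ 2 * (U - f ^ 2) :=
    mul_le_mul_of_nonneg_right (by linarith) hpr0
  linarith

/-! ### Integration over the slices -/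

lemma isOpen_Om3 (L : ℝ) : IsOpen (Om3 L) := by
  have : Om3 L = {x : ℝ × ℝ × ℝ | L < x.2.2} ∩ ({x | -1 < min x.1 x.2.1} ∩
      {x | min x.1 x.2.1 < 0} ∩ ({x | |x.1 + 1| < x.2.2 + 1} ∩ {x | |x.2.1 + 1| < x.2.2 + 1})) := rfl
  rw [this]
  exact (isOpen_lt (by fun_prop) (by fun_prop)).inter
    (((isOpen_lt (by fun_prop) (by fun_prop)).inter (isOpen_lt (by fun_prop) (by fun_prop))).inter
    ((isOpen_lt (by fun_prop) (by fun_prop)).inter (isOpen_lt (by fun_prop) (by fun_prop))))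

/-- Fubini on `Ω_L³`, sliced by the last variable. -/
lemma fubini_Om3 {L : ℝ} {F : ℝ × ℝ × ℝ → ℝ} (hF : IntegrableOn F (Om3 L)) :
    IntegrableOn (fun t => ∫ p in GamR t, F (p.1, p.2, t)) (Ioi L) ∧
    ∫ x in Om3 L, F x = ∫ t in Ioi L, ∫ p in GamR t, F (p.1, p.2, t) := by
  have hm := (isOpen_Om3 L).measurableSet
  set G := (Om3 L).indicator F with hG
  have mp : MeasurePreserving (MeasurableEquiv.prodAssoc : (ℝ × ℝ) × ℝ ≃ᵐ ℝ × ℝ × ℝ) volume volume :=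
    volume_preserving_prodAssoc
  have iG : Integrable G := (integrable_indicator_iff hm).2 hF
  have iG' : Integrable (fun q : (ℝ × ℝ) × ℝ => G (q.1.1, q.1.2, q.2))
      ((volume : Measure (ℝ × ℝ)).prod (volume : Measure ℝ)) :=
    (mp.integrable_comp_emb MeasurableEquiv.prodAssoc.measurableEmbedding).2 iG
  have e : ∀ t, ∫ p : ℝ × ℝ, G (p.1, p.2, t) =
      (Ioi L).indicator (fun t => ∫ p in GamR t, F (p.1, p.2, t)) t := fun t => by
    by_cases ht : t ∈ Ioi L
    · rw [indicator_of_mem ht, ← integral_indicator (measurableSet_GamR t)]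
      congr 1
      funext p
      have hiff : (p.1, p.2, t) ∈ Om3 L ↔ p ∈ GamR t := ⟨fun h => h.2, fun h => ⟨ht, h⟩⟩
      by_cases hp : p ∈ GamR t
      · rw [indicator_of_mem hp, hG, indicator_of_mem (hiff.2 hp)]
      · rw [indicator_of_notMem hp, hG, indicator_of_notMem fun h => hp (hiff.1 h)]
    · rw [indicator_of_notMem ht]
      have : ∀ p : ℝ × ℝ, G (p.1, p.2, t) = 0 := fun p =>
        indicator_of_notMem (fun h => ht h.1) _
      simp only [this, integral_zero]
  have i2 := iG'.integral_prod_right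
  have e2 := integral_prod_symm _ iG'
  simp only [e] at i2 e2
  refine ⟨(integrable_indicator_iff measurableSet_Ioi).1 i2, ?_⟩
  rw [← integral_indicator hm, ← integral_indicator measurableSet_Ioi, ← e2]
  exact (mp.integral_comp MeasurableEquiv.prodAssoc.measurableEmbedding G).symm

/-- Bounding a sum of two integrals of nonnegative functions whose sum is dominated; a
nonintegrable function contributes `0`, so no measurability of the summands is needed. -/
lemma sum_le_of_dominated {L lam : ℝ} (hl : 0 ≤ lam) {g G : ℝ → ℝ} {H : ℝ × ℝ × ℝ → ℝ}
    (hg : ∀ t ∈ Ioi L, 0 ≤ g t) (hH : ∀ x, 0 ≤ H x) (hG : IntegrableOn G (Ioi L))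
    (hle : ∀ t ∈ Ioi L, g t + lam * ∫ p in GamR t, H (p.1, p.2, t) ≤ G t) :
    (∫ t in Ioi L, g t) + lam * ∫ x in Om3 L, H x ≤ ∫ t in Ioi L, G t := by
  have h0 : ∀ t, 0 ≤ lam * ∫ p in GamR t, H (p.1, p.2, t) := fun t =>
    mul_nonneg hl (integral_nonneg fun p => hH _)
  have A : ∫ t in Ioi L, g t ≤ ∫ t in Ioi L, G t :=
    integral_mono_of_nonneg (ae_restrict_of_forall_mem measurableSet_Ioi hg) hG
      (ae_restrict_of_forall_mem measurableSet_Ioi fun t ht => by linarith [hle t ht, h0 t])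
  by_cases hi : IntegrableOn H (Om3 L)
  · obtain ⟨f1, f2⟩ := fubini_Om3 hi
    rw [f2, ← integral_const_mul]
    by_cases hj : IntegrableOn g (Ioi L)
    · rw [← integral_add hj (f1.const_mul _)]
      exact setIntegral_mono_on (hj.add (f1.const_mul _)) hG measurableSet_Ioi hle
    · rw [integral_undef hj, zero_add]
      exact setIntegral_mono_on (f1.const_mul _) hG measurableSet_Ioi
        fun t ht => by linarith [hle t ht, hg t ht]
  · rw [integral_undef hi, mul_zero, add_zero]
    exact A

/-- The choice of `L₀`: beyond it all exponentially small errors are absorbed. -/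
lemma exists_L0 : ∃ L₀ : ℝ, 3 ≤ L₀ ∧ ∀ t, L₀ ≤ t → CS * E2 t * (π ^ 2 + 1) ≤ omega ^ 2 ∧
    CT * E2 t ≤ exp (-2 * omega * (t - L₀)) := by
  have hω := omega_pos
  have hCS := CS_nonneg
  have hCT := CT_nonneg
  set M := CT + CS * (π ^ 2 + 1) / omega ^ 2 with hM
  have hq : 0 ≤ CS * (π ^ 2 + 1) / omega ^ 2 := by positivity
  refine ⟨max 3 (M / (2 * omega)), le_max_left _ _, fun t ht => ?_⟩
  set L₀ := max 3 (M / (2 * omega))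
  have h1 : M ≤ exp (2 * omega * L₀) := by
    have a : M / (2 * omega) ≤ L₀ := le_max_right _ _
    rw [div_le_iff₀ (by positivity)] at a
    linarith [add_one_le_exp (2 * omega * L₀)]
  have h2 : exp (-2 * omega * (t - L₀)) = exp (2 * omega * L₀) * E2 t := by
    rw [E2, ← exp_add]; congr 1; ring
  have h3 : exp (-2 * omega * (t - L₀)) ≤ 1 := exp_le_one_iff.2 (by nlinarith)
  have hE := E2_pos t
  have h4 : M * E2 t ≤ exp (-2 * omega * (t - L₀)) := by
    rw [h2]; exact mul_le_mul_of_nonneg_right h1 hE.le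
  have h5 : M * E2 t = CT * E2 t + CS * (π ^ 2 + 1) / omega ^ 2 * E2 t := by rw [hM]; ring
  constructor
  · have : CS * (π ^ 2 + 1) / omega ^ 2 * E2 t ≤ 1 := by
      linarith [mul_nonneg hCT hE.le]
    have h6 : CS * E2 t * (π ^ 2 + 1) = omega ^ 2 * (CS * (π ^ 2 + 1) / omega ^ 2 * E2 t) := by
      field_simp
    rw [h6]
    nlinarith [sq_nonneg omega]
  · linarith [mul_nonneg hq hE.le]

/-- Corollary 3.2, Born–Oppenheimer lower bound: let `t ↦ v_t` be the
family of positive normalized first eigenfunctions on `Γ_t`. There exists `L₀ ≥ 1` such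
that for all `L ≥ L₀` and all `u ∈ H¹(Ω_L³)` vanishing on `∂Ω_L³ ∩ ∂Λ` (modelled by a
compactly supported `C¹` function), setting
`f(x₃) = ∫_{Γ_{x₃}} u(·,·,x₃) v_{x₃}` and `Π^⊥u = u − f(x₃) v_{x₃}`, one has
`∫_{Ω_L³}|∇u|² ≥ ∫_L^∞ ((1/2)|f'|² + (λ_∞ − e^{−2ω(x₃−L₀)})|f|²) dx₃
  + λ_∞ ‖Π^⊥u‖²_{L²(Ω_L³)}`, with `λ_∞ = λ₁(Γ)` and `ω = √(π²−λ_∞)`. -/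
theorem born_oppenheimer_lower_bound :
    ∀ v : ℝ → (ℝ × ℝ → ℝ), (∀ t : ℝ, 0 < t → IsFirstEF t (v t)) →
      ∃ L₀ : ℝ, 1 ≤ L₀ ∧ ∀ L : ℝ, L₀ ≤ L →
        ∀ u : ℝ × ℝ × ℝ → ℝ, ContDiff ℝ 1 u → HasCompactSupport u →
          (∀ x ∈ frontier (Om3 L) ∩ frontier Lam3, u x = 0) →
          (∫ t in Set.Ioi L,
              ((1 : ℝ) / 2 *
                  (deriv (fun s => ∫ p in GamR s, u (p.1, p.2, s) * v s p) t) ^ 2 +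
                (lamG - Real.exp (-2 * omega * (t - L₀))) *
                  (∫ p in GamR t, u (p.1, p.2, t) * v t p) ^ 2)) +
            lamG * ∫ x in Om3 L,
              (u x - (∫ p in GamR x.2.2, u (p.1, p.2, x.2.2) * v x.2.2 p) *
                v x.2.2 (x.1, x.2.1)) ^ 2 ≤
          ∫ x in Om3 L, gradSq3 u x := by
  intro v hV
  obtain ⟨L₀, h3, hL₀⟩ := exists_L0
  refine ⟨L₀, by linarith, fun L hL u hu hc hb => ?_⟩
  have hGi : IntegrableOn (gradSq3 u) (Om3 L) := by
    have hD := hu.continuous_fderiv one_ne_zero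
    have c : Continuous (gradSq3 u) := by unfold gradSq3; fun_prop
    have hs : HasCompactSupport (gradSq3 u) := by
      refine (hc.fderiv ℝ).mono' fun x hx => subset_tsupport _ fun h0 => hx ?_
      simp [gradSq3, h0]
    exact (c.integrable_of_hasCompactSupport hs).integrableOn
  obtain ⟨f1, f2⟩ := fubini_Om3 hGi
  rw [f2]
  -- integrability of the two summands on the left is not needed: a nonintegrable one contributes `0`
  refine sum_le_of_dominated (le_trans zero_le_one one_le_lamG) ?_ (fun x => sq_nonneg _) f1 ?_
  · intro t ht
    have ht' : L < t := ht
    have : exp (-2 * omega * (t - L₀)) ≤ 1 :=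
      exp_le_one_iff.2 (by nlinarith [omega_pos])
    have := one_le_lamG
    exact add_nonneg (by positivity) (mul_nonneg (by linarith) (sq_nonneg _))
  · intro t ht
    have ht' : L < t := ht
    obtain ⟨a, b⟩ := hL₀ t (by linarith)
    have s := slice_ineq hV hu (by linarith) (AdmR_slice (by linarith) ht' hu hb) a
    have m := mul_le_mul_of_nonneg_right b (sq_nonneg (fp v u t))
    change 1 / 2 * deriv (fp v u) t ^ 2 + (lamG - exp (-2 * omega * (t - L₀))) * fp v u t ^ 2 +
      lamG * ∫ p in GamR t, (u (p.1, p.2, t) - fp v u t * v t p) ^ 2 ≤ _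
    linarith
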